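/- arXiv:1505.02748 — 3 statements merged into one kernel-verified Lean document; each statement's English description precedes it below -/
import Mathlib

section
/- For every integer d > 1, there exists a minimal subshift (X, σ) with exactly d ergodic shift-invariant probability measures, zero nonergodic generic measures, and whose complexity satisfies liminf_{n→∞} P_X(n)/n = d and limsup_{n→∞} P_X(n)/n = d + 1. -/
open MeasureTheory Filter
open scoped ENNReal

/-- The left shift on bi-infinite sequences. -/
def shift {A : Type*} (x : ℤ → A) : ℤ → A := fun n => x (n + 1)

/-- A subshift: a closed, shift-invariant subset of `A^ℤ`. -/
def IsSubshift {A : Type*} [TopologicalSpace A] (X : Set (ℤ → A)) : Prop :=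
  IsClosed X ∧ shift '' X = X

/-- The word complexity `P_X(n)`: the number of words of length `n` occurring in `X`. -/
noncomputable def complexity {A : Type*} (X : Set (ℤ → A)) (n : ℕ) : ℕ :=
  Nat.card {w : Fin n → A // ∃ x ∈ X, ∃ m : ℤ, ∀ t : Fin n, x (m + (t : ℕ)) = w t}

/-- `x` is a generic point for the measure `μ`. -/
def IsGenericPt {A : Type*} [TopologicalSpace A] [MeasurableSpace A]
    (μ : Measure (ℤ → A)) (x : ℤ → A) : Prop :=
  ∀ f : (ℤ → A) → ℝ, Continuous f →
    Tendsto (fun N : ℕ => (∑ n ∈ Finset.range N, f (shift^[n] x)) / (N : ℝ))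
      atTop (nhds (∫ y, f y ∂μ))

/-- A generic measure on the subshift `X`: a Borel probability measure carried by `X`
possessing a generic point in `X`. -/
def GenericMeasureOn {A : Type*} [TopologicalSpace A] [MeasurableSpace A]
    (X : Set (ℤ → A)) (μ : Measure (ℤ → A)) : Prop :=
  IsProbabilityMeasure μ ∧ μ X = 1 ∧ ∃ x ∈ X, IsGenericPt μ x

/-- The (two-sided) orbit closure of a point. -/
def orbitClosure {A : Type*} [TopologicalSpace A] (x : ℤ → A) : Set (ℤ → A) :=
  closure {y | ∃ k : ℤ, y = fun n => x (n + k)}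

/-- A minimal subshift: nonempty, and every orbit is dense. -/
def IsMinimalSubshift {A : Type*} [TopologicalSpace A] (X : Set (ℤ → A)) : Prop :=
  IsSubshift X ∧ X.Nonempty ∧ ∀ x ∈ X, orbitClosure x = X

/-- An ergodic shift-invariant Borel probability measure carried by `X`. -/
def IsErgodicMeasureOn {A : Type*} [MeasurableSpace A]
    (X : Set (ℤ → A)) (μ : Measure (ℤ → A)) : Prop :=
  IsProbabilityMeasure μ ∧ μ X = 1 ∧ Ergodic shift μ

/-- A set `Y` is uniquely ergodic if it carries exactly one shift-invariant Borel
probability measure. -/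
def UniquelyErgodicOn {A : Type*} [TopologicalSpace A] [MeasurableSpace A]
    (Y : Set (ℤ → A)) : Prop :=
  ∃! μ : Measure (ℤ → A), IsProbabilityMeasure μ ∧ μ.map shift = μ ∧ μ Y = 1

namespace SS

section lists
variable {α : Type*}

lemma infix_append_cases {w A B : List α} (h : w <:+: A ++ B) :
    w <:+: A ∨ w <:+: B ∨ ∃ a b, w = a ++ b ∧ a <:+ A ∧ b <+: B := by
  obtain ⟨s, t, h⟩ := h
  rw [List.append_assoc, List.append_eq_append_iff] at h
  rcases h with ⟨c, hA, hc⟩ | ⟨c, hs, hB⟩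
  · rw [List.append_eq_append_iff] at hc
    rcases hc with ⟨e, he, ht⟩ | ⟨e, he, ht⟩
    · left; exact ⟨s, e, by rw [hA, he, List.append_assoc]⟩
    · right; right; exact ⟨c, e, he, ⟨s, hA.symm⟩, ⟨t, ht.symm⟩⟩
  · right; left; exact ⟨c, t, by rw [hB, List.append_assoc]⟩

lemma infix_glue {w A B C : List α} (h : w <:+: A ++ B ++ C) (hl : w.length ≤ B.length) :
    w <:+: A ++ B ∨ w <:+: B ++ C := by
  rw [List.append_assoc] at h
  rcases infix_append_cases h with h | h | ⟨a, b, rfl, ha, hb⟩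
  · left; exact h.trans (List.prefix_append _ _).isInfix
  · right; exact h
  · left
    have : b <+: B := List.prefix_of_prefix_length_le hb (List.prefix_append _ _)
      (by simp at hl; omega)
    obtain ⟨s, rfl⟩ := ha
    obtain ⟨t, rfl⟩ := this
    exact ⟨s, t, by simp⟩

/-- `rep w n` is the `n`-fold power of `w`. -/
def rep (w : List α) (n : ℕ) : List α := (List.replicate n w).flatten

@[simp] lemma rep_zero (w : List α) : rep w 0 = [] := by simp [rep]
lemma rep_succ (w : List α) (n : ℕ) : rep w (n+1) = w ++ rep w n := by
  simp [rep, List.replicate_succ]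
@[simp] lemma rep_one (w : List α) : rep w 1 = w := by simp [rep]
lemma rep_add (w : List α) (m n : ℕ) : rep w (m+n) = rep w m ++ rep w n := by
  simp [rep, ← List.replicate_append_replicate]
lemma rep_succ' (w : List α) (n : ℕ) : rep w (n+1) = rep w n ++ w := by
  rw [rep_add, rep_one]
@[simp] lemma rep_length (w : List α) (n : ℕ) : (rep w n).length = n * w.length := by
  simp [rep]

lemma rep_prefix (w : List α) {m n : ℕ} (h : m ≤ n) : rep w m <+: rep w n := by
  obtain ⟨k, rfl⟩ := Nat.exists_eq_add_of_le h
  rw [rep_add]; exact List.prefix_append _ _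
lemma rep_suffix (w : List α) {m n : ℕ} (h : m ≤ n) : rep w m <:+ rep w n := by
  obtain ⟨k, rfl⟩ := Nat.exists_eq_add_of_le' h
  rw [rep_add]; exact List.suffix_append _ _

lemma le_rep_length {w : List α} (hw : 1 ≤ w.length) (n : ℕ) : n ≤ (rep w n).length := by
  rw [rep_length]; exact Nat.le_mul_of_pos_right n hw

lemma rep_getElem? (w : List α) (n p : ℕ) (hp : p < n * w.length) :
    (rep w n)[p]? = w[p % w.length]? := by
  induction n generalizing p with
  | zero => simp at hp
  | succ n ih =>
    rw [rep_succ]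
    by_cases h : p < w.length
    · rw [List.getElem?_append_left h, Nat.mod_eq_of_lt h]
    · push Not at h
      rw [List.getElem?_append_right h, ih]
      · rw [Nat.mod_eq_sub_mod h]
      · rw [Nat.succ_mul] at hp; omega

/-- covering predicate -/
def Cov (G : List α → Prop) (n : ℕ) (z : List α) : Prop := ∀ w, w <:+: z → w.length = n → G w

lemma Cov.glue {G : List α → Prop} {n : ℕ} {A B C : List α} (h1 : Cov G n (A ++ B))
    (h2 : Cov G n (B ++ C)) (hB : n ≤ B.length) : Cov G n (A ++ B ++ C) := by
  intro w hw hn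
  rcases infix_glue hw (hn ▸ hB) with h | h
  · exact h1 w h hn
  · exact h2 w h hn

/-- `z` is covered and ends in the long block `B`. -/
def Chain (G : List α → Prop) (n : ℕ) (z B : List α) : Prop :=
  B <:+ z ∧ n ≤ B.length ∧ Cov G n z

lemma Chain.append {G : List α → Prop} {n : ℕ} {z B C D : List α} (h : Chain G n z B)
    (hc : Cov G n (B ++ C)) (hD : D <:+ B ++ C) (hDl : n ≤ D.length) :
    Chain G n (z ++ C) D := by
  obtain ⟨⟨A, rfl⟩, hB, hz⟩ := h
  refine ⟨?_, hDl, hz.glue hc hB⟩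
  rw [List.append_assoc]; exact hD.trans (List.suffix_append _ _)

lemma Chain.weaken {G : List α → Prop} {n : ℕ} {z B B' : List α} (h : Chain G n z B)
    (hB : B' <:+ B) (hn : n ≤ B'.length) : Chain G n z B' := ⟨hB.trans h.1, hn, h.2.2⟩

/-! counting -/

lemma ncard_per (u : List α) (n : ℕ) :
    {w : List α | w.length = n ∧ ∃ t, w <:+: rep u t}.Finite ∧
    {w : List α | w.length = n ∧ ∃ t, w <:+: rep u t}.ncard ≤ u.length + (if n = 0 then 1 else 0) := by
  classical
  set S := {w : List α | w.length = n ∧ ∃ t, w <:+: rep u t}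
  by_cases hn : n = 0
  · have : S ⊆ {[]} := by
      rintro w ⟨h, -⟩; rw [hn] at h; simpa using h
    refine ⟨(Set.finite_singleton _).subset this, ?_⟩
    refine (Set.ncard_le_ncard this).trans ?_
    simp [hn]
  · have key : ∀ w ∈ S, ∃ p < u.length, ∀ i < n, w[i]? = u[(p+i) % u.length]? := by
      rintro w ⟨hl, t, s, r, h⟩
      have hlen : s.length + n + r.length = t * u.length := by
        rw [← rep_length, ← h]; simp [hl]; omega
      have hu : 0 < u.length := by
        rcases Nat.eq_zero_or_pos u.length with h0 | h0
        · rw [h0] at hlen; omega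
        · exact h0
      refine ⟨s.length % u.length, Nat.mod_lt _ hu, fun i hi => ?_⟩
      rw [Nat.mod_add_mod, ← rep_getElem? u t (s.length + i) (by omega), ← h, List.append_assoc,
        List.getElem?_append_right (by omega), List.getElem?_append_left (by omega)]
      congr 1; omega
    choose! f hf1 hf2 using key
    have inj : Set.InjOn f S := by
      intro w hw w' hw' e
      apply List.ext_getElem?
      intro i
      by_cases hi : i < n
      · rw [hf2 w hw i hi, hf2 w' hw' i hi, e]
      · rw [List.getElem?_eq_none (by rw [hw.1]; omega), List.getElem?_eq_none (by rw [hw'.1]; omega)]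
    have maps : Set.MapsTo f S (Finset.range u.length : Set ℕ) := by
      intro w hw; simpa using hf1 w hw
    refine ⟨Set.Finite.of_injOn maps inj (Finset.finite_toSet _), ?_⟩
    have := Set.ncard_le_ncard_of_injOn f maps inj (Finset.finite_toSet _)
    rw [Set.ncard_coe_finset, Finset.card_range] at this
    simpa [hn] using this

/-- Words crossing a border: suffix of a power of `u` followed by a prefix of something of
the form `Z t`. -/
lemma ncard_cross (L R : ℕ → List α) (hL : ∀ m n, m ≤ n → L m <:+ L n)
    (hR : ∀ m n, m ≤ n → R m <+: R n) (n : ℕ) :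
    {w : List α | w.length = n ∧ ∃ t a b, w = a ++ b ∧ a <:+ L t ∧ b <+: R t}.Finite ∧
    {w : List α | w.length = n ∧ ∃ t a b, w = a ++ b ∧ a <:+ L t ∧ b <+: R t}.ncard ≤ n + 1 := by
  set S := {w : List α | w.length = n ∧ ∃ t a b, w = a ++ b ∧ a <:+ L t ∧ b <+: R t}
  have key : ∀ w ∈ S, ∃ p < n + 1, ∃ t a b, w = a ++ b ∧ a <:+ L t ∧ b <+: R t ∧ a.length = p ∧
      b.length = n - p := by
    rintro w ⟨hl, t, a, b, rfl, ha, hb⟩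
    simp at hl
    exact ⟨a.length, by omega, t, a, b, rfl, ha, hb, rfl, by omega⟩
  choose! f hf1 hf2 using key
  have inj : Set.InjOn f S := by
    intro w hw w' hw' e
    obtain ⟨t, a, b, h1, h2, h3, h4, h5⟩ := hf2 w hw
    obtain ⟨t', a', b', h1', h2', h3', h4', h5'⟩ := hf2 w' hw'
    have ea : a = a' := by
      have x1 := h2.trans (hL t (max t t') (le_max_left _ _))
      have x2 := h2'.trans (hL t' (max t t') (le_max_right _ _))
      exact (List.suffix_of_suffix_length_le x1 x2 (by omega)).eq_of_length (by omega)
    have eb : b = b' := by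
      have x1 := h3.trans (hR t (max t t') (le_max_left _ _))
      have x2 := h3'.trans (hR t' (max t t') (le_max_right _ _))
      exact (List.prefix_of_prefix_length_le x1 x2 (by omega)).eq_of_length (by rw [h5, h5', e])
    rw [h1, h1', ea, eb]
  have maps : Set.MapsTo f S (Finset.range (n+1) : Set ℕ) := by
    intro w hw; simpa using hf1 w hw
  refine ⟨Set.Finite.of_injOn maps inj (Finset.finite_toSet _), ?_⟩
  have := Set.ncard_le_ncard_of_injOn f maps inj (Finset.finite_toSet _)
  rwa [Set.ncard_coe_finset, Finset.card_range] at this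

lemma ncard_start (Z R : List α) (n : ℕ) :
    {w : List α | ∃ s < Z.length, w = ((Z ++ R).drop s).take n}.Finite ∧
    {w : List α | ∃ s < Z.length, w = ((Z ++ R).drop s).take n}.ncard ≤ Z.length := by
  classical
  have : {w : List α | ∃ s < Z.length, w = ((Z ++ R).drop s).take n} =
      ((Finset.range Z.length).image (fun s => ((Z ++ R).drop s).take n) : Finset (List α)) := by
    ext w; simp [eq_comm]
  rw [this]
  refine ⟨Finset.finite_toSet _, ?_⟩
  rw [Set.ncard_coe_finset]
  exact Finset.card_image_le.trans (by simp)

lemma infix_special {w Y Z R : List α} {n : ℕ} (hn : w.length = n) (h : w <:+: Y ++ (Z ++ R)) :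
    w <:+: Y ∨ w <:+: R ∨ (∃ a b, w = a ++ b ∧ a <:+ Y ∧ b <+: Z ++ R) ∨
      ∃ s < Z.length, w = ((Z ++ R).drop s).take n := by
  rcases infix_append_cases h with h | h | h
  · exact Or.inl h
  · obtain ⟨s, t, h⟩ := h
    by_cases hs : s.length < Z.length
    · right; right; right
      refine ⟨s.length, hs, ?_⟩
      rw [← h, List.append_assoc, List.drop_left, ← hn, List.take_left]
    · right; left
      have : s.drop Z.length ++ w ++ t = R := by
        have := congrArg (List.drop Z.length) h
        rw [List.drop_left, List.append_assoc, List.drop_append_of_le_length (by omega)] at this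
        rw [← this, List.append_assoc]
      exact ⟨_, _, this⟩
  · exact Or.inr (Or.inr (Or.inl h))

/-- decomposition of an infix of a concatenation -/
lemma infix_flatMap {β : Type*} (f : β → List α) (h : ℕ) (s : List β)
    (hf : ∀ b ∈ s, (f b).length ≤ h) (w : List α) (hw : w <:+: s.flatMap f) :
    ∃ p s' q, w = p ++ s'.flatMap f ++ q ∧ p.length ≤ h ∧ q.length ≤ h ∧ s' ⊆ s := by
  -- first the prefix version
  have pre : ∀ (s : List β), (∀ b ∈ s, (f b).length ≤ h) → ∀ w, w <+: s.flatMap f →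
      ∃ s' q, w = s'.flatMap f ++ q ∧ q.length ≤ h ∧ s' ⊆ s := by
    intro s
    induction s with
    | nil => intro _ w hw; simp at hw; exact ⟨[], [], by simp [hw]⟩
    | cons b s ih =>
      intro hf w hw
      rw [List.flatMap_cons] at hw
      rcases Nat.le_total w.length (f b).length with hle | hle
      · refine ⟨[], w, by simp, hle.trans (hf b (by simp)), by simp⟩
      · have hp : f b <+: w := List.prefix_of_prefix_length_le (List.prefix_append _ _) hw hle
        obtain ⟨w', rfl⟩ := hp
        rw [List.prefix_append_right_inj] at hw
        obtain ⟨s', q, rfl, hq, hs'⟩ := ih (fun b hb => hf b (by simp [hb])) w' hw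
        refine ⟨b :: s', q, by simp, hq, ?_⟩
        intro x hx
        rcases List.mem_cons.1 hx with rfl | hx
        · simp
        · exact List.mem_cons_of_mem _ (hs' hx)
  induction s with
  | nil => simp at hw; exact ⟨[], [], [], by simp [hw]⟩
  | cons b s ih =>
    rw [List.flatMap_cons] at hw
    rcases infix_append_cases hw with hw | hw | ⟨a, c, rfl, ha, hc⟩
    · exact ⟨w, [], [], by simp, hw.length_le.trans (hf b (by simp)), by simp, by simp⟩
    · obtain ⟨p, s', q, h1, h2, h3, h4⟩ := ih (fun b hb => hf b (by simp [hb])) hw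
      exact ⟨p, s', q, h1, h2, h3, fun x hx => List.mem_cons_of_mem _ (h4 hx)⟩
    · obtain ⟨s', q, rfl, hq, hs'⟩ := pre s (fun b hb => hf b (by simp [hb])) c hc
      exact ⟨a, s', q, by simp, ha.length_le.trans (hf b (by simp)), hq,
        fun x hx => List.mem_cons_of_mem _ (hs' hx)⟩

lemma rep_eq_flatMap {β : Type*} (f : β → List α) (b : β) (n : ℕ) :
    rep (f b) n = (List.replicate n b).flatMap f := by
  simp [rep, List.flatMap]

end lists
end SS

namespace SS

variable {d : ℕ} [NeZero d]

/-- the letter `i mod d` -/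
def lt (d : ℕ) [NeZero d] (i : ℕ) : Fin d := Fin.ofNat d i

lemma lt_val (i : ℕ) : (lt d i : ℕ) = i % d := rfl
lemma lt_eq_iff {i j : ℕ} : lt d i = lt d j ↔ i % d = j % d := by
  rw [Fin.ext_iff]; rfl
lemma lt_add (i : ℕ) : lt d (i + d) = lt d i := by
  rw [lt_eq_iff]; simp
lemma lt_self (j : Fin d) : lt d j = j := by
  rw [Fin.ext_iff, lt_val, Nat.mod_eq_of_lt j.2]
lemma lt_ne {k i : ℕ} (h1 : 0 < i) (h2 : i < d) : lt d (k + i) ≠ lt d k := by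
  rw [Ne, lt_eq_iff]
  intro h
  have : (k + i) ≡ k + 0 [MOD d] := h
  have := Nat.ModEq.add_left_cancel' k this
  have h3 : i % d = 0 % d := this
  rw [Nat.mod_eq_of_lt h2, Nat.zero_mod] at h3
  omega
lemma lt_succ {i j : ℕ} (h : lt d i = lt d j) : lt d (i+1) = lt d (j+1) := by
  rw [lt_eq_iff] at *
  exact Nat.ModEq.add_right 1 h
/-- every letter is `lt (k+i)` for some `i < d` -/
lemma exists_lt (k : ℕ) (j : Fin d) : ∃ i < d, lt d (k + i) = j := by
  have hd : 0 < d := Nat.pos_of_ne_zero (NeZero.ne d)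
  refine ⟨(j + (d - k % d)) % d, Nat.mod_lt _ hd, ?_⟩
  have hk := Nat.mod_lt k hd
  conv_rhs => rw [← lt_self j]
  rw [lt_eq_iff, Nat.add_mod_mod]
  rw [← Nat.mod_add_mod]
  have : k % d + (↑j + (d - k % d)) = j + d := by omega
  rw [this]; simp

/-- middle part -/
def mid (U : Fin d → List (Fin d)) (k Q : ℕ) : ℕ → List (Fin d)
  | 0 => []
  | i+1 => mid U k Q i ++ rep (U (lt d (k+(i+1)))) (Q^(i+1))

/-- total length -/
def tot (U : Fin d → List (Fin d)) : ℕ := ∑ j, (U j).length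

/-- the updated word -/
def newW (U : Fin d → List (Fin d)) (k Q : ℕ) : List (Fin d) :=
  rep (U (lt d k)) (Q^d) ++ mid U k Q d

/-- exponent -/
def qf (U : Fin d → List (Fin d)) (k : ℕ) : ℕ := 4^(k+2) * tot U

/-- the words -/
def W (d : ℕ) [NeZero d] : ℕ → Fin d → List (Fin d)
  | 0 => fun j => [j]
  | k+1 => Function.update (W d k) (lt d k) (newW (W d k) k (qf (W d k) k))

/-- the exponent at stage `k` -/
def Q (d : ℕ) [NeZero d] (k : ℕ) : ℕ := qf (W d k) k
/-- total length at stage `k` -/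
def T (d : ℕ) [NeZero d] (k : ℕ) : ℕ := tot (W d k)
/-- middle part at stage `k` -/
def M (d : ℕ) [NeZero d] (k i : ℕ) : List (Fin d) := mid (W d k) k (Q d k) i

lemma M_zero (k : ℕ) : M d k 0 = [] := rfl
lemma M_succ (k i : ℕ) : M d k (i+1) = M d k i ++ rep (W d k (lt d (k+(i+1)))) (Q d k^(i+1)) := rfl
lemma Q_eq (k : ℕ) : Q d k = 4^(k+2) * T d k := rfl

lemma W_new (k : ℕ) : W d (k+1) (lt d k) = rep (W d k (lt d k)) (Q d k^d) ++ M d k d := by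
  simp only [W, Function.update_self]; rfl
lemma W_old (k : ℕ) {j : Fin d} (h : j ≠ lt d k) : W d (k+1) j = W d k j := by
  simp only [W, Function.update_of_ne h]

lemma M_d (k : ℕ) : M d k d = M d k (d-1) ++ rep (W d k (lt d k)) (Q d k^d) := by
  obtain ⟨m, hm⟩ := Nat.exists_eq_succ_of_ne_zero (NeZero.ne d)
  have h1 : d - 1 = m := by omega
  have h2 : M d k d = M d k (m+1) := by congr 1
  rw [h2, M_succ, h1]
  have : m + 1 = d := by omega
  rw [this, lt_add]

lemma M_prefix (k : ℕ) {i j : ℕ} (h : i ≤ j) : M d k i <+: M d k j := by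
  induction j, h using Nat.le_induction with
  | base => exact List.prefix_rfl
  | succ j _ ih => rw [M_succ]; exact ih.trans (List.prefix_append _ _)

lemma rep_infix_M (k : ℕ) {i j : ℕ} (h1 : 0 < i) (h : i ≤ j) :
    rep (W d k (lt d (k+i))) (Q d k^i) <:+: M d k j := by
  obtain ⟨m, rfl⟩ := Nat.exists_eq_succ_of_ne_zero h1.ne'
  refine List.IsInfix.trans ?_ (M_prefix k h).isInfix
  rw [M_succ]
  exact (List.suffix_append _ _).isInfix

lemma T_pos_and_W (k : ℕ) : (∀ j : Fin d, 1 ≤ (W d k j).length) ∧ 0 < T d k := by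
  have aux : ∀ k, (∀ j : Fin d, 1 ≤ (W d k j).length) → 0 < T d k := by
    intro k h
    exact Finset.sum_pos (fun j _ => h j) Finset.univ_nonempty
  induction k with
  | zero => exact ⟨by simp [W], aux 0 (by simp [W])⟩
  | succ k ih =>
    have : ∀ j : Fin d, 1 ≤ (W d (k+1) j).length := by
      intro j
      by_cases h : j = lt d k
      · subst h
        rw [W_new, List.length_append, rep_length]
        have hq : 0 < Q d k := by rw [Q_eq]; have := ih.2; positivity
        have := Nat.mul_le_mul (Nat.one_le_iff_ne_zero.2 (pow_pos hq d).ne') (ih.1 (lt d k))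
        omega
      · rw [W_old k h]; exact ih.1 j
    exact ⟨this, aux _ this⟩

lemma W_pos (k : ℕ) (j : Fin d) : 1 ≤ (W d k j).length := (T_pos_and_W k).1 j
lemma T_pos (k : ℕ) : 0 < T d k := (T_pos_and_W k).2
lemma Q_pos (k : ℕ) : 0 < Q d k := by rw [Q_eq]; have := T_pos (d := d) k; positivity
lemma W_le_T (k : ℕ) (j : Fin d) : (W d k j).length ≤ T d k :=
  Finset.single_le_sum (f := fun j => (W d k j).length) (fun _ _ => Nat.zero_le _) (Finset.mem_univ j)
lemma Q_two (k : ℕ) : 16 ≤ Q d k := by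
  rw [Q_eq]
  have h1 : 4^2 ≤ 4^(k+2) := Nat.pow_le_pow_right (by norm_num) (by omega)
  have := T_pos (d := d) k
  nlinarith
lemma d_le_T (k : ℕ) : d ≤ T d k := by
  unfold T tot
  calc d = ∑ j : Fin d, 1 := by simp
    _ ≤ _ := Finset.sum_le_sum (fun j _ => W_pos k j)
lemma four_le_Q (k : ℕ) : 4^(k+2) ≤ Q d k := by
  rw [Q_eq]; exact Nat.le_mul_of_pos_right _ (T_pos k)

/-- length of middle parts -/
lemma M_len (k i : ℕ) : 4^(k+1) * (M d k i).length ≤ Q d k^(i+1) := by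
  have key : (M d k i).length ≤ 2 * T d k * Q d k ^ i := by
    induction i with
    | zero => simp [M_zero]
    | succ i ih =>
      rw [M_succ, List.length_append, rep_length]
      have h1 := W_le_T k (lt d (k+(i+1)))
      have h2 := Q_two (d := d) k
      have h3 : 2 * Q d k^i ≤ Q d k^(i+1) := by
        rw [pow_succ]; nlinarith [pow_pos (Q_pos (d := d) k) i]
      nlinarith [Nat.mul_le_mul_left (T d k) h3, Nat.mul_le_mul_left (Q d k^(i+1)) h1]
  calc 4^(k+1) * (M d k i).length ≤ 4^(k+1) * (2 * T d k * Q d k ^ i) := Nat.mul_le_mul_left _ key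
    _ ≤ 4^(k+2) * T d k * Q d k^i := by
        rw [pow_succ 4 (k+1)]
        nlinarith [Nat.zero_le (4^(k+1) * T d k * Q d k^i)]
    _ = Q d k^(i+1) := by rw [pow_succ, Q_eq]; ring

lemma W_prefix_succ (k : ℕ) (j : Fin d) : W d k j <+: W d (k+1) j := by
  by_cases h : j = lt d k
  · subst h
    rw [W_new]
    have : rep (W d k (lt d k)) 1 <+: rep (W d k (lt d k)) (Q d k^d) :=
      rep_prefix _ (Nat.one_le_iff_ne_zero.2 (pow_pos (Q_pos k) d).ne')
    rw [rep_one] at this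
    exact this.trans (List.prefix_append _ _)
  · rw [W_old k h]
lemma W_suffix_succ (k : ℕ) (j : Fin d) : W d k j <:+ W d (k+1) j := by
  by_cases h : j = lt d k
  · subst h
    rw [W_new, M_d, ← List.append_assoc]
    have : rep (W d k (lt d k)) 1 <:+ rep (W d k (lt d k)) (Q d k^d) :=
      rep_suffix _ (Nat.one_le_iff_ne_zero.2 (pow_pos (Q_pos k) d).ne')
    rw [rep_one] at this
    exact this.trans (List.suffix_append _ _)
  · rw [W_old k h]
lemma W_prefix {k K : ℕ} (h : k ≤ K) (j : Fin d) : W d k j <+: W d K j := by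
  induction K, h using Nat.le_induction with
  | base => exact List.prefix_rfl
  | succ K _ ih => exact ih.trans (W_prefix_succ K j)
lemma W_suffix {k K : ℕ} (h : k ≤ K) (j : Fin d) : W d k j <:+ W d K j := by
  induction K, h using Nat.le_induction with
  | base => exact List.suffix_rfl
  | succ K _ ih => exact ih.trans (W_suffix_succ K j)

lemma T_mono {k K : ℕ} (h : k ≤ K) : T d k ≤ T d K := by
  unfold T tot
  exact Finset.sum_le_sum (fun j _ => (W_prefix h j).length_le)
lemma Q_mono {k K : ℕ} (h : k ≤ K) : Q d k ≤ Q d K := by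
  rw [Q_eq, Q_eq]
  exact Nat.mul_le_mul (Nat.pow_le_pow_right (by norm_num) (by omega)) (T_mono h)

/-- old words are contained in the updated one -/
lemma W_infix_new (k : ℕ) (i : Fin d) : W d k i <:+: W d (k+1) (lt d k) := by
  obtain ⟨m, hm, rfl⟩ := exists_lt k i
  rcases Nat.eq_zero_or_pos m with rfl | h0
  · exact (W_prefix_succ k _).isInfix
  · have h1 := rep_infix_M (d := d) k h0 hm.le
    have : rep (W d k (lt d (k+m))) 1 <+: rep (W d k (lt d (k+m))) (Q d k^m) :=
      rep_prefix _ (Nat.one_le_iff_ne_zero.2 (pow_pos (Q_pos k) m).ne')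
    rw [rep_one] at this
    rw [W_new]
    exact (this.isInfix.trans h1).trans (List.suffix_append _ _).isInfix

lemma W_infix_all {k K : ℕ} (h : k + d ≤ K) (i j : Fin d) : W d k i <:+: W d K j := by
  obtain ⟨m, hm, rfl⟩ := exists_lt k j
  exact ((W_prefix (Nat.le_add_right k m) i).isInfix.trans (W_infix_new (k+m) i)).trans
    (W_prefix (by omega) _).isInfix

lemma W_len_ge {k K : ℕ} (h : k < K) : 4^k ≤ (W d K (lt d k)).length := by
  refine le_trans ?_ (W_prefix (show k + 1 ≤ K from h) _).length_le
  rw [W_new, List.length_append, rep_length]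
  have h1 : Q d k ≤ Q d k ^ d := Nat.le_self_pow (NeZero.ne d) _
  have h2 := W_pos k (lt d k)
  have h3 := four_le_Q (d := d) k
  have h4 : 4^k ≤ 4^(k+2) := Nat.pow_le_pow_right (by norm_num) (by omega)
  nlinarith

lemma W_len (k : ℕ) (j : Fin d) : 4^k ≤ 4^d * (W d k j).length := by
  by_cases h : k < d
  · have h1 : 4^k ≤ 4^d := Nat.pow_le_pow_right (by norm_num) h.le
    have := W_pos k j
    nlinarith [pow_pos (show 0 < 4 by norm_num) d]
  · obtain ⟨m, hm, rfl⟩ := exists_lt (k-d) j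
    have := W_len_ge (d := d) (show k - d + m < k by omega)
    calc 4^k = 4^d * 4^(k-d) := by rw [← pow_add]; congr 1; omega
      _ ≤ 4^d * 4^(k-d+m) := Nat.mul_le_mul_left _ (Nat.pow_le_pow_right (by norm_num) (by omega))
      _ ≤ _ := Nat.mul_le_mul_left _ this

/-- factorization -/
lemma M_flat (k i : ℕ) : ∃ s : List (Fin d), M d k i = s.flatMap (W d k) := by
  induction i with
  | zero => exact ⟨[], rfl⟩
  | succ i ih =>
    obtain ⟨s, hs⟩ := ih
    exact ⟨s ++ List.replicate (Q d k^(i+1)) (lt d (k+(i+1))), by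
      rw [M_succ, hs, List.flatMap_append, rep_eq_flatMap]⟩
lemma W_flat_succ (k : ℕ) (j : Fin d) : ∃ s : List (Fin d), W d (k+1) j = s.flatMap (W d k) := by
  by_cases h : j = lt d k
  · subst h
    obtain ⟨s, hs⟩ := M_flat (d := d) k d
    exact ⟨List.replicate (Q d k^d) (lt d k) ++ s, by
      rw [W_new, hs, List.flatMap_append, rep_eq_flatMap]⟩
  · exact ⟨[j], by simp [W_old k h]⟩
lemma W_flat {k K : ℕ} (h : k ≤ K) (j : Fin d) : ∃ s : List (Fin d), W d K j = s.flatMap (W d k) := by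
  induction K, h using Nat.le_induction generalizing j with
  | base => exact ⟨[j], by simp⟩
  | succ K _ ih =>
    obtain ⟨s, hs⟩ := W_flat_succ K j
    choose f hf using ih
    refine ⟨s.flatMap f, ?_⟩
    rw [hs, List.flatMap_assoc]
    congr 1
    funext a; exact hf a

/-- the language -/
def Lang (d : ℕ) [NeZero d] (w : List (Fin d)) : Prop := ∃ k j, w <:+: W d k j

lemma Lang.sub {w w' : List (Fin d)} (h : Lang d w) (h' : w' <:+: w) : Lang d w' := by
  obtain ⟨k, j, h⟩ := h; exact ⟨k, j, h'.trans h⟩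
lemma Lang_W (k : ℕ) (j : Fin d) : Lang d (W d k j) := ⟨k, j, List.infix_rfl⟩

lemma Lang.at_least {w : List (Fin d)} (h : Lang d w) (k : ℕ) : ∃ K ≥ k, ∃ j, w <:+: W d K j := by
  obtain ⟨K, j, h⟩ := h
  exact ⟨max k K, le_max_left _ _, j, h.trans (W_prefix (le_max_right _ _) j).isInfix⟩

/-- `w` lies in `u^t u'^t` with consecutive `u,u'` of stage `k`. -/
def Pair (d : ℕ) [NeZero d] (k : ℕ) (w : List (Fin d)) : Prop :=
  ∃ i t, w <:+: rep (W d k (lt d i)) t ++ rep (W d k (lt d (i+1))) t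

lemma cov_pair (k n i e e' : ℕ) :
    Cov (Pair d k) n (rep (W d k (lt d i)) e ++ rep (W d k (lt d (i+1))) e') := by
  intro w hw _
  refine ⟨i, max e e', hw.trans ?_⟩
  obtain ⟨s, hs⟩ := rep_suffix (W d k (lt d i)) (le_max_left e e')
  obtain ⟨t, ht⟩ := rep_prefix (W d k (lt d (i+1))) (le_max_right e e')
  exact ⟨s, t, by rw [← hs, ← ht]; simp⟩
lemma cov_self (k n i e : ℕ) :
    Cov (Pair d k) n (rep (W d k (lt d i)) e) := by
  have := cov_pair (d := d) k n i e 0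
  simpa using this

/-- chain along a pass -/
lemma chain_next {k n i e e' : ℕ} {z : List (Fin d)}
    (h : Chain (Pair d k) n z (rep (W d k (lt d i)) e)) (he : n ≤ e') :
    Chain (Pair d k) n (z ++ rep (W d k (lt d (i+1))) e') (rep (W d k (lt d (i+1))) e') :=
  h.append (cov_pair k n i e e') (List.suffix_append _ _) (he.trans (le_rep_length (W_pos _ _) _))
lemma chain_same {k n i e e' : ℕ} {z : List (Fin d)}
    (h : Chain (Pair d k) n z (rep (W d k (lt d i)) e)) (he : n ≤ e') :
    Chain (Pair d k) n (z ++ rep (W d k (lt d i)) e') (rep (W d k (lt d i)) e') :=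
  h.append (by rw [← rep_add]; exact cov_self k n i _) (List.suffix_append _ _)
    (he.trans (le_rep_length (W_pos _ _) _))

lemma chain_M {k n e : ℕ} (hn : n ≤ Q d k) {z : List (Fin d)}
    (h : Chain (Pair d k) n z (rep (W d k (lt d k)) e)) (i : ℕ) :
    ∃ e', Chain (Pair d k) n (z ++ M d k i) (rep (W d k (lt d (k+i))) e') := by
  induction i with
  | zero => exact ⟨e, by simpa [M_zero] using h⟩
  | succ i ih =>
    obtain ⟨e', h'⟩ := ih
    refine ⟨Q d k^(i+1), ?_⟩
    rw [M_succ, ← List.append_assoc]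
    exact chain_next h' (hn.trans (Nat.le_self_pow (by omega) _))

lemma chain_v {k n e i : ℕ} (hn : n ≤ Q d k) {z : List (Fin d)}
    (h : Chain (Pair d k) n z (rep (W d k (lt d i)) e)) (hi : lt d i = lt d k ∨ lt d (i+1) = lt d k) :
    ∃ e', Chain (Pair d k) n (z ++ W d (k+1) (lt d k)) (rep (W d k (lt d k)) e') := by
  have hn' : n ≤ Q d k^d := hn.trans (Nat.le_self_pow (NeZero.ne d) _)
  have h1 : Chain (Pair d k) n (z ++ rep (W d k (lt d k)) (Q d k^d))
      (rep (W d k (lt d k)) (Q d k^d)) := by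
    rcases hi with hi | hi
    · rw [← hi]; exact chain_same h hn'
    · rw [← hi]; exact chain_next h hn'
  obtain ⟨e', h2⟩ := chain_M hn h1 d
  rw [lt_add] at h2
  exact ⟨e', by rw [W_new, ← List.append_assoc]; exact h2⟩

lemma chain_vt {k n e i : ℕ} (hn : n ≤ Q d k) {z : List (Fin d)}
    (h : Chain (Pair d k) n z (rep (W d k (lt d i)) e)) (hi : lt d i = lt d k ∨ lt d (i+1) = lt d k)
    (t : ℕ) :
    ∃ e', Chain (Pair d k) n (z ++ rep (W d (k+1) (lt d k)) (t+1)) (rep (W d k (lt d k)) e') := by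
  induction t with
  | zero => simpa using chain_v hn h hi
  | succ t ih =>
    obtain ⟨e', h'⟩ := ih
    rw [rep_succ' _ (t+1), ← List.append_assoc]
    exact chain_v hn h' (Or.inl rfl)

lemma chain_self {k n i e : ℕ} (he : n ≤ e) :
    Chain (Pair d k) n (rep (W d k (lt d i)) e) (rep (W d k (lt d i)) e) :=
  ⟨List.suffix_rfl, he.trans (le_rep_length (W_pos _ _) _), cov_self k n i e⟩

lemma Pair.step {k : ℕ} {w : List (Fin d)} (hd : 1 < d) (h : Pair d (k+1) w)
    (hw : w.length ≤ Q d k) : Pair d k w := by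
  obtain ⟨i, t, h⟩ := h
  set n := w.length with hn
  by_cases h1 : lt d i = lt d k
  · have h2 : lt d (i+1) ≠ lt d k := by
      rw [lt_succ h1]; exact lt_ne one_pos hd
    rw [h1, W_old k h2] at h
    have c0 : Chain (Pair d k) n (rep (W d k (lt d k)) n) (rep (W d k (lt d k)) n) :=
      chain_self le_rfl
    obtain ⟨e, c1⟩ := chain_vt hw c0 (Or.inl rfl) t
    rw [lt_succ h1] at h
    have c2 := chain_next c1 (le_max_right t n)
    refine c2.2.2 w (h.trans ?_) rfl
    obtain ⟨s, hs⟩ := rep_suffix (W d (k+1) (lt d k)) (Nat.le_succ t)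
    obtain ⟨r, hr⟩ := rep_prefix (W d k (lt d (k+1))) (le_max_left t n)
    exact ⟨rep (W d k (lt d k)) n ++ s, r, by rw [← hs, ← hr]; simp⟩
  · by_cases h2 : lt d (i+1) = lt d k
    · rw [h2, W_old k h1] at h
      have c0 : Chain (Pair d k) n (rep (W d k (lt d i)) (max t n)) (rep (W d k (lt d i)) (max t n)) :=
        chain_self (le_max_right _ _)
      obtain ⟨e, c1⟩ := chain_vt hw c0 (Or.inr h2) t
      refine c1.2.2 w (h.trans ?_) rfl
      obtain ⟨r, hr⟩ := rep_prefix (W d (k+1) (lt d k)) (Nat.le_succ t)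
      obtain ⟨s, hs⟩ := rep_suffix (W d k (lt d i)) (le_max_left t n)
      exact ⟨s, r, by rw [← hs, ← hr]; simp⟩
    · rw [W_old k h1, W_old k h2] at h
      exact ⟨i, t, h⟩

lemma Lang.pair {w : List (Fin d)} (hd : 1 < d) (h : Lang d w) {k : ℕ} (hw : w.length ≤ Q d k) :
    Pair d k w := by
  obtain ⟨K, hK, j, h⟩ := h.at_least k
  have h1 : Pair d K w := ⟨j, 1, by
    rw [lt_self, rep_one]; exact h.trans (List.prefix_append _ _).isInfix⟩
  clear h
  induction K, hK using Nat.le_induction with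
  | base => exact h1
  | succ K hK ih => exact ih (h1.step hd (hw.trans (Q_mono hK)))

end SS

namespace SS

variable {d : ℕ} [NeZero d]

/-- word count -/
noncomputable def P (d : ℕ) [NeZero d] (n : ℕ) : ℕ := {w : List (Fin d) | Lang d w ∧ w.length = n}.ncard

/-- periodic words -/
def PerS (d : ℕ) [NeZero d] (k n : ℕ) (j : Fin d) : Set (List (Fin d)) :=
  {w | w.length = n ∧ ∃ t, w <:+: rep (W d k j) t}
/-- crossing words -/
def CrS (d : ℕ) [NeZero d] (k n : ℕ) (j : Fin d) : Set (List (Fin d)) :=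
  {w | w.length = n ∧ ∃ t a b, w = a ++ b ∧ a <:+ rep (W d k j) t ∧
    b <+: rep (W d k (lt d (j+1))) t}
/-- special words -/
def SpS (d : ℕ) [NeZero d] (k n : ℕ) (Z R : List (Fin d)) : Set (List (Fin d)) :=
  {w | w.length = n ∧ ∃ t a b, w = a ++ b ∧ a <:+ rep (W d k (lt d k)) t ∧ b <+: Z ++ R} ∪
  {w | ∃ s < Z.length, w = ((Z ++ R).drop s).take n}

lemma fin_sub (n : ℕ) (S : Set (List (Fin d))) (h : ∀ w ∈ S, w.length = n) : S.Finite :=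
  (List.finite_length_eq (Fin d) n).subset h

lemma card_Per (k n : ℕ) (hn : 1 ≤ n) : (⋃ j ∈ (Finset.univ : Finset (Fin d)), PerS d k n j).ncard ≤ T d k := by
  refine (Finset.set_ncard_biUnion_le _ _).trans ?_
  unfold T tot
  refine Finset.sum_le_sum fun j _ => ?_
  have := (ncard_per (W d k j) n).2
  rw [if_neg (by omega)] at this
  exact this

lemma card_Cr (k n : ℕ) : (⋃ j ∈ (Finset.univ : Finset (Fin d)), CrS d k n j).ncard ≤ d * (n+1) := by
  refine (Finset.set_ncard_biUnion_le _ _).trans ?_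
  calc _ ≤ ∑ j : Fin d, (n+1) := by
        refine Finset.sum_le_sum fun j _ => ?_
        exact (ncard_cross (fun t => rep (W d k j) t) (fun t => rep (W d k (lt d (j+1))) t)
          (fun m n h => rep_suffix _ h) (fun m n h => rep_prefix _ h) n).2
    _ = _ := by simp

lemma card_Sp (k n : ℕ) (Z R : List (Fin d)) : (SpS d k n Z R).ncard ≤ (n+1) + Z.length := by
  refine (Set.ncard_union_le _ _).trans (Nat.add_le_add ?_ (ncard_start Z R n).2)
  exact (ncard_cross (fun t => rep (W d k (lt d k)) t) (fun _ => Z ++ R)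
          (fun m n h => rep_suffix _ h) (fun m n h => List.prefix_rfl) n).2

lemma lt_lt_succ (i : ℕ) : lt d ((lt d i : ℕ) + 1) = lt d (i+1) :=
  lt_succ (lt_self _)

lemma Pair.cases {k n : ℕ} {w : List (Fin d)} (h : Pair d k w) (hn : w.length = n) :
    (∃ j, w ∈ PerS d k n j) ∨ ∃ j, w ∈ CrS d k n j := by
  obtain ⟨i, t, h⟩ := h
  rcases infix_append_cases h with h | h | ⟨a, b, h1, h2, h3⟩
  · exact Or.inl ⟨_, hn, t, h⟩
  · exact Or.inl ⟨_, hn, t, h⟩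
  · exact Or.inr ⟨lt d i, hn, t, a, b, h1, h2, by rw [lt_lt_succ]; exact h3⟩

lemma P_U1 (hd : 1 < d) {k n : ℕ} (h1 : 1 ≤ n) (hn : n ≤ Q d k) : P d n ≤ d * (n+1) + T d k := by
  have hsub : {w : List (Fin d) | Lang d w ∧ w.length = n} ⊆
      (⋃ j ∈ (Finset.univ : Finset (Fin d)), CrS d k n j) ∪
      (⋃ j ∈ (Finset.univ : Finset (Fin d)), PerS d k n j) := by
    rintro w ⟨hw, hl⟩
    rcases (hw.pair hd (k := k) (by omega)).cases hl with ⟨j, h⟩ | ⟨j, h⟩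
    · right; simp only [Set.mem_iUnion]; exact ⟨j, Finset.mem_univ _, h⟩
    · left; simp only [Set.mem_iUnion]; exact ⟨j, Finset.mem_univ _, h⟩
  refine (Set.ncard_le_ncard hsub ?_).trans ((Set.ncard_union_le _ _).trans
    (Nat.add_le_add (card_Cr k n) (card_Per k n h1)))
  apply fin_sub n
  rintro w (hw | hw) <;> simp only [Set.mem_iUnion] at hw <;> obtain ⟨j, _, h⟩ := hw <;> exact h.1

/-- covering predicate for intermediate lengths -/
def GG (d : ℕ) [NeZero d] (k n : ℕ) (Z R : List (Fin d)) (w : List (Fin d)) : Prop :=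
  (∃ j, w ∈ PerS d k n j) ∨ (∃ j, w ∈ CrS d (k+1) n j) ∨ w ∈ SpS d k n Z R

lemma rep_rot {α : Type*} (a b : List α) (t : ℕ) : rep (a ++ b) t ++ a = a ++ rep (b ++ a) t := by
  induction t with
  | zero => simp
  | succ t ih => rw [rep_succ, rep_succ, List.append_assoc, ih]; simp

lemma v_infix (k t : ℕ) : rep (W d (k+1) (lt d k)) t <:+: rep (W d k (lt d k)) (Q d k^d) ++
    rep (M d k d ++ rep (W d k (lt d k)) (Q d k^d)) t := by
  rw [← rep_rot, ← W_new]
  exact (List.prefix_append _ _).isInfix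

/-- from coverage of powers of the new word to coverage of the language -/
lemma GG_of_cov (hd : 1 < d) {k n : ℕ} {Z R : List (Fin d)} (hn : n ≤ Q d (k+1))
    (hc : ∀ t, Cov (GG d k n Z R) n (rep (W d (k+1) (lt d k)) t)) {w : List (Fin d)}
    (hw : Lang d w) (hl : w.length = n) : GG d k n Z R w := by
  rcases (hw.pair hd (k := k+1) (by omega)).cases hl with ⟨j, h⟩ | ⟨j, h⟩
  · by_cases hj : j = lt d k
    · subst hj
      obtain ⟨t, ht⟩ := h.2
      exact hc t w ht hl
    · left
      refine ⟨j, hl, ?_⟩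
      have := h.2
      rwa [W_old k hj] at this
  · right; left; exact ⟨j, h⟩

lemma P_of_GG {k n : ℕ} {Z R : List (Fin d)} (h1 : 1 ≤ n) 
    (h : ∀ w, Lang d w → w.length = n → GG d k n Z R w) :
    P d n ≤ (d+1) * (n+1) + T d k + Z.length := by
  have hsub : {w : List (Fin d) | Lang d w ∧ w.length = n} ⊆
      ((⋃ j ∈ (Finset.univ : Finset (Fin d)), CrS d (k+1) n j) ∪
      (⋃ j ∈ (Finset.univ : Finset (Fin d)), PerS d k n j)) ∪ SpS d k n Z R := by
    rintro w ⟨hw, hl⟩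
    rcases h w hw hl with ⟨j, h⟩ | ⟨j, h⟩ | h
    · left; right; simp only [Set.mem_iUnion]; exact ⟨j, Finset.mem_univ _, h⟩
    · left; left; simp only [Set.mem_iUnion]; exact ⟨j, Finset.mem_univ _, h⟩
    · right; exact h
  have hfin : (((⋃ j ∈ (Finset.univ : Finset (Fin d)), CrS d (k+1) n j) ∪
      (⋃ j ∈ (Finset.univ : Finset (Fin d)), PerS d k n j)) ∪ SpS d k n Z R).Finite := by
    refine Set.Finite.union ?_ ?_
    · apply fin_sub n
      rintro w (hw | hw) <;> simp only [Set.mem_iUnion] at hw <;> obtain ⟨j, _, h⟩ := hw <;> exact h.1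
    · refine Set.Finite.union (fin_sub n _ (fun w hw => hw.1)) (ncard_start Z R n).1
  have h2 := (Set.ncard_union_le ((⋃ j ∈ (Finset.univ : Finset (Fin d)), CrS d (k+1) n j) ∪
      (⋃ j ∈ (Finset.univ : Finset (Fin d)), PerS d k n j)) (SpS d k n Z R))
  have h3 := (Set.ncard_union_le (⋃ j ∈ (Finset.univ : Finset (Fin d)), CrS d (k+1) n j) 
      (⋃ j ∈ (Finset.univ : Finset (Fin d)), PerS d k n j))
  have h4 := card_Cr (d := d) (k+1) n
  have h5 := card_Per (d := d) k n h1
  have h6 := card_Sp k n Z R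
  have h7 := Set.ncard_le_ncard hsub hfin
  have h8 : (d+1) * (n+1) = d * (n+1) + (n+1) := by ring
  unfold P
  omega

lemma cov_per (k n : ℕ) (Z R : List (Fin d)) (j : Fin d) (e : ℕ) :
    Cov (GG d k n Z R) n (rep (W d k j) e) := fun w hw hl => Or.inl ⟨j, hl, e, hw⟩

lemma cov_sp (k n : ℕ) (Z R : List (Fin d)) (hR : Cov (GG d k n Z R) n R) (e : ℕ) :
    Cov (GG d k n Z R) n (rep (W d k (lt d k)) e ++ (Z ++ R)) := by
  intro w hw hl
  rcases infix_special hl hw with h | h | ⟨a, b, h⟩ | h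
  · exact cov_per k n Z R _ e w h hl
  · exact hR w h hl
  · exact Or.inr (Or.inr (Or.inl ⟨hl, e, a, b, h⟩))
  · exact Or.inr (Or.inr (Or.inr h))

lemma cov_R (k n : ℕ) (Z R : List (Fin d)) {i : ℕ} (h1 : 1 ≤ i) (h2 : i + 1 ≤ d) (e : ℕ) :
    Cov (GG d k n Z R) n (rep (W d k (lt d (k+i))) e ++
      rep (W d k (lt d (k+(i+1)))) (Q d k^(i+1))) := by
  intro w hw hl
  rcases infix_append_cases hw with h | h | ⟨a, b, h3, h4, h5⟩
  · exact cov_per k n Z R _ _ w h hl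
  · exact cov_per k n Z R _ _ w h hl
  · right; left
    refine ⟨lt d (k+i), hl, max (max e (Q d k^(i+1))) 1, a, b, h3, ?_, ?_⟩
    · rw [W_old k (lt_ne h1 (by omega))]
      exact h4.trans (rep_suffix _ (by simp))
    · rw [lt_lt_succ]
      rcases Nat.lt_or_ge (i+1) d with h | h
      · rw [show k + i + 1 = k + (i+1) by ring, W_old k (lt_ne (by omega) h)]
        exact h5.trans (rep_prefix _ (by simp))
      · have : i + 1 = d := by omega
        rw [show k + i + 1 = k + (i+1) by ring, this, lt_add]
        rw [this, lt_add] at h5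
        refine h5.trans (List.IsPrefix.trans ?_ (rep_prefix _ (m := 1) (by simp)))
        rw [rep_one, W_new]
        exact List.prefix_append _ _

lemma chain_loop {k n : ℕ} {Z R : List (Fin d)} (E : ℕ) (Y : List (Fin d)) (hn : n ≤ E)
    (hs : ∀ z, Chain (GG d k n Z R) n z (rep (W d k (lt d k)) E) →
      Chain (GG d k n Z R) n (z ++ Y) (rep (W d k (lt d k)) E)) (t : ℕ) :
    Chain (GG d k n Z R) n (rep (W d k (lt d k)) E ++ rep Y t) (rep (W d k (lt d k)) E) := by
  induction t with
  | zero => simpa using ⟨List.suffix_rfl, hn.trans (le_rep_length (W_pos _ _) _), cov_per k n Z R _ E⟩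
  | succ t ih => rw [rep_succ', ← List.append_assoc]; exact hs _ ih

lemma chain_M2 {k n i : ℕ} {Z R z : List (Fin d)} (h1 : 1 ≤ i) (hn : n ≤ Q d k^(i+1))
    (h : Chain (GG d k n Z R) n (z ++ M d k (i+1)) (rep (W d k (lt d (k+(i+1)))) (Q d k^(i+1))))
    {m : ℕ} (hm : i + 1 ≤ m) (hmd : m ≤ d) :
    Chain (GG d k n Z R) n (z ++ M d k m) (rep (W d k (lt d (k+m))) (Q d k^m)) := by
  induction m, hm using Nat.le_induction with
  | base => exact h
  | succ m hm ih =>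
    rw [M_succ, ← List.append_assoc]
    refine (ih (by omega)).append (cov_R k n Z R (by omega) hmd _) (List.suffix_append _ _) ?_
    refine (hn.trans ?_).trans (le_rep_length (W_pos _ _) _)
    exact Nat.pow_le_pow_right (Q_pos k) (by omega)

lemma v_len (k : ℕ) : (W d (k+1) (lt d k)).length =
    2 * (Q d k^d * (W d k (lt d k)).length) + (M d k (d-1)).length := by
  rw [W_new, M_d]; simp; ring

lemma v_le_Q (k : ℕ) : 2 * (Q d k^d * (W d k (lt d k)).length) ≤ Q d (k+1) := by
  have h1 := v_len (d := d) k
  have h2 := W_le_T (k+1) (lt d k)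
  have h3 : T d (k+1) ≤ Q d (k+1) := by
    rw [Q_eq]; exact Nat.le_mul_of_pos_left _ (by positivity)
  omega

lemma P_U2 (hd : 1 < d) {k n i : ℕ} (h1 : 1 ≤ n) (hi : i + 2 ≤ d) (hn : n ≤ Q d k^(i+2)) :
    P d n ≤ (d+1) * (n+1) + T d k + (M d k i).length := by
  have hnd : n ≤ Q d k^d := hn.trans (Nat.pow_le_pow_right (Q_pos k) hi)
  have hQ : n ≤ Q d (k+1) := by
    have h3 := v_le_Q (d := d) k
    have h4 := W_pos k (lt d k)
    nlinarith
  set Z := M d k i with hZ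
  set R := rep (W d k (lt d (k+(i+1)))) (Q d k^(i+1)) ++
    rep (W d k (lt d (k+(i+2)))) (Q d k^(i+2)) with hR
  have hZR : M d k (i+2) = Z ++ R := by
    rw [M_succ, M_succ]; simp [hZ, hR]
  refine P_of_GG (Z := Z) (R := R) h1 fun w hw hl => GG_of_cov hd hQ ?_ hw hl
  intro t
  have := chain_loop (k := k) (n := n) (Z := Z) (R := R) (Q d k^d)
    (M d k d ++ rep (W d k (lt d k)) (Q d k^d)) hnd ?_ t
  · intro w hw hl
    exact this.2.2 w (hw.trans (v_infix k t)) hl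
  · intro z hz
    have c1 : Chain (GG d k n Z R) n (z ++ M d k (i+1+1))
        (rep (W d k (lt d (k+(i+1+1)))) (Q d k^(i+1+1))) := by
      refine hz.append ?_ ?_ (hn.trans (le_rep_length (W_pos _ _) _))
      · rw [hZR]
        exact cov_sp k n Z R (cov_R k n Z R (by omega) (by omega) _) _
      · rw [M_succ, ← List.append_assoc]; exact List.suffix_append _ _
    have c2 := chain_M2 (by omega) hn c1 (m := d) (by omega) le_rfl
    rw [lt_add] at c2
    rw [← List.append_assoc]
    refine c2.append ?_ (List.suffix_append _ _) (hnd.trans (le_rep_length (W_pos _ _) _))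
    rw [← rep_add]; exact cov_per _ _ _ _ _ _

lemma P_U3 (hd : 1 < d) {k n : ℕ} (h1 : 1 ≤ n) (hn : n ≤ 2 * (Q d k^d * (W d k (lt d k)).length)) :
    P d n ≤ (d+1) * (n+1) + T d k + (M d k (d-1)).length := by
  set Z := M d k (d-1) with hZ
  set R := rep (W d k (lt d k)) (Q d k^d + Q d k^d) with hR
  have hRl : n ≤ R.length := by rw [hR, rep_length]; nlinarith
  have hcR : Cov (GG d k n Z R) n R := cov_per _ _ _ _ _ _
  refine P_of_GG (Z := Z) (R := R) h1 fun w hw hl => GG_of_cov hd (hn.trans (v_le_Q k)) ?_ hw hl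
  intro t
  have e : M d k d ++ rep (W d k (lt d k)) (Q d k^d) = Z ++ R := by
    rw [M_d, hR, rep_add]; simp [hZ]
  have key : Chain (GG d k n Z R) n (R ++ rep (Z ++ R) t) R := by
    induction t with
    | zero => simpa using ⟨List.suffix_rfl, hRl, hcR⟩
    | succ t ih =>
      rw [rep_succ', ← List.append_assoc]
      refine ih.append (cov_sp k n Z R hcR _) ?_ hRl
      rw [← List.append_assoc]; exact List.suffix_append _ _
  intro w hw hl
  refine key.2.2 w ((hw.trans (v_infix k t)).trans ?_) hl
  rw [e]
  obtain ⟨s, hs⟩ := rep_suffix (W d k (lt d k)) (show Q d k^d ≤ Q d k^d + Q d k^d by omega)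
  exact ⟨s, [], by rw [hR, ← hs]; simp⟩

lemma T_succ_le (k : ℕ) : T d (k+1) ≤ (W d (k+1) (lt d k)).length + T d k := by
  unfold T tot
  rw [← Finset.add_sum_erase _ _ (Finset.mem_univ (lt d k))]
  refine Nat.add_le_add le_rfl ?_
  calc _ = ∑ x ∈ Finset.univ.erase (lt d k), (W d k x).length := by
        refine Finset.sum_congr rfl fun x hx => ?_
        rw [W_old k (Finset.ne_of_mem_erase hx)]
    _ ≤ _ := Finset.sum_le_sum_of_subset (Finset.erase_subset _ _)

lemma P_upper (hd : 1 < d) {k n : ℕ} (h1 : Q d k ≤ n) (h2 : n ≤ Q d (k+1)) :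
    4^k * P d n ≤ 4^k * ((d+1) * (n+1)) + 2 * n := by
  have hq := Q_two (d := d) k
  have hT : 4^k * T d k ≤ n := by
    refine le_trans ?_ h1
    rw [Q_eq]; exact Nat.mul_le_mul_right _ (Nat.pow_le_pow_right (by norm_num) (by omega))
  have fin : ∀ i, Q d k^(i+1) ≤ n → 4^k * (M d k i).length ≤ n := fun i hi => by
    have := M_len (d := d) k i
    have h4 : 4^k ≤ 4^(k+1) := Nat.pow_le_pow_right (by norm_num) (by omega)
    exact ((Nat.mul_le_mul_right _ h4).trans this).trans hi
  by_cases hA : n < Q d k^d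
  · -- find `i`
    have hex : ∃ i, n ≤ Q d k^(i+2) := ⟨d, hA.le.trans (Nat.pow_le_pow_right (Q_pos k) (by omega))⟩
    classical
    set i := Nat.find hex with hi
    have hi1 : n ≤ Q d k^(i+2) := Nat.find_spec hex
    have hi2 : Q d k^(i+1) ≤ n := by
      rcases Nat.eq_zero_or_pos i with h0 | h0
      · rw [h0]; simpa using h1
      · have := Nat.find_min hex (m := i - 1) (by omega)
        rw [not_le, show i - 1 + 2 = i + 1 by omega] at this
        exact this.le
    have hid : i + 2 ≤ d := by
      by_contra hcon
      have : Q d k^d ≤ Q d k^(i+1) := Nat.pow_le_pow_right (Q_pos k) (by omega)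
      omega
    have hu := P_U2 hd (by omega) hid hi1
    have := fin i hi2
    have := Nat.mul_le_mul_left (4^k) hu
    nlinarith
  · have hMd : 4^k * (M d k (d-1)).length ≤ n := fin (d-1) (by
      rw [show d - 1 + 1 = d by omega]; omega)
    by_cases hB : n ≤ 2 * (Q d k^d * (W d k (lt d k)).length)
    · have hu := P_U3 hd (by omega) hB
      have := Nat.mul_le_mul_left (4^k) hu
      nlinarith
    · have hu := P_U1 hd (by omega) h2
      have h5 := T_succ_le (d := d) k
      have h6 := v_len (d := d) k
      have h7 : P d n ≤ (d+1) * (n+1) + T d k + (M d k (d-1)).length := by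
        have : (d+1) * (n+1) = d * (n+1) + (n+1) := by ring
        omega
      have := Nat.mul_le_mul_left (4^k) h7
      nlinarith

end SS

namespace SS

variable {d : ℕ} [NeZero d]

lemma W_head (k : ℕ) (j : Fin d) : [j] <+: W d k j := W_prefix (Nat.zero_le k) j
lemma W_last (k : ℕ) (j : Fin d) : [j] <:+ W d k j := W_suffix (Nat.zero_le k) j

lemma exists_stage (K : ℕ) (c : Fin d) : ∃ k ≥ K, lt d k = c := by
  obtain ⟨i, _, h⟩ := exists_lt K c
  exact ⟨K + i, by omega, h⟩

lemma infix_mid {α : Type*} {A A' B B' : List α} (h1 : A <:+ A') (h2 : B <+: B') :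
    A ++ B <:+: A' ++ B' := by
  obtain ⟨s, rfl⟩ := h1
  obtain ⟨t, rfl⟩ := h2
  exact ⟨s, t, by simp⟩

lemma Lang_yM (k i : ℕ) (hi : i ≤ d) : Lang d (rep (W d k (lt d k)) (Q d k^d) ++ M d k i) := by
  refine ⟨k+1, lt d k, ?_⟩
  rw [W_new]
  exact infix_mid List.suffix_rfl (M_prefix k hi)

lemma Qd_pos (k i : ℕ) : 1 ≤ Q d k^i := Nat.one_le_iff_ne_zero.2 (pow_pos (Q_pos k) i).ne'

lemma Lang_same (K : ℕ) (c : Fin d) : Lang d (W d K c ++ W d K c) := by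
  obtain ⟨k, hk, rfl⟩ := exists_stage K c
  refine (Lang_yM k d le_rfl).sub ?_
  rw [M_d]
  have h2 : rep (W d k (lt d k)) 2 <+: rep (W d k (lt d k)) (Q d k^d) := by
    refine rep_prefix _ ?_
    have := Q_two (d := d) k
    exact (show 2 ≤ Q d k by omega).trans (Nat.le_self_pow (NeZero.ne d) _)
  rw [rep_succ, rep_one] at h2
  exact ((infix_mid (W_suffix hk _) (W_prefix hk _)).trans h2.isInfix).trans
    (List.prefix_append _ _).isInfix

lemma Lang_next (K : ℕ) (c : Fin d) : Lang d (W d K c ++ W d K (lt d (c+1))) := by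
  obtain ⟨k, hk, rfl⟩ := exists_stage K c
  refine (Lang_yM k 1 (Nat.pos_of_ne_zero (NeZero.ne d))).sub ?_
  rw [lt_lt_succ]
  refine infix_mid ((W_suffix hk _).trans ?_) ((W_prefix hk _).trans ?_)
  · have := rep_suffix (W d k (lt d k)) (Qd_pos (d := d) k d); rwa [rep_one] at this
  · rw [M_succ, M_zero, List.nil_append]
    have := rep_prefix (W d k (lt d (k+(0+1)))) (Qd_pos (d := d) k (0+1)); rwa [rep_one] at this

lemma ext_of_suffix {w A B : List (Fin d)} {c : Fin d} (h : Lang d (A ++ B)) (hw : w <:+ A)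
    (hB : [c] <+: B) : Lang d (w ++ [c]) := h.sub (infix_mid hw hB)

lemma Lang.ext {w : List (Fin d)} (h : Lang d w) : ∃ a, Lang d (w ++ [a]) := by
  obtain ⟨K, j, s, t, h⟩ := h
  obtain ⟨r, hr⟩ := W_head K j
  have h2 := Lang_same K j
  rcases t with _ | ⟨b, t⟩
  · refine ⟨j, ext_of_suffix h2 (A := W d K j) ⟨s, by simpa using h⟩ (W_head K j)⟩
  · exact ⟨b, (Lang_W K j).sub ⟨s, t, by rw [← h]; simp⟩⟩

lemma P_step {n : ℕ} (Sp : Finset (List (Fin d)))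
    (h : ∀ w ∈ Sp, w.length = n ∧ ∃ a b, a ≠ b ∧ Lang d (w ++ [a]) ∧ Lang d (w ++ [b])) :
    P d n + Sp.card ≤ P d (n+1) := by
  classical
  have hex : ∀ w : List (Fin d), ∃ a, Lang d w → Lang d (w ++ [a]) := fun w => by
    by_cases hw : Lang d w
    · obtain ⟨a, ha⟩ := hw.ext; exact ⟨a, fun _ => ha⟩
    · exact ⟨0, fun h => absurd h hw⟩
  choose r hr using hex
  have hex2 : ∀ w : List (Fin d), ∃ a, w ∈ Sp → a ≠ r w ∧ Lang d (w ++ [a]) := fun w => by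
    by_cases hw : w ∈ Sp
    · obtain ⟨_, a, b, hab, ha, hb⟩ := h w hw
      by_cases hc : a = r w
      · exact ⟨b, fun _ => ⟨fun e => hab (hc.trans e.symm), hb⟩⟩
      · exact ⟨a, fun _ => ⟨hc, ha⟩⟩
    · exact ⟨0, fun h => absurd h hw⟩
  choose r2 hr2 using hex2
  set S := {w : List (Fin d) | Lang d w ∧ w.length = n} with hS
  have inj : ∀ f : List (Fin d) → Fin d, Function.Injective (fun w => w ++ [f w]) := by
    intro f a b hab
    exact (List.append_inj' hab rfl).1
  have e1 : ((fun w => w ++ [r w]) '' S).ncard = S.ncard :=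
    Set.ncard_image_of_injective _ (inj r)
  have e2 : ((fun w => w ++ [r2 w]) '' (Sp : Set (List (Fin d)))).ncard = Sp.card := by
    rw [Set.ncard_image_of_injective _ (inj r2), Set.ncard_coe_finset]
  have hfin : {w : List (Fin d) | Lang d w ∧ w.length = n + 1}.Finite :=
    fin_sub (n+1) _ fun w hw => hw.2
  have hfS : S.Finite := fin_sub n _ fun w hw => hw.2
  have hdis : Disjoint ((fun w => w ++ [r w]) '' S) ((fun w => w ++ [r2 w]) '' (Sp : Set (List (Fin d)))) := by
    rw [Set.disjoint_left]
    rintro _ ⟨a, _, rfl⟩ ⟨b, hb, hab⟩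
    have h1 := List.append_inj' hab rfl
    obtain ⟨h2, h3⟩ := h1
    subst h2
    exact (hr2 _ hb).1 (by simpa using h3)
  have e3 := Set.ncard_union_eq hdis (hfS.image _) ((Finset.finite_toSet Sp).image _)
  rw [e1, e2] at e3
  have hP : P d n = S.ncard := rfl
  rw [hP, ← e3]
  refine Set.ncard_le_ncard ?_ hfin
  rintro _ (⟨a, ha, rfl⟩ | ⟨a, ha, rfl⟩)
  · exact ⟨hr a ha.1, by simp [ha.2]⟩
  · exact ⟨(hr2 a ha).2, by simp [(h a ha).1]⟩

/-- `n`-suffix -/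
def sfx {α : Type*} (n : ℕ) (l : List α) : List α := l.drop (l.length - n)
lemma sfx_len {α : Type*} {n : ℕ} {l : List α} (h : n ≤ l.length) : (sfx n l).length = n := by
  simp [sfx]; omega
lemma sfx_suffix {α : Type*} (n : ℕ) (l : List α) : sfx n l <:+ l := List.drop_suffix _ _

lemma suffix_of_le {α : Type*} {a b l : List α} (ha : a <:+ l) (hb : b <:+ l)
    (h : a.length ≤ b.length) : a <:+ b := List.suffix_of_suffix_length_le ha hb h

lemma W_len_n (n K : ℕ) (h : d + n ≤ K) (c : Fin d) : n ≤ (W d K c).length := by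
  have h1 := W_len K c
  have h2 : 4^(d+n) ≤ 4^K := Nat.pow_le_pow_right (by norm_num) h
  rw [pow_add] at h2
  have h3 : 4^n ≤ (W d K c).length := Nat.le_of_mul_le_mul_left (h2.trans h1) (by positivity)
  exact (Nat.lt_pow_self (by norm_num)).le.trans h3

/-- the standard special words -/
def SpN (d : ℕ) [NeZero d] (K n : ℕ) : Finset (List (Fin d)) :=
  Finset.univ.image (fun c : Fin d => sfx n (W d K c))

lemma last_eq {α : Type*} {a b : α} {l : List α} (h1 : [a] <:+ l) (h2 : [b] <:+ l) : a = b := by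
  have := suffix_of_le h1 h2 le_rfl
  simpa using this.eq_of_length rfl

lemma sfx_last {n K : ℕ} (h1 : 1 ≤ n) (h : d + n ≤ K) (c : Fin d) : [c] <:+ sfx n (W d K c) :=
  suffix_of_le (W_last K c) (sfx_suffix _ _) (by rw [sfx_len (W_len_n n K h c)]; simpa)

lemma SpN_card {n K : ℕ} (h1 : 1 ≤ n) (h : d + n ≤ K) : (SpN d K n).card = d := by
  rw [SpN, Finset.card_image_of_injective]
  · simp
  · intro a b hab
    have hab : sfx n (W d K a) = sfx n (W d K b) := hab
    have := sfx_last h1 h a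
    rw [hab] at this
    exact last_eq this (sfx_last h1 h b)

lemma SpN_special (hd : 1 < d) {n K : ℕ} (h : d + n ≤ K) {w : List (Fin d)} (hw : w ∈ SpN d K n) :
    w.length = n ∧ ∃ a b, a ≠ b ∧ Lang d (w ++ [a]) ∧ Lang d (w ++ [b]) := by
  rw [SpN, Finset.mem_image] at hw
  obtain ⟨c, _, rfl⟩ := hw
  refine ⟨sfx_len (W_len_n n K h c), lt d (c+1), c, ?_, ?_, ?_⟩
  · conv_rhs => rw [← lt_self c]
    exact lt_ne one_pos hd
  · exact ext_of_suffix (Lang_next K c) (sfx_suffix _ _) (W_head _ _)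
  · exact ext_of_suffix (Lang_same K c) (sfx_suffix _ _) (W_head _ _)

lemma P_low_step (hd : 1 < d) {n : ℕ} (h1 : 1 ≤ n) : P d n + d ≤ P d (n+1) := by
  have := P_step (SpN d (d+n) n) (fun w hw => SpN_special hd le_rfl hw)
  rwa [SpN_card h1 le_rfl] at this

lemma P_low (hd : 1 < d) (n : ℕ) : d * n ≤ P d (n+1) := by
  induction n with
  | zero => simp
  | succ n ih => have := P_low_step hd (n := n+1) (by omega); rw [Nat.mul_succ]; omega

lemma P_low_step2 (hd : 1 < d) {n k : ℕ} (h1 : Q d k * (W d k (lt d (k+1))).length < n)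
    (h2 : n ≤ Q d k^d) : P d n + (d+1) ≤ P d (n+1) := by
  classical
  set u := W d k (lt d (k+1)) with hu
  set y := W d k (lt d k) with hy
  set K := k + 2 + d + n with hK
  set A := rep y (Q d k^d) ++ rep u (Q d k) with hA
  have hlen : n ≤ A.length := by
    rw [hA, List.length_append]
    exact (h2.trans (le_rep_length (W_pos _ _) _)).trans (Nat.le_add_right _ _)
  set w := sfx n A with hw
  have hwl : w.length = n := sfx_len hlen
  have hu1 := W_pos k (lt d (k+1))
  have hy' : W d (k+1) (lt d (k+1)) = u := W_old k (lt_ne one_pos hd)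
  have hQ' : 2 * Q d k^d ≤ Q d (k+1) := by
    have := v_le_Q (d := d) k; have := W_pos k (lt d k); nlinarith
  have hQd : Q d k ≤ Q d k^d := Nat.le_self_pow (NeZero.ne d) _
  have hQ1 : Q d (k+1) ≤ Q d (k+1)^d := Nat.le_self_pow (NeZero.ne d) _
  have hQ2 := Q_two (d := d) k
  -- suffix comparison
  have hAsub : [lt d k] ++ rep u (Q d k) <:+ A := by
    obtain ⟨s, hs⟩ := (W_last k (lt d k)).trans (by
      have := rep_suffix (W d k (lt d k)) (Qd_pos (d := d) k d); rwa [rep_one] at this :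
        W d k (lt d k) <:+ rep (W d k (lt d k)) (Q d k^d))
    exact ⟨s, by rw [hA, hy, ← hs]; simp⟩
  have hwsub : [lt d k] ++ rep u (Q d k) <:+ w := by
    refine suffix_of_le hAsub (sfx_suffix _ _) ?_
    rw [hwl, List.length_append, rep_length]
    simp only [List.length_singleton]; omega
  have hnot : w ∉ SpN d K n := by
    intro hmem
    rw [SpN, Finset.mem_image] at hmem
    obtain ⟨c, _, hc⟩ := hmem
    have hul : [lt d (k+1)] ++ rep u (Q d k) <:+ rep u (Q d k + 1) := by
      obtain ⟨s, hs⟩ := W_last k (lt d (k+1))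
      exact ⟨s, by rw [rep_succ, hu, ← List.append_assoc, hs]⟩
    have hc1 : c = lt d (k+1) := by
      have a1 := sfx_last (d := d) (n := n) (K := K) (by omega) (by omega) c
      rw [hc] at a1
      have a2 : [lt d (k+1)] <:+ w := by
        refine List.IsSuffix.trans ?_ hwsub
        refine List.IsSuffix.trans ?_ (List.suffix_append _ _)
        refine (W_last k (lt d (k+1))).trans ?_
        have := rep_suffix u (show 1 ≤ Q d k by omega); rwa [rep_one] at this
      exact last_eq a1 a2
    subst hc1
    have hW : rep u (Q d (k+1)^d) <:+ W d K (lt d (k+1)) := by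
      refine List.IsSuffix.trans ?_ (W_suffix (show k+1+1 ≤ K by omega) _)
      rw [W_new, M_d, hy', ← List.append_assoc]
      exact List.suffix_append _ _
    have b1 : w <:+ rep u (Q d (k+1)^d) := by
      refine suffix_of_le (hc ▸ sfx_suffix _ _) hW ?_
      rw [hwl]
      exact (show n ≤ Q d (k+1)^d by omega).trans (le_rep_length hu1 _)
    have b2 := hwsub.trans b1
    have b3 := hul.trans (rep_suffix u (show Q d k + 1 ≤ Q d (k+1)^d by omega))
    have b4 := (suffix_of_le b2 b3 (by simp)).eq_of_length (by simp)
    have b5 := (List.append_inj b4 rfl).1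
    exact lt_ne (d := d) (k := k) one_pos hd (by simpa using b5.symm)
  have e1 : Lang d (w ++ [lt d (k+2)]) := by
    have := Lang_yM (d := d) k 2 hd
    rw [M_succ, M_succ, M_zero, List.nil_append, ← List.append_assoc] at this
    simp only [zero_add, pow_one] at this
    refine ext_of_suffix this (sfx_suffix _ _) ((W_head k _).trans ?_)
    have := rep_prefix (W d k (lt d (k+2))) (Qd_pos (d := d) k 2); rwa [rep_one] at this
  have e2 : Lang d (w ++ [lt d (k+1)]) := by
    have h3 := Lang_yM (d := d) (k+1) d le_rfl
    obtain ⟨m, hm⟩ : ∃ m, d - 1 = m + 1 := ⟨d - 2, by omega⟩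
    have hlt : lt d (k+1+(m+1)) = lt d k := by
      rw [show k+1+(m+1) = k + d by omega, lt_add]
    rw [M_d, hm, M_succ, hlt, hy'] at h3
    have h4 := h3.sub (w' := rep (W d (k+1) (lt d k)) (Q d (k+1)^(m+1)) ++ rep u (Q d (k+1)^d))
      ⟨rep u (Q d (k+1)^d) ++ M d (k+1) m, [], by simp⟩
    have h5 := rep_prefix u (show Q d k + 1 ≤ Q d (k+1)^d by omega)
    rw [rep_succ'] at h5
    have hv : rep y (Q d k^d) <:+ rep (W d (k+1) (lt d k)) (Q d (k+1)^(m+1)) := by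
      have := rep_suffix (W d (k+1) (lt d k)) (Qd_pos (d := d) (k+1) (m+1))
      rw [rep_one] at this
      refine List.IsSuffix.trans ?_ this
      rw [W_new, M_d, ← List.append_assoc]
      exact List.suffix_append _ _
    have h6 := h4.sub (infix_mid hv h5)
    rw [← List.append_assoc] at h6
    exact ext_of_suffix h6 (sfx_suffix _ _) (W_head _ _)
  have := P_step (insert w (SpN d K n)) (n := n) (by
    intro w' hw'
    rcases Finset.mem_insert.1 hw' with rfl | h
    · exact ⟨hwl, lt d (k+2), lt d (k+1), lt_ne (k := k+1) one_pos hd, e1, e2⟩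
    · exact SpN_special hd (by omega) h)
  rwa [Finset.card_insert_of_notMem hnot, SpN_card (by omega) (by omega)] at this

lemma P_low2 (hd : 1 < d) {k m : ℕ}
    (h : Q d k * (W d k (lt d (k+1))).length + 1 + m ≤ Q d k^d + 1) :
    d * (Q d k * (W d k (lt d (k+1))).length) + (d+1) * m ≤
      P d (Q d k * (W d k (lt d (k+1))).length + 1 + m) := by
  induction m with
  | zero => simpa using P_low hd _
  | succ m ih =>
    have h1 := ih (by omega)
    have h2 := P_low_step2 hd (n := Q d k * (W d k (lt d (k+1))).length + 1 + m) (k := k)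
      (by omega) (by omega)
    rw [Nat.mul_succ, ← add_assoc _ m 1]
    omega

/-- lower bound at the special times -/
lemma P_low3 (hd : 1 < d) (k : ℕ) :
    4^k * ((d+1) * Q d k^d) ≤ 4^k * P d (Q d k^d) + Q d k^d + 4^k * (d + 1) := by
  set L := Q d k * (W d k (lt d (k+1))).length with hL
  have h1 : 4^(k+2) * L ≤ Q d k^2 := by
    have := W_le_T k (lt d (k+1))
    calc 4^(k+2) * L ≤ 4^(k+2) * (Q d k * T d k) :=
          Nat.mul_le_mul_left _ (Nat.mul_le_mul_left _ this)
      _ = Q d k^2 := by rw [sq]; nth_rw 3 [Q_eq]; ring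
  have h2 : Q d k^2 ≤ Q d k^d := Nat.pow_le_pow_right (Q_pos k) hd
  have h3 : 4^k * L ≤ Q d k^d := by
    refine le_trans ?_ (h1.trans h2)
    exact Nat.mul_le_mul_right _ (Nat.pow_le_pow_right (by norm_num) (by omega))
  have h4 : L + 1 ≤ Q d k^d := by
    have : 4^2 ≤ 4^(k+2) := Nat.pow_le_pow_right (by norm_num) (by omega)
    have hQ := Qd_pos (d := d) k d
    have h5 := h1.trans h2
    have h6 := Q_two (d := d) k
    nlinarith
  obtain ⟨m, hm⟩ := Nat.exists_eq_add_of_le h4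
  have h5 := P_low2 hd (k := k) (m := m) (by omega)
  rw [← hL, ← hm] at h5
  have h6 := Nat.mul_le_mul_left (4^k) h5
  have h7 : (d+1) * Q d k^d = d * L + (d+1)*m + L + (d+1) := by rw [hm]; ring
  rw [h7]
  nlinarith

end SS

namespace SS

lemma real_le_div {c : NNReal} {p n : ℕ} (hn : 0 < n) (h : (c:ℝ) * n ≤ p) :
    (c : ℝ≥0∞) ≤ (p : ℝ≥0∞) / n := by
  rw [ENNReal.le_div_iff_mul_le (Or.inl (by exact_mod_cast hn.ne')) (Or.inl (by simp))]
  have : c * (n : NNReal) ≤ (p : NNReal) := by exact_mod_cast h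
  exact_mod_cast this

lemma div_le_real {c : NNReal} {p n : ℕ} (hn : 0 < n) (h : (p:ℝ) ≤ c * n) :
    (p : ℝ≥0∞) / n ≤ c := by
  rw [ENNReal.div_le_iff_le_mul (Or.inl (by exact_mod_cast hn.ne')) (Or.inl (by simp))]
  have : (p : NNReal) ≤ c * (n : NNReal) := by exact_mod_cast h
  exact_mod_cast this

variable {d : ℕ} [NeZero d]

lemma Q_tendsto : Tendsto (fun k => Q d k) atTop atTop := by
  refine tendsto_atTop_mono (fun k => ?_) tendsto_id
  have h1 := four_le_Q (d := d) k
  have h2 : k + 2 < 4^(k+2) := Nat.lt_pow_self (by norm_num)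
  simp only [id]; omega

lemma P_stage (hd : 1 < d) {n k0 : ℕ} (hn : Q d k0 ≤ n) : ∃ k ≥ k0, Q d k ≤ n ∧ n ≤ Q d (k+1) := by
  have hex : ∃ k, n ≤ Q d (k+1) := by
    obtain ⟨k, hk⟩ := (Q_tendsto (d := d).eventually_ge_atTop n).exists
    exact ⟨k, hk.trans (Q_mono (by omega))⟩
  classical
  by_cases h0 : n ≤ Q d (k0+1)
  · exact ⟨k0, le_rfl, hn, h0⟩
  · refine ⟨Nat.find hex, ?_, ?_, Nat.find_spec hex⟩
    · by_contra hcon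
      have := Nat.find_spec hex
      exact h0 (this.trans (Q_mono (by omega)))
    · rcases Nat.eq_zero_or_pos (Nat.find hex) with h | h
      · rw [h]; exact (Q_mono (by omega)).trans hn
      · have := Nat.find_min hex (m := Nat.find hex - 1) (by omega)
        rw [show Nat.find hex - 1 + 1 = Nat.find hex by omega] at this
        omega

lemma four_pow_bound (ε : ℝ) (hε : 0 < ε) (c : ℝ) : ∃ k0 : ℕ, ∀ k ≥ k0, c ≤ ε * 4^k := by
  have h : Tendsto (fun k : ℕ => ε * (4:ℝ)^k) atTop atTop :=
    (tendsto_pow_atTop_atTop_of_one_lt (by norm_num)).const_mul_atTop hε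
  obtain ⟨k0, hk⟩ := (h.eventually_ge_atTop c).exists_forall_of_atTop
  exact ⟨k0, hk⟩

lemma Q_ge_four (k : ℕ) : (4:ℝ)^k ≤ Q d k := by
  have h1 := four_le_Q (d := d) k
  have h2 : 4^k ≤ 4^(k+2) := Nat.pow_le_pow_right (by norm_num) (by omega)
  exact_mod_cast h2.trans h1

lemma P_limsup_le (hd : 1 < d) :
    limsup (fun n : ℕ => (P d n : ℝ≥0∞) / (n : ℝ≥0∞)) atTop ≤ (d : ℝ≥0∞) + 1 := by
  refine ENNReal.le_of_forall_pos_le_add fun ε hε _ => ?_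
  refine limsup_le_of_le (by isBoundedDefault) ?_
  obtain ⟨k0, hk0⟩ := four_pow_bound (ε/2) (by positivity) (2 + (d+1))
  filter_upwards [eventually_ge_atTop (Q d k0)] with n hn
  obtain ⟨k, hk, h1, h2⟩ := P_stage hd hn
  have hu := P_upper hd h1 h2
  have hb := hk0 k hk
  have hQ := Q_ge_four (d := d) k
  have hn0 : 0 < n := lt_of_lt_of_le (Q_pos k) h1
  have : ((d:ℝ≥0∞) + 1 + ε) = ((d + 1 + ε : NNReal) : ℝ≥0∞) := by push_cast; rfl
  rw [this]
  apply div_le_real hn0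
  have hu' : (4:ℝ)^k * P d n ≤ 4^k * ((d+1)*(n+1)) + 2 * n := by exact_mod_cast hu
  have h1' : (4:ℝ)^k ≤ n := hQ.trans (by exact_mod_cast h1)
  have h4 : (0:ℝ) < 4^k := by positivity
  have hn' : (0:ℝ) < n := by exact_mod_cast hn0
  push_cast
  have hε' : (0:ℝ) < ε := hε
  refine le_of_mul_le_mul_left (hu'.trans ?_) h4
  have a1 : (2 + ((d:ℝ)+1)) * n ≤ ε/2 * 4^k * n := by gcongr
  have a2 : (4:ℝ)^k * (d+1) ≤ (d+1) * n := by nlinarith [show (0:ℝ) ≤ d by positivity]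
  nlinarith [mul_pos (mul_pos hε' h4) hn']

lemma P_liminf_ge (hd : 1 < d) :
    (d : ℝ≥0∞) ≤ liminf (fun n : ℕ => (P d n : ℝ≥0∞) / (n : ℝ≥0∞)) atTop := by
  refine le_of_forall_lt_imp_le_of_dense fun c hc => ?_
  refine le_liminf_of_le (by isBoundedDefault) ?_
  lift c to NNReal using hc.ne_top
  have hc' : (c:ℝ) < d := by exact_mod_cast hc
  have h : Tendsto (fun n : ℕ => ((d:ℝ) - c) * n) atTop atTop :=
    tendsto_natCast_atTop_atTop.const_mul_atTop (by linarith)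
  filter_upwards [h.eventually_ge_atTop (d:ℝ), eventually_gt_atTop 0] with n hn h0
  apply real_le_div h0
  obtain ⟨m, rfl⟩ : ∃ m, n = m + 1 := ⟨n-1, by omega⟩
  have : (d:ℝ) * m ≤ P d (m+1) := by exact_mod_cast P_low hd m
  push_cast at *
  nlinarith

lemma P_liminf_le (hd : 1 < d) :
    liminf (fun n : ℕ => (P d n : ℝ≥0∞) / (n : ℝ≥0∞)) atTop ≤ (d : ℝ≥0∞) := by
  refine ENNReal.le_of_forall_pos_le_add fun ε hε _ => ?_
  refine liminf_le_of_frequently_le ?_ (by isBoundedDefault)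
  obtain ⟨k0, hk0⟩ := four_pow_bound ε hε (d + 1)
  refine (Q_tendsto (d := d)).frequently (Eventually.frequently ?_)
  filter_upwards [eventually_ge_atTop k0] with k hk
  have hb := hk0 k hk
  have hu := P_U1 hd (k := k) (n := Q d k) (Q_pos k) le_rfl
  have : ((d:ℝ≥0∞) + ε) = ((d + ε : NNReal) : ℝ≥0∞) := by push_cast; rfl
  rw [this]
  apply div_le_real (Q_pos k)
  have hu' : (P d (Q d k) : ℝ) ≤ d * (Q d k + 1) + T d k := by exact_mod_cast hu
  have hq : (Q d k : ℝ) = 4^(k+2) * T d k := by exact_mod_cast Q_eq k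
  have hT : (1:ℝ) ≤ T d k := by exact_mod_cast T_pos k
  push_cast
  have hε' : (0:ℝ) < ε := hε
  have h1 : (d:ℝ) + T d k ≤ ε * Q d k := by
    rw [hq]
    have e : ε * ((4:ℝ)^(k+2) * T d k) = 16 * (ε * 4^k * T d k) := by ring
    rw [e]
    have : ((d:ℝ)+1) * T d k ≤ ε * 4^k * T d k := by gcongr
    nlinarith [show (0:ℝ) ≤ d by positivity]
  nlinarith

lemma P_limsup_ge (hd : 1 < d) :
    (d : ℝ≥0∞) + 1 ≤ limsup (fun n : ℕ => (P d n : ℝ≥0∞) / (n : ℝ≥0∞)) atTop := by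
  refine le_of_forall_lt_imp_le_of_dense fun c hc => ?_
  refine le_limsup_of_frequently_le ?_ (by isBoundedDefault)
  lift c to NNReal using hc.ne_top
  have hc' : (c:ℝ) < d + 1 := by exact_mod_cast hc
  obtain ⟨k0, hk0⟩ := four_pow_bound (d+1-c) (by linarith) (d+2)
  have ht : Tendsto (fun k => Q d k^d) atTop atTop :=
    tendsto_atTop_mono (fun k => Nat.le_self_pow (NeZero.ne d) _) (Q_tendsto (d := d))
  refine ht.frequently (Eventually.frequently ?_)
  filter_upwards [eventually_ge_atTop k0] with k hk
  have hb := hk0 k hk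
  apply real_le_div (Qd_pos k d)
  have hu : (4:ℝ)^k * ((d+1) * (Q d k^d : ℕ)) ≤ 4^k * P d (Q d k^d) + (Q d k^d : ℕ) + 4^k * (d + 1) := by
    exact_mod_cast P_low3 hd k
  have h1 : (4:ℝ)^k ≤ (Q d k^d : ℕ) := (Q_ge_four k).trans (by
    exact_mod_cast Nat.le_self_pow (NeZero.ne d) _)
  have h4 : (0:ℝ) < 4^k := by positivity
  set q : ℝ := ((Q d k^d : ℕ) : ℝ)
  refine le_of_mul_le_mul_left ?_ h4
  have a2 : (4:ℝ)^k * (d+1) ≤ (d+1) * q := by nlinarith [show (0:ℝ) ≤ d by positivity]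
  have a3 : ((d:ℝ)+2) * q ≤ (d+1-c) * 4^k * q := by
    have : 0 ≤ q := by positivity
    gcongr
  nlinarith

end SS

namespace SS

section words
variable {α : Type*}

/-- window of a bi-infinite word -/
def wd (x : ℤ → α) (a : ℤ) (n : ℕ) : List α := List.ofFn (fun t : Fin n => x (a + (t : ℕ)))

@[simp] lemma wd_len (x : ℤ → α) (a : ℤ) (n : ℕ) : (wd x a n).length = n := by simp [wd]
lemma wd_get (x : ℤ → α) (a : ℤ) (n i : ℕ) (h : i < (wd x a n).length) : (wd x a n)[i] = x (a + i) := by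
  simp [wd]
lemma wd_add (x : ℤ → α) (a : ℤ) (m n : ℕ) : wd x a (m+n) = wd x a m ++ wd x (a+m) n := by
  apply List.ext_getElem
  · simp
  · intro i h1 h2
    rw [wd_get, List.getElem_append]
    split_ifs with h
    · rw [wd_get]
    · rw [wd_get]
      congr 1
      simp at h
      simp
      omega
lemma wd_infix (x : ℤ → α) {a b : ℤ} {m n : ℕ} (h1 : a ≤ b) (h2 : b + m ≤ a + n) :
    wd x b m <:+: wd x a n := by
  obtain ⟨p, rfl⟩ := Int.le.dest h1
  obtain ⟨q, rfl⟩ : ∃ q, n = p + (m + q) := ⟨n - p - m, by omega⟩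
  rw [wd_add, wd_add]
  exact ⟨wd x a p, wd x (a+p+m) q, by simp⟩
lemma infix_wd {x : ℤ → α} {a : ℤ} {n : ℕ} {w : List α} (h : w <:+: wd x a n) :
    ∃ b : ℕ, b + w.length ≤ n ∧ w = wd x (a+b) w.length := by
  obtain ⟨s, t, h⟩ := h
  have hl := congrArg List.length h
  simp at hl
  refine ⟨s.length, by omega, ?_⟩
  have h2 : wd x a n = wd x a (s.length) ++ (wd x (a + s.length) w.length ++ wd x (a+s.length+w.length) t.length) := by
    rw [← wd_add, ← wd_add]; congr 1; omega
  rw [h2, List.append_assoc] at h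
  have h3 := (List.append_inj h (by simp)).2
  exact (List.append_inj h3 (by simp)).1
lemma wd_shift (x : ℤ → α) (k a : ℤ) (n : ℕ) : wd (fun m => x (m + k)) a n = wd x (a+k) n := by
  unfold wd
  refine congrArg List.ofFn ?_
  funext t
  show x _ = x _
  rw [add_right_comm]
lemma wd_shift1 (x : ℤ → α) (a : ℤ) (n : ℕ) : wd (shift x) a n = wd x (a+1) n := wd_shift x 1 a n
lemma wd_eq_iff {x y : ℤ → α} {a b : ℤ} {n : ℕ} : wd x a n = wd y b n ↔ ∀ i : ℕ, i < n → x (a+i) = y (b+i) := by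
  constructor
  · intro h i hi
    have h1 : (wd x a n)[i]? = (wd y b n)[i]? := by rw [h]
    rw [List.getElem?_eq_getElem (by simpa), List.getElem?_eq_getElem (by simpa), wd_get, wd_get] at h1
    simpa using h1
  · intro h
    apply List.ext_getElem
    · simp
    · intro i h1 h2
      rw [wd_get, wd_get]; exact h i (by simpa using h1)
end words

variable {d : ℕ} [NeZero d]

/-- the subshift -/
def XS (d : ℕ) [NeZero d] : Set (ℤ → Fin d) := {x | ∀ a n, Lang d (wd x a n)}

/-- a point -/
def xs (d : ℕ) [NeZero d] : ℤ → Fin d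
  | Int.ofNat n => (W d (d+(n+1)) 0).getD n 0
  | Int.negSucc n => (W d (d+(n+1)) 0).reverse.getD n 0

lemma W_getElem? {K K' i : ℕ} (h : i < (W d K 0).length) (h' : i < (W d K' 0).length) :
    (W d K 0)[i]? = (W d K' 0)[i]? := by
  rcases le_total K K' with hk | hk
  · obtain ⟨t, ht⟩ := W_prefix hk (0 : Fin d)
    rw [← ht, List.getElem?_append_left h]
  · obtain ⟨t, ht⟩ := W_prefix hk (0 : Fin d)
    rw [← ht, List.getElem?_append_left h']
lemma W_getElem?_rev {K K' i : ℕ} (h : i < (W d K 0).length) (h' : i < (W d K' 0).length) :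
    (W d K 0).reverse[i]? = (W d K' 0).reverse[i]? := by
  rcases le_total K K' with hk | hk
  · obtain ⟨t, ht⟩ := W_suffix hk (0 : Fin d)
    rw [← ht, List.reverse_append, List.getElem?_append_left (by simpa)]
  · obtain ⟨t, ht⟩ := W_suffix hk (0 : Fin d)
    rw [← ht, List.reverse_append, List.getElem?_append_left (by simpa)]

lemma wd_xs (K : ℕ) : wd (xs d) (-(W d K 0).length) ((W d K 0).length + (W d K 0).length) =
    W d K 0 ++ W d K 0 := by
  rw [wd_add]
  congr 1
  · apply List.ext_getElem
    · simp
    · intro i h1 h2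
      rw [wd_get]
      obtain ⟨m, hm⟩ : ∃ m, (W d K 0).length = i + (m + 1) := ⟨(W d K 0).length - i - 1, by omega⟩
      have : (-((W d K 0).length : ℤ) + i) = Int.negSucc m := by rw [hm, Int.negSucc_eq]; push_cast; ring
      rw [this]
      simp only [xs]
      rw [List.getD_eq_getElem?_getD, W_getElem?_rev (K' := K) (W_len_n (m+1) _ le_rfl 0) (by omega),
        List.getElem?_reverse (by omega), show (W d K 0).length - 1 - m = i by omega,
        List.getElem?_eq_getElem h2]
      rfl
  · rw [neg_add_cancel]
    apply List.ext_getElem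
    · simp
    · intro i h1 h2
      rw [wd_get, zero_add]
      show xs d (Int.ofNat i) = _
      simp only [xs]
      rw [List.getD_eq_getElem?_getD, W_getElem? (K' := K) (W_len_n (i+1) _ le_rfl 0) h2,
        List.getElem?_eq_getElem h2]
      rfl

lemma xs_mem : xs d ∈ XS d := by
  intro a n
  set m := a.natAbs + n with hm
  have hL := W_len_n (d := d) m (d+m) le_rfl 0
  refine (Lang_same (d+m) (0 : Fin d)).sub ?_
  rw [← wd_xs]
  apply wd_infix
  · omega
  · push_cast; omega

lemma xs_contains {w : List (Fin d)} (h : Lang d w) : ∃ a, w = wd (xs d) a w.length := by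
  obtain ⟨K, j, h⟩ := h
  have h1 := (h.trans (W_infix_all (le_refl (K+d)) j 0)).trans (List.prefix_append _ (W d (K+d) 0)).isInfix
  rw [← wd_xs] at h1
  obtain ⟨b, _, hb⟩ := infix_wd h1
  exact ⟨_, hb⟩

lemma complexity_eq (n : ℕ) : complexity (XS d) n = P d n := by
  unfold complexity P
  have h1 := Nat.card_coe_set_eq {w : Fin n → Fin d | ∃ x ∈ XS d, ∃ m : ℤ, ∀ t : Fin n, x (m + (t : ℕ)) = w t}
  refine h1.trans ?_
  rw [← Set.ncard_image_of_injective _ (List.ofFn_injective (n := n))]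
  congr 1
  ext w
  constructor
  · rintro ⟨f, ⟨x, hx, m, h⟩, rfl⟩
    refine ⟨?_, by simp⟩
    have := hx m n
    unfold wd at this
    rwa [show (fun t : Fin n => x (m + (t:ℕ))) = f from funext h] at this
  · rintro ⟨hw, rfl⟩
    obtain ⟨a, ha⟩ := xs_contains hw
    refine ⟨fun t => xs d (a + (t:ℕ)), ⟨xs d, xs_mem, a, fun t => rfl⟩, ?_⟩
    exact ha.symm

lemma clopen_wd (a : ℤ) (n : ℕ) (p : List (Fin d) → Prop) : IsClopen {x : ℤ → Fin d | p (wd x a n)} := by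
  have : {x : ℤ → Fin d | p (wd x a n)} = (fun x : ℤ → Fin d => (fun t : Fin n => x (a + (t:ℕ)))) ⁻¹'
    {f | p (List.ofFn f)} := rfl
  rw [this]
  exact (isClopen_discrete _).preimage (by fun_prop)

lemma XS_closed : IsClosed (XS d) := by
  have : XS d = ⋂ (a : ℤ), ⋂ (n : ℕ), {x | Lang d (wd x a n)} := by
    ext x; simp [XS]
  rw [this]
  exact isClosed_iInter fun a => isClosed_iInter fun n => (clopen_wd a n _).1

lemma XS_shift {x : ℤ → Fin d} (hx : x ∈ XS d) (k : ℤ) : (fun m => x (m + k)) ∈ XS d := by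
  intro a n
  rw [wd_shift]; exact hx _ _

lemma XS_subshift : IsSubshift (XS d) := by
  refine ⟨XS_closed, Set.Subset.antisymm ?_ ?_⟩
  · rintro _ ⟨x, hx, rfl⟩
    exact XS_shift hx 1
  · intro x hx
    refine ⟨fun m => x (m + (-1)), XS_shift hx (-1), ?_⟩
    funext m; simp [shift]

lemma recur (K : ℕ) (j : Fin d) (u : List (Fin d)) (hu : Lang d u) (hl : 2 * T d (K+d) < u.length) :
    W d K j <:+: u := by
  obtain ⟨K', hK', i, h⟩ := hu.at_least (K+d)
  obtain ⟨s, hs⟩ := W_flat hK' i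
  rw [hs] at h
  obtain ⟨p, s', q, rfl, hp, hq, -⟩ := infix_flatMap (W d (K+d)) (T d (K+d)) s
    (fun b _ => W_le_T _ _) u h
  rcases s' with _ | ⟨b, s'⟩
  · simp at hl; omega
  · refine (W_infix_all (le_refl (K+d)) j b).trans ⟨p, s'.flatMap (W d (K+d)) ++ q, by simp⟩

lemma XS_minimal : IsMinimalSubshift (XS d) := by
  refine ⟨XS_subshift, ⟨_, xs_mem⟩, fun x hx => Set.Subset.antisymm ?_ ?_⟩
  · refine closure_minimal ?_ XS_closed
    rintro _ ⟨k, rfl⟩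
    exact XS_shift hx k
  · intro y hy
    have : ∀ N : ℕ, ∃ k : ℤ, ∀ i : ℤ, -N ≤ i → i < N → x (i + k) = y i := by
      intro N
      obtain ⟨K, j, h⟩ := hy (-N) (2*N)
      have h2 := h.trans (recur K j (wd x 0 (2 * T d (K+d) + 1)) (hx _ _) (by simp))
      obtain ⟨b, _, hb⟩ := infix_wd h2
      rw [wd_len, zero_add, wd_eq_iff] at hb
      refine ⟨b + N, fun i h1 h2 => ?_⟩
      have := hb (i+N).toNat (by omega)
      rw [Int.toNat_of_nonneg (by omega)] at this
      rw [show i + ((b:ℤ)+N) = b + (i+N) by ring, ← this]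
      congr 1; ring
    choose k hk using this
    refine mem_closure_of_tendsto (b := atTop) (f := fun N : ℕ => fun m => x (m + k N)) ?_
      (Eventually.of_forall fun N => ⟨k N, rfl⟩)
    rw [tendsto_pi_nhds]
    intro i
    refine tendsto_const_nhds.congr' ?_
    filter_upwards [eventually_gt_atTop i.natAbs] with N hN
    exact (hk N i (by omega) (by omega)).symm

end SS

namespace SS

variable {d : ℕ} [NeZero d]

/-- bounded quasi-additive functionals on words -/
def QA (σ : List (Fin d) → ℝ) (B C : ℝ) : Prop :=
  (∀ w, |σ w| ≤ B * w.length) ∧ ∀ u v, |σ (u ++ v) - σ u - σ v| ≤ C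

/-- average on `W k j` -/
noncomputable def al (σ : List (Fin d) → ℝ) (k : ℕ) (j : Fin d) : ℝ := σ (W d k j) / (W d k j).length

section
variable {σ : List (Fin d) → ℝ} {B C : ℝ}

lemma QA.B_nonneg (h : QA σ B C) : 0 ≤ B := by
  have := (abs_nonneg _).trans (h.1 [0]); simpa using this
lemma QA.C_nonneg (h : QA σ B C) : 0 ≤ C := (abs_nonneg _).trans (h.2 [] [])
lemma QA.nil (h : QA σ B C) : σ [] = 0 := by
  have := h.1 []; simpa using this

lemma QA.flat (h : QA σ B C) {β : Type*} (f : β → List (Fin d)) (s : List β) :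
    |σ (s.flatMap f) - (s.map (fun b => σ (f b))).sum| ≤ C * s.length := by
  induction s with
  | nil => simp [h.nil]
  | cons b s ih =>
    rw [List.flatMap_cons, List.map_cons, List.sum_cons, List.length_cons]
    have := h.2 (f b) (s.flatMap f)
    rw [abs_le] at *
    push_cast
    constructor <;> nlinarith

lemma QA.rep (h : QA σ B C) (u : List (Fin d)) (t : ℕ) : |σ (rep u t) - t * σ u| ≤ C * t := by
  have := h.flat (fun _ : Unit => u) (List.replicate t ())
  rw [← rep_eq_flatMap] at this
  simpa using this

lemma W_pos' (k : ℕ) (j : Fin d) : (0:ℝ) < (W d k j).length := by exact_mod_cast W_pos k j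

lemma QA.al_le (h : QA σ B C) (k : ℕ) (j : Fin d) : |al σ k j| ≤ B := by
  unfold al
  rw [abs_div, abs_of_pos (W_pos' k j), div_le_iff₀ (W_pos' k j)]
  exact h.1 _

lemma QA.sub (h : QA σ B C) {α : ℝ} (hα : |α| ≤ B) : QA (fun w => σ w - α * w.length) (2*B) C := by
  refine ⟨fun w => ?_, fun u v => ?_⟩
  · have h1 := h.1 w
    have h2 : |α * w.length| ≤ B * w.length := by
      rw [abs_mul, Nat.abs_cast]; gcongr
    calc _ ≤ |σ w| + |α * w.length| := abs_sub _ _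
      _ ≤ _ := by linarith
  · have := h.2 u v
    beta_reduce
    rw [List.length_append]; push_cast
    convert this using 2; ring

lemma W_len' (k : ℕ) (j : Fin d) : (4:ℝ)^k ≤ 4^d * (W d k j).length := by exact_mod_cast W_len k j

lemma QA.step (h : QA σ B C) (k : ℕ) (j : Fin d) :
    |al σ (k+1) j - al σ k j| ≤ (3 * C * 4^d + 2 * B) / 4^k := by
  have hC := h.C_nonneg
  have hB := h.B_nonneg
  by_cases hj : j = lt d k
  · subst hj
    set α := al σ k (lt d k) with hα
    have hα1 := h.al_le k (lt d k)
    have hτ := h.sub hα1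
    set τ := fun w => σ w - α * (w.length : ℝ) with hτd
    set y := W d k (lt d k) with hy
    set v := W d (k+1) (lt d k) with hv
    set q := Q d k^d with hq
    set M' := M d k (d-1) with hM
    have hve : v = SS.rep y q ++ (M' ++ SS.rep y q) := by rw [hv, W_new, M_d]
    have hvp : (0:ℝ) < v.length := W_pos' _ _
    have hyp : (0:ℝ) < y.length := W_pos' _ _
    have e1 : al σ (k+1) (lt d k) - α = τ v / v.length := by
      rw [hτd]; beta_reduce; rw [sub_div, mul_div_cancel_right₀ _ hvp.ne']; rfl
    have ty : τ y = 0 := by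
      rw [hτd, hα]; unfold al; rw [← hy]; field_simp; ring
    have t1 := hτ.rep y q
    rw [ty, mul_zero, sub_zero] at t1
    have t2 := hτ.2 (SS.rep y q) (M' ++ SS.rep y q)
    have t3 := hτ.2 M' (SS.rep y q)
    have t4 := hτ.1 M'
    rw [← hve] at t2
    have hq1 : (1:ℝ) ≤ q := by exact_mod_cast Qd_pos k d
    have t5 : |τ v| ≤ 4 * C * q + 2 * B * M'.length := by
      rw [abs_le] at *
      constructor <;> nlinarith
    have hml : (4:ℝ)^(k+1) * M'.length ≤ q := by
      have := M_len (d := d) k (d-1)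
      rw [Nat.sub_add_cancel (Nat.pos_of_ne_zero (NeZero.ne d))] at this
      exact_mod_cast this
    have hvl : (v.length : ℝ) = 2 * (q * y.length) + M'.length := by
      exact_mod_cast v_len (d := d) k
    have hyl := W_len' k (lt d k)
    rw [e1, abs_div, abs_of_pos hvp, div_le_div_iff₀ hvp (by positivity)]
    have h4 : (0:ℝ) < 4^k := by positivity
    have hm0 : (0:ℝ) ≤ M'.length := by positivity
    have hyl1 : (1:ℝ) ≤ y.length := by exact_mod_cast W_pos k (lt d k)
    have hvq : (2:ℝ) * q ≤ v.length := by nlinarith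
    have a1 : 4 * C * q * 4^k ≤ 2 * C * 4^d * v.length := by
      have : (q:ℝ) * 4^k ≤ q * (4^d * y.length) := by gcongr
      have h2 : 2 * (q * 4^k) ≤ 4^d * (v.length:ℝ) := by
        rw [hvl]; nlinarith [show (0:ℝ) < 4^d by positivity]
      nlinarith
    have a2 : 2 * B * M'.length * 4^k ≤ 2 * B * v.length := by
      have : (M'.length : ℝ) * 4^k ≤ v.length := by rw [pow_succ] at hml; nlinarith
      nlinarith
    calc |τ v| * 4^k ≤ (4 * C * q + 2 * B * M'.length) * 4^k := by gcongr
      _ ≤ _ := by nlinarith [show (0:ℝ) ≤ C * 4^d * v.length by positivity]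
  · unfold al
    rw [W_old k hj, sub_self, abs_zero]; positivity

lemma QA.lim (h : QA σ B C) (j : Fin d) : ∃ a, Tendsto (fun k => al σ k j) atTop (nhds a) := by
  apply cauchySeq_tendsto_of_complete
  refine cauchySeq_of_le_geometric (1/4) (3 * C * 4^d + 2 * B) (by norm_num) fun k => ?_
  rw [Real.dist_eq, abs_sub_comm]
  refine (h.step k j).trans (le_of_eq ?_)
  rw [one_div, inv_pow, div_eq_mul_inv]

lemma QA.low (h : QA σ B C) (a : Fin d → ℝ) (ha : ∀ j, Tendsto (fun k => al σ k j) atTop (nhds (a j)))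
    (h0 : ∀ j, 0 ≤ a j) {ε : ℝ} (hε : 0 < ε) :
    ∃ N0 : ℕ, ∀ w, Lang d w → N0 ≤ w.length → -ε * w.length ≤ σ w := by
  have hC := h.C_nonneg
  have hB := h.B_nonneg
  have hk1 : ∀ᶠ k in atTop, ∀ j, -(ε/3) ≤ al σ k j := by
    rw [eventually_all]
    intro j
    exact (ha j).eventually_const_le (by linarith [h0 j])
  obtain ⟨k0, hk0⟩ := four_pow_bound (ε/3) (by positivity) (C * 4^d)
  obtain ⟨k, hk, hkk⟩ := (hk1.and (eventually_ge_atTop k0)).exists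
  have hkC := hk0 k hkk
  obtain ⟨N0, hN0⟩ := exists_nat_ge ((2 * C + 2 * B * T d k) * 3 / ε + T d k * 2)
  refine ⟨N0, fun w hw hl => ?_⟩
  obtain ⟨K, hK, j, hw⟩ := hw.at_least k
  obtain ⟨s0, hs⟩ := W_flat hK j
  rw [hs] at hw
  obtain ⟨p, s, q, rfl, hp, hq, -⟩ := infix_flatMap (W d k) (T d k) s0
    (fun b _ => W_le_T _ _) w hw
  set X := s.flatMap (W d k) with hX
  have hXl : (X.length : ℝ) = (s.map (fun j => ((W d k j).length : ℝ))).sum := by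
    rw [hX, List.length_flatMap, Nat.cast_list_sum, List.map_map]; rfl
  have f1 := h.flat (W d k) s
  rw [← hX] at f1
  have f2 : -(ε/3) * X.length ≤ (s.map (fun b => σ (W d k b))).sum := by
    rw [hXl, ← List.sum_map_mul_left]
    apply List.sum_le_sum
    intro j _
    have := hk j
    unfold al at this
    rwa [le_div_iff₀ (W_pos' k j)] at this
  have f3 : (4:ℝ)^k * s.length ≤ 4^d * X.length := by
    rw [hXl, ← List.sum_map_mul_left]
    have : (4:ℝ)^k * s.length = (s.map (fun _ => (4:ℝ)^k)).sum := by simp [mul_comm]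
    rw [this]
    apply List.sum_le_sum
    intro j _
    exact W_len' k j
  have f4 := h.2 (p ++ X) q
  have f5 := h.2 p X
  have f6 := h.1 p
  have f7 := h.1 q
  have hp' : (p.length : ℝ) ≤ T d k := by exact_mod_cast hp
  have hq' : (q.length : ℝ) ≤ T d k := by exact_mod_cast hq
  have f8 : C * s.length ≤ ε/3 * X.length := by
    have h4 : (0:ℝ) < 4^k := by positivity
    refine le_of_mul_le_mul_left ?_ h4
    calc (4:ℝ)^k * (C * s.length) = C * (4^k * s.length) := by ring
      _ ≤ C * (4^d * X.length) := by gcongr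
      _ = C * 4^d * X.length := by ring
      _ ≤ ε/3 * 4^k * X.length := by gcongr
      _ = _ := by ring
  have hw1 : (((p ++ X ++ q).length : ℕ) : ℝ) = p.length + X.length + q.length := by simp; ring
  have hl' : ((2 * C + 2 * B * T d k) * 3 / ε + T d k * 2) ≤ p.length + X.length + q.length := by
    rw [← hw1]; exact hN0.trans (by exact_mod_cast hl)
  rw [hw1]
  have f9 : 2 * C + 2 * B * T d k ≤ ε/3 * (p.length + X.length + q.length) := by
    have h1 : (2 * C + 2 * B * T d k) * 3 / ε ≤ p.length + X.length + q.length := by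
      have : (0:ℝ) ≤ T d k := by positivity
      linarith
    rw [div_le_iff₀ hε] at h1
    linarith
  have f10 : B * p.length ≤ B * T d k := by gcongr
  have f11 : B * q.length ≤ B * T d k := by gcongr
  have f12 : 0 ≤ ε * p.length := by positivity
  have f13 : 0 ≤ ε * q.length := by positivity
  rw [abs_le] at *
  nlinarith

lemma QA.inrep (h : QA σ B C) {k t : ℕ} {j : Fin d} {w : List (Fin d)} (hw : w <:+: SS.rep (W d k j) t)
    (hl : 2^k * T d k ≤ w.length) :
    2^k * |σ w - al σ k j * w.length| ≤ (2 * C + 4 * B + C * 4^d) * w.length := by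
  have hC := h.C_nonneg
  have hB := h.B_nonneg
  have hτ := h.sub (h.al_le k j)
  set α := al σ k j with hα
  set τ := fun w => σ w - α * (w.length : ℝ) with hτd
  have ty : τ (W d k j) = 0 := by
    have := W_pos' k j
    rw [hτd, hα]; unfold al; field_simp; ring
  have hl' : (2:ℝ)^k * T d k ≤ w.length := by exact_mod_cast hl
  show 2^k * |τ w| ≤ _
  rw [rep_eq_flatMap] at hw
  obtain ⟨p, s, q, rfl, hp, hq, hs⟩ := infix_flatMap (fun j => W d k j) (T d k) _
    (fun b _ => W_le_T _ _) w (by exact hw)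
  set X := s.flatMap (fun j => W d k j) with hX
  have hXl : (X.length : ℝ) = (s.map (fun j => ((W d k j).length : ℝ))).sum := by
    rw [hX, List.length_flatMap, Nat.cast_list_sum, List.map_map]; rfl
  have f1 := hτ.flat (W d k) s
  have f2 : (s.map (fun b => τ (W d k b))).sum = 0 := by
    apply List.sum_eq_zero
    intro r hr
    obtain ⟨b, hb, rfl⟩ := List.mem_map.1 hr
    rw [List.eq_of_mem_replicate (hs hb)]; exact ty
  rw [← hX, f2, sub_zero] at f1
  have f3 : (4:ℝ)^k * s.length ≤ 4^d * X.length := by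
    rw [hXl, ← List.sum_map_mul_left]
    have : (4:ℝ)^k * s.length = (s.map (fun _ => (4:ℝ)^k)).sum := by simp [mul_comm]
    rw [this]
    apply List.sum_le_sum
    intro j _
    exact W_len' k j
  have f4 := hτ.2 (p ++ X) q
  have f5 := hτ.2 p X
  have f6 := hτ.1 p
  have f7 := hτ.1 q
  have hp' : (p.length : ℝ) ≤ T d k := by exact_mod_cast hp
  have hq' : (q.length : ℝ) ≤ T d k := by exact_mod_cast hq
  set L : ℝ := ((p ++ X ++ q).length : ℝ) with hL
  have hw1 : L = p.length + X.length + q.length := by rw [hL]; simp; ring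
  have hT1 : (1:ℝ) ≤ T d k := by exact_mod_cast T_pos (d := d) k
  have h2 : (0:ℝ) < 2^k := by positivity
  have h24 : (2:ℝ)^k ≤ 4^k := pow_le_pow_left₀ (by norm_num) (by norm_num) k
  have g1 : |τ (p ++ X ++ q)| ≤ 2 * C + 4 * B * T d k + C * s.length := by
    have f10 : B * p.length ≤ B * T d k := by gcongr
    have f11 : B * q.length ≤ B * T d k := by gcongr
    rw [abs_le] at *
    constructor <;> linarith
  have g2 : 2^k * (2 * C) ≤ 2 * C * L := by
    have : (2:ℝ)^k ≤ L := le_trans (le_mul_of_one_le_right h2.le hT1) hl'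
    nlinarith
  have g3 : 2^k * (4 * B * T d k) ≤ 4 * B * L := by
    have : 4 * B * (2^k * T d k) ≤ 4 * B * L := by gcongr
    linarith
  have g4 : 2^k * (C * s.length) ≤ C * 4^d * L := by
    have hXL : (X.length : ℝ) ≤ L := by
      rw [hw1]; linarith [show (0:ℝ) ≤ p.length by positivity, show (0:ℝ) ≤ q.length by positivity]
    calc (2:ℝ)^k * (C * s.length) ≤ 4^k * (C * s.length) := by gcongr
      _ = C * (4^k * s.length) := by ring
      _ ≤ C * (4^d * X.length) := by gcongr
      _ ≤ C * (4^d * L) := by gcongr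
      _ = _ := by ring
  calc 2^k * |τ (p ++ X ++ q)| ≤ 2^k * (2 * C + 4 * B * T d k + C * s.length) := by gcongr
    _ ≤ _ := by linarith

lemma wd_prefix' {x : ℤ → Fin d} {n : ℕ} {a b : List (Fin d)} (h : wd x 0 n = a ++ b) :
    a = wd x 0 a.length := by
  have hl : n = a.length + b.length := by rw [← List.length_append, ← h, wd_len]
  rw [hl, wd_add] at h
  exact (List.append_inj_left h (by simp)).symm

lemma gen (hd : 1 < d) {x : ℤ → Fin d} (hx : x ∈ XS d) (k : ℕ) : ∃ (N : ℕ) (j : Fin d), 2^k ≤ N ∧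
    ∀ (σ : List (Fin d) → ℝ) (B C : ℝ), QA σ B C →
      2^k * |σ (wd x 0 N) - al σ k j * N| ≤ (3 * C + 6 * B + C * 4^d) * N := by
  have hT := T_pos (d := d) k
  have h24 : 2^k ≤ 4^k := Nat.pow_le_pow_left (by norm_num) k
  have hk0 : 0 < 2^k := by positivity
  have h44 : 4^(k+2) = 16 * 2^k * 2^k := by
    rw [mul_assoc, ← mul_pow, pow_add]; norm_num; ring
  have hQ : Q d k = 16 * 2^k * (2^k * T d k) := by rw [Q_eq, h44]; ring
  have hQ1 : 16 * (2^k * T d k) ≤ Q d k := by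
    rw [hQ]; exact Nat.mul_le_mul_right _ (by omega)
  have hT2 : 2^k ≤ 2^k * T d k := Nat.le_mul_of_pos_right _ hT
  have hN : (∃ (N : ℕ) (j : Fin d) (t : ℕ), wd x 0 N <:+: SS.rep (W d k j) t ∧ 2^k * T d k ≤ N) ∨
      ∃ (a b : List (Fin d)) (j : Fin d) (t : ℕ), wd x 0 (Q d k) = a ++ b ∧ a.length ≤ 2^k * T d k ∧
        b <:+: SS.rep (W d k j) t := by
    obtain ⟨i, t, h⟩ := (hx 0 (Q d k)).pair hd (k := k) (by simp)
    rcases infix_append_cases h with h | h | ⟨a, b, h, ha, hb⟩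
    · exact Or.inl ⟨_, _, _, h, by omega⟩
    · exact Or.inl ⟨_, _, _, h, by omega⟩
    · by_cases hal : 2^k * T d k ≤ a.length
      · exact Or.inl ⟨_, _, _, by rw [← wd_prefix' h]; exact ha.isInfix, hal⟩
      · exact Or.inr ⟨a, b, _, _, h, by omega, hb.isInfix⟩
  rcases hN with ⟨N, j, t, h, hN⟩ | ⟨a, b, j, t, h, ha, hb⟩
  · refine ⟨N, j, by omega, fun σ B C hs => ?_⟩
    have := hs.inrep h (by rw [wd_len]; exact hN)
    rw [wd_len] at this
    have hC := hs.C_nonneg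
    have hB := hs.B_nonneg
    refine this.trans ?_
    gcongr <;> norm_num
  · have hl : Q d k = a.length + b.length := by rw [← List.length_append, ← h, wd_len]
    refine ⟨Q d k, j, by omega, fun σ B C hs => ?_⟩
    have hC := hs.C_nonneg
    have hB := hs.B_nonneg
    have h1 := hs.inrep hb (by omega)
    have hτ := hs.sub (hs.al_le k j)
    have h2 := hτ.1 a
    have h3 := hτ.2 a b
    beta_reduce at h2 h3
    rw [h]
    have hl' : ((Q d k : ℕ) : ℝ) = a.length + b.length := by exact_mod_cast hl
    rw [List.length_append] at h3
    push_cast at h3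
    rw [← hl'] at h3
    set Z := σ (a ++ b) - al σ k j * (Q d k : ℕ)
    set za := σ a - al σ k j * a.length
    set zb := σ b - al σ k j * b.length
    have h4 : |Z| ≤ C + 2 * B * a.length + |zb| := by
      have : Z = (Z - za - zb) + za + zb := by ring
      calc |Z| = |(Z - za - zb) + za + zb| := by rw [← this]
        _ ≤ |Z - za - zb| + |za| + |zb| := abs_add_three _ _ _
        _ ≤ _ := by linarith
    have hak : (2:ℝ)^k * a.length ≤ Q d k := by
      have : 2^k * a.length ≤ Q d k := by
        calc 2^k * a.length ≤ 2^k * (2^k * T d k) := Nat.mul_le_mul_left _ ha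
          _ ≤ 16 * 2^k * (2^k * T d k) := Nat.mul_le_mul_right _ (by omega)
          _ = _ := hQ.symm
      exact_mod_cast this
    have hk : (2:ℝ)^k ≤ Q d k := by
      have : 2^k ≤ Q d k := by omega
      exact_mod_cast this
    have hbq : (b.length : ℝ) ≤ Q d k := by rw [hl']; linarith [show (0:ℝ) ≤ a.length by positivity]
    have h5 : (2 * C + 4 * B + C * 4^d) * b.length ≤ (2 * C + 4 * B + C * 4^d) * Q d k := by gcongr
    have h6 : C * 2^k ≤ C * Q d k := by gcongr
    have h7 : 2 * B * (2^k * a.length) ≤ 2 * B * Q d k := by gcongr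
    calc (2:ℝ)^k * |Z| ≤ 2^k * (C + 2 * B * a.length + |zb|) := by gcongr
      _ = C * 2^k + 2 * B * (2^k * a.length) + 2^k * |zb| := by ring
      _ ≤ _ := by linarith

end

end SS

namespace SS

variable {d : ℕ} [NeZero d]

/-- sum of `g` over windows of length `m` -/
def sg (m : ℕ) (g : List (Fin d) → ℝ) : List (Fin d) → ℝ
  | [] => 0
  | (a :: u) => (if m ≤ (a :: u).length then g ((a :: u).take m) else 0) + sg m g u

lemma sg_cons (m : ℕ) (g : List (Fin d) → ℝ) (a : Fin d) (u : List (Fin d)) :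
    sg m g (a :: u) = (if m ≤ u.length + 1 then g ((a :: u).take m) else 0) + sg m g u := rfl

lemma sg_bd (m : ℕ) {g : List (Fin d) → ℝ} {B : ℝ} (hg : ∀ w, |g w| ≤ B) (w : List (Fin d)) :
    |sg m g w| ≤ B * w.length := by
  have hB : 0 ≤ B := (abs_nonneg _).trans (hg [])
  induction w with
  | nil => simp [sg]
  | cons a u ih =>
    rw [sg_cons, List.length_cons]; push_cast
    refine (abs_add_le _ _).trans ?_
    have : |if m ≤ u.length + 1 then g ((a :: u).take m) else 0| ≤ B := by
      split_ifs
      · exact hg _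
      · simpa using hB
    linarith

lemma sg_app (m : ℕ) {g : List (Fin d) → ℝ} {B : ℝ} (hg : ∀ w, |g w| ≤ B) (u v : List (Fin d)) :
    |sg m g (u ++ v) - sg m g u - sg m g v| ≤ B * (min u.length m : ℕ) := by
  have hB : 0 ≤ B := (abs_nonneg _).trans (hg [])
  induction u with
  | nil => simp [sg]
  | cons a u ih =>
    rw [List.cons_append, sg_cons, sg_cons, List.length_append, List.length_cons]
    by_cases h : m ≤ u.length + 1
    · rw [if_pos (by omega), if_pos h]
      have e : (a :: (u ++ v)).take m = (a :: u).take m := by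
        rw [← List.cons_append, List.take_append_of_le_length (by simpa using h)]
      rw [e]
      have : (min u.length m : ℕ) ≤ min (u.length + 1) m := by omega
      calc _ = |sg m g (u ++ v) - sg m g u - sg m g v| := by congr 1; ring
        _ ≤ _ := ih
        _ ≤ _ := by gcongr
    · rw [if_neg h]
      have e1 : min u.length m = u.length := by omega
      have e2 : min (u.length + 1) m = u.length + 1 := by omega
      rw [e1] at ih
      rw [e2]; push_cast
      have : |if m ≤ u.length + v.length + 1 then g ((a :: (u ++ v)).take m) else 0| ≤ B := by
        split_ifs
        · exact hg _
        · simpa using hB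
      rw [abs_le] at *
      constructor <;> linarith

lemma sg_QA (m : ℕ) {g : List (Fin d) → ℝ} {B : ℝ} (hg : ∀ w, |g w| ≤ B) :
    QA (sg m g) B (B * m) := by
  have hB : 0 ≤ B := (abs_nonneg _).trans (hg [])
  refine ⟨sg_bd m hg, fun u v => (sg_app m hg u v).trans ?_⟩
  gcongr
  exact min_le_right _ _

lemma shift_iter (x : ℤ → Fin d) (i : ℕ) : shift^[i] x = fun n => x (n + i) := by
  induction i with
  | zero => simp
  | succ i ih =>
    rw [Function.iterate_succ_apply', ih]
    funext n
    show x (n + 1 + i) = _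
    congr 1; push_cast; ring

lemma wd_iter (x : ℤ → Fin d) (i : ℕ) (a : ℤ) (n : ℕ) : wd (shift^[i] x) a n = wd x (a + i) n := by
  rw [shift_iter, wd_shift]

lemma wd_cons (x : ℤ → Fin d) (a : ℤ) (n : ℕ) : wd x a (n+1) = x a :: wd x (a+1) n := by
  rw [add_comm n 1, wd_add]; simp [wd]

lemma sum_close (m : ℕ) {g : List (Fin d) → ℝ} {B : ℝ} (hg : ∀ w, |g w| ≤ B) (x : ℤ → Fin d) (a : ℤ) (n : ℕ) :
    |(∑ i ∈ Finset.range n, g (wd x (a + i) m)) - sg m g (wd x a n)| ≤ B * (min n m : ℕ) := by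
  have hB : 0 ≤ B := (abs_nonneg _).trans (hg [])
  induction n generalizing a with
  | zero => simp [wd, sg]
  | succ n ih =>
    have ih := ih (a+1)
    rw [Finset.sum_range_succ', wd_cons, sg_cons, wd_len]
    have e : ∑ i ∈ Finset.range n, g (wd x (a + ((i+1 : ℕ) : ℤ)) m) = ∑ i ∈ Finset.range n, g (wd x (a + 1 + i) m) := by
      refine Finset.sum_congr rfl fun i _ => ?_
      congr 2; push_cast; ring
    rw [e]
    by_cases h : m ≤ n + 1
    · rw [if_pos h]
      have e : (x a :: wd x (a+1) n).take m = wd x a m := by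
        rw [← wd_cons]
        obtain ⟨r, hr⟩ := Nat.exists_eq_add_of_le h
        rw [hr, wd_add, List.take_append_of_le_length (by simp), List.take_of_length_le (by simp)]
      rw [e]
      have : (min n m : ℕ) ≤ min (n + 1) m := by omega
      calc _ = |(∑ i ∈ Finset.range n, g (wd x (a + 1 + i) m)) - sg m g (wd x (a+1) n)| := by
            congr 1; push_cast; rw [add_zero]; ring
        _ ≤ _ := ih
        _ ≤ _ := by gcongr
    · rw [if_neg h]
      have e1 : min n m = n := by omega
      have e2 : min (n + 1) m = n + 1 := by omega
      rw [e1] at ih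
      rw [e2]; push_cast
      have := hg (wd x (a + 0) m)
      rw [abs_le] at *
      constructor <;> linarith

lemma sum_close' (m : ℕ) {g : List (Fin d) → ℝ} {B : ℝ} (hg : ∀ w, |g w| ≤ B) (x : ℤ → Fin d) (n : ℕ) :
    |(∑ i ∈ Finset.range n, g (wd (shift^[i] x) 0 m)) - sg m g (wd x 0 n)| ≤ B * m := by
  have hB : 0 ≤ B := (abs_nonneg _).trans (hg [])
  simp only [wd_iter]
  refine (sum_close m hg x 0 n).trans ?_
  gcongr
  exact min_le_right _ _

/-- indicator of the one-letter word `j` -/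
def ind (j : Fin d) (w : List (Fin d)) : ℝ := if w = [j] then 1 else 0

lemma ind_bd (j : Fin d) (w : List (Fin d)) : |ind j w| ≤ 1 := by
  unfold ind; split_ifs <;> simp

lemma sg_ind (j : Fin d) (w : List (Fin d)) : sg 1 (ind j) w = w.count j := by
  induction w with
  | nil => simp [sg]
  | cons a u ih =>
    rw [sg_cons, ih, List.count_cons]
    simp [ind]
    ring

lemma count_rep (j : Fin d) (u : List (Fin d)) (t : ℕ) : (rep u t).count j = t * u.count j := by
  simp [rep, List.count_flatten]

lemma freq (k : ℕ) (j : Fin d) :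
    3 * (4:ℝ)^k * ((W d k j).length - (W d k j).count j) ≤ (4^k - 1) * (W d k j).length := by
  induction k generalizing j with
  | zero => simp [W]
  | succ k ih =>
    by_cases hj : j = lt d k
    · subst hj
      have ih := ih (lt d k)
      set y := W d k (lt d k) with hy
      set v := W d (k+1) (lt d k) with hv
      set q := Q d k^d with hq
      set M' := M d k (d-1) with hM
      have hve : v = SS.rep y q ++ (M' ++ SS.rep y q) := by rw [hv, W_new, M_d]
      have hml : (4:ℝ)^(k+1) * M'.length ≤ q := by
        have := M_len (d := d) k (d-1)
        rw [Nat.sub_add_cancel (Nat.pos_of_ne_zero (NeZero.ne d))] at this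
        exact_mod_cast this
      have hvl : (v.length : ℝ) = 2 * (q * y.length) + M'.length := by
        exact_mod_cast v_len (d := d) k
      have hc : 2 * (q * (y.count (lt d k) : ℝ)) ≤ v.count (lt d k) := by
        have : 2 * (q * y.count (lt d k)) ≤ v.count (lt d k) := by
          rw [hve, List.count_append, List.count_append, count_rep]; omega
        exact_mod_cast this
      have hyl1 : (1:ℝ) ≤ y.length := by exact_mod_cast W_pos k (lt d k)
      have hq1 : (1:ℝ) ≤ q := by exact_mod_cast Qd_pos k d
      have h1 : 3 * (4:ℝ)^k * (2 * (q * (y.length - y.count (lt d k)))) ≤ (4^k - 1) * (2 * (q * y.length)) := by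
        have := mul_le_mul_of_nonneg_left ih (show (0:ℝ) ≤ 2 * q by linarith)
        linarith
      have h4 : (1:ℝ) ≤ 4^(k+1) := one_le_pow₀ (by norm_num)
      have hm0 : (0:ℝ) ≤ M'.length := by positivity
      have hqy : (q:ℝ) ≤ q * y.length := le_mul_of_one_le_right (by linarith) hyl1
      have h2 : 3 * (4:ℝ)^(k+1) * (v.length - v.count (lt d k)) ≤ 3 * (4:ℝ)^(k+1) * (2 * (q * (y.length - y.count (lt d k))) + M'.length) := by
        gcongr
        rw [hvl]; linarith
      have h5 : 0 ≤ ((4:ℝ)^(k+1) - 1) * M'.length := mul_nonneg (by linarith) hm0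
      refine h2.trans ?_
      rw [hvl]
      rw [pow_succ] at *
      nlinarith
    · rw [W_old k hj]
      have := ih j
      have hc : ((W d k j).count j : ℝ) ≤ (W d k j).length := by exact_mod_cast List.count_le_length
      have hl : (0:ℝ) ≤ (W d k j).length := by positivity
      rw [pow_succ]
      nlinarith

lemma al_ind (k : ℕ) (j : Fin d) : 2/3 ≤ al (sg 1 (ind j)) k j := by
  unfold al
  rw [le_div_iff₀ (W_pos' k j), sg_ind]
  have h := freq k j
  have h4 : (0:ℝ) < 4^k := by positivity
  have hl : (0:ℝ) ≤ (W d k j).length := by positivity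
  have : (4:ℝ)^k * (3 * ((W d k j).length - (W d k j).count j)) ≤ 4^k * (W d k j).length := by nlinarith
  have := le_of_mul_le_mul_left this h4
  linarith

end SS

namespace SS

variable {d : ℕ} [NeZero d]

lemma cont_wd (g : List (Fin d) → ℝ) (a : ℤ) (m : ℕ) : Continuous fun x : ℤ → Fin d => g (wd x a m) := by
  have h1 : Continuous fun v : Fin m → Fin d => g (List.ofFn v) := continuous_of_discreteTopology
  have h2 : Continuous fun x : ℤ → Fin d => fun t : Fin m => x (a + (t : ℕ)) :=
    continuous_pi fun t => continuous_apply _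
  exact h1.comp h2

lemma cont_shift : Continuous (shift : (ℤ → Fin d) → ℤ → Fin d) :=
  continuous_pi fun n => continuous_apply (n + 1)

lemma cont_int {μ : Measure (ℤ → Fin d)} [IsFiniteMeasure μ] {f : (ℤ → Fin d) → ℝ} (hf : Continuous f) :
    Integrable f μ :=
  (BoundedContinuousFunction.mkOfCompact ⟨f, hf⟩).integrable μ

lemma cont_bdd {f : (ℤ → Fin d) → ℝ} (hf : Continuous f) : ∃ K, ∀ x, |f x| ≤ K :=
  ⟨_, fun x => (BoundedContinuousFunction.mkOfCompact ⟨f, hf⟩).norm_coe_le_norm x⟩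

/-- Birkhoff average -/
noncomputable def av (f : (ℤ → Fin d) → ℝ) (x : ℤ → Fin d) (n : ℕ) : ℝ :=
  (∑ i ∈ Finset.range n, f (shift^[i] x)) / (n : ℝ)

lemma inv_lim {ι : Type*} {l : Filter ι} [l.NeBot] {x : ι → ℤ → Fin d} {n : ι → ℕ} (hn : Tendsto n l atTop)
    {μ : Measure (ℤ → Fin d)} [IsProbabilityMeasure μ]
    (H : ∀ f : (ℤ → Fin d) → ℝ, Continuous f → Tendsto (fun k => av f (x k) (n k)) l (nhds (∫ y, f y ∂μ))) :
    MeasurePreserving shift μ μ := by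
  have hm : Measurable (shift : (ℤ → Fin d) → ℤ → Fin d) := cont_shift.measurable
  refine ⟨hm, ?_⟩
  haveI : IsProbabilityMeasure (μ.map shift) := Measure.isProbabilityMeasure_map hm.aemeasurable
  refine ext_of_forall_integral_eq_of_IsFiniteMeasure fun f => ?_
  rw [integral_map hm.aemeasurable f.continuous.aestronglyMeasurable]
  have h1 := H f f.continuous
  have h2 := H (fun y => f (shift y)) (f.continuous.comp cont_shift)
  have h3 : Tendsto (fun k => av (fun y => f (shift y)) (x k) (n k) - av f (x k) (n k)) l (nhds 0) := by
    have h0 : Tendsto (fun k => 2 * ‖f‖ / (n k : ℝ)) l (nhds 0) :=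
      (tendsto_const_nhds.div_atTop (tendsto_natCast_atTop_atTop)).comp hn
    refine squeeze_zero_norm (fun k => ?_) h0
    unfold av
    rw [← sub_div, ← Finset.sum_sub_distrib]
    have : ∑ i ∈ Finset.range (n k), (f (shift (shift^[i] (x k))) - f (shift^[i] (x k))) =
        f (shift^[n k] (x k)) - f (x k) := by
      have := Finset.sum_range_sub (fun i => f (shift^[i] (x k))) (n k)
      simpa only [Function.iterate_succ_apply', Function.iterate_zero, id] using this
    rw [this, norm_div, Real.norm_natCast]
    gcongr
    calc _ ≤ ‖f (shift^[n k] (x k))‖ + ‖f (x k)‖ := norm_sub_le _ _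
      _ ≤ _ := by linarith [f.norm_coe_le_norm (shift^[n k] (x k)), f.norm_coe_le_norm (x k)]
  have h4 := tendsto_nhds_unique h3 (h2.sub h1)
  linarith

/-- empirical measure -/
noncomputable def emp (x : ℤ → Fin d) (n : ℕ) : Measure (ℤ → Fin d) :=
  (n : ℝ≥0∞)⁻¹ • ∑ i ∈ Finset.range n, Measure.dirac (shift^[i] x)

lemma emp_prob (x : ℤ → Fin d) {n : ℕ} (hn : 0 < n) : IsProbabilityMeasure (emp x n) := by
  constructor
  rw [emp, Measure.smul_apply, Measure.finsetSum_apply]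
  simp only [measure_univ, Finset.sum_const, Finset.card_range, smul_eq_mul, nsmul_eq_mul, mul_one]
  exact ENNReal.inv_mul_cancel (by exact_mod_cast hn.ne') (ENNReal.natCast_ne_top n)

lemma emp_int (x : ℤ → Fin d) (n : ℕ) {f : (ℤ → Fin d) → ℝ} (hf : Continuous f) :
    ∫ y, f y ∂(emp x n) = av f x n := by
  rw [emp, integral_smul_measure, integral_finsetSum_measure (fun i _ => cont_int hf)]
  simp only [integral_dirac, av]
  rw [ENNReal.toReal_inv, ENNReal.toReal_natCast, smul_eq_mul, div_eq_inv_mul]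

lemma exists_lim (x : ℕ → ℤ → Fin d) (n : ℕ → ℕ) (hn : ∀ k, 0 < n k) :
    ∃ μ : Measure (ℤ → Fin d), IsProbabilityMeasure μ ∧ ∀ f : (ℤ → Fin d) → ℝ, Continuous f →
      Tendsto (fun k => av f (x k) (n k)) (hyperfilter ℕ) (nhds (∫ y, f y ∂μ)) := by
  let e : ℕ → ProbabilityMeasure (ℤ → Fin d) := fun k => ⟨emp (x k) (n k), emp_prob _ (hn k)⟩
  have h := ((hyperfilter ℕ).map e).le_nhds_lim
  set p := ((hyperfilter ℕ).map e).lim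
  refine ⟨p, inferInstance, fun f hf => ?_⟩
  have h' : Tendsto e (hyperfilter ℕ) (nhds p) := h
  have := ProbabilityMeasure.tendsto_iff_forall_integral_tendsto.1 h' (BoundedContinuousFunction.mkOfCompact ⟨f, hf⟩)
  refine this.congr fun k => ?_
  exact emp_int _ _ hf

/-- integral of a window function -/
noncomputable def Iw (μ : Measure (ℤ → Fin d)) (m : ℕ) (g : List (Fin d) → ℝ) : ℝ :=
  ∫ x, g (wd x 0 m) ∂μ

lemma iter_pres {μ : Measure (ℤ → Fin d)} (h : MeasurePreserving shift μ μ) (N : ℕ) :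
    MeasurePreserving (shift^[N]) μ μ := h.iterate N

lemma ext_inv {μ ν : Measure (ℤ → Fin d)} [IsProbabilityMeasure μ] [IsProbabilityMeasure ν]
    (hμ : MeasurePreserving shift μ μ) (hν : MeasurePreserving shift ν ν)
    (h : ∀ m g, 1 ≤ m → (∃ B, ∀ w, |g w| ≤ B) → Iw μ m g = Iw ν m g) : μ = ν := by
  classical
  have key : ∀ (m : ℕ) (p : List (Fin d) → Prop), 1 ≤ m → μ {x | p (wd x 0 m)} = ν {x | p (wd x 0 m)} := by
    intro m p hm
    have := h m (fun w => if p w then 1 else 0) hm ⟨1, fun w => by split_ifs <;> simp⟩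
    have hi : ∀ ρ : Measure (ℤ → Fin d), Iw ρ m (fun w => if p w then 1 else 0) = ρ.real {x | p (wd x 0 m)} := by
      intro ρ
      rw [← integral_indicator_one ((clopen_wd 0 m p).isOpen.measurableSet)]
      rfl
    rw [hi, hi] at this
    exact (measureReal_eq_measureReal_iff).1 this
  refine ext_of_generate_finite _ generateFrom_measurableCylinders.symm isPiSystem_measurableCylinders
    (fun s hs => ?_) (by simp)
  rw [mem_measurableCylinders] at hs
  obtain ⟨I, S, hS, rfl⟩ := hs
  obtain ⟨N, hN1, hN⟩ : ∃ N : ℕ, 1 ≤ N ∧ ∀ i ∈ I, -(N:ℤ) ≤ i ∧ i < N := by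
    refine ⟨(∑ i ∈ I, i.natAbs) + 1, by omega, fun i hi => ?_⟩
    have := Finset.single_le_sum (f := fun i : ℤ => i.natAbs) (fun _ _ => Nat.zero_le _) hi
    beta_reduce at this
    omega
  set A : Set (ℤ → Fin d) := cylinder I S
  let p : List (Fin d) → Prop := fun w => ∃ y ∈ A, w = wd y (-(N:ℤ)) (2*N)
  have hA : A = {x | p (wd x (-(N:ℤ)) (2*N))} := by
    ext x
    refine ⟨fun hx => ⟨x, hx, rfl⟩, ?_⟩
    rintro ⟨y, hy, e⟩
    rw [wd_eq_iff] at e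
    rw [mem_cylinder] at hy ⊢
    convert hy using 1
    funext i
    have := hN i i.2
    have e' := e ((i:ℤ) + N).toNat (by omega)
    have e2 : -(N:ℤ) + (((i:ℤ) + N).toNat : ℤ) = i := by omega
    rw [e2] at e'
    exact e'
  have hpre : (shift^[N]) ⁻¹' A = {x | p (wd x 0 (2*N))} := by
    rw [hA]; ext x
    simp only [Set.mem_preimage, Set.mem_ofPred_eq]
    rw [wd_iter]; simp
  have hAm : MeasurableSet A := by rw [hA]; exact (clopen_wd _ _ _).isOpen.measurableSet
  rw [← (iter_pres hμ N).measure_preimage hAm.nullMeasurableSet,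
    ← (iter_pres hν N).measure_preimage hAm.nullMeasurableSet, hpre]
  exact key _ _ (by omega)

/-- averages of the integral -/
lemma Iw_sum {μ : Measure (ℤ → Fin d)} [IsProbabilityMeasure μ] (h : MeasurePreserving shift μ μ)
    (m : ℕ) (g : List (Fin d) → ℝ) (N : ℕ) :
    ∫ x, ∑ i ∈ Finset.range N, g (wd (shift^[i] x) 0 m) ∂μ = N * Iw μ m g := by
  have hc : ∀ i : ℕ, Continuous fun x : ℤ → Fin d => g (wd (shift^[i] x) 0 m) :=
    fun i => (cont_wd g 0 m).comp (cont_shift.iterate i)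
  rw [integral_finsetSum _ (fun i _ => cont_int (hc i))]
  have : ∀ i ∈ Finset.range N, ∫ x, g (wd (shift^[i] x) 0 m) ∂μ = Iw μ m g := by
    intro i _
    have hp := iter_pres h i
    have := integral_map (μ := μ) (φ := shift^[i]) hp.measurable.aemeasurable
      (f := fun x => g (wd x 0 m)) (cont_wd g 0 m).aestronglyMeasurable
    rw [hp.map_eq] at this
    exact this.symm
  rw [Finset.sum_congr rfl this]; simp

end SS

namespace SS

variable {d : ℕ} [NeZero d]

lemma av_close (m : ℕ) {g : List (Fin d) → ℝ} {B : ℝ} (hg : ∀ w, |g w| ≤ B) (x : ℤ → Fin d) (n : ℕ) :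
    |av (fun x => g (wd x 0 m)) x n - sg m g (wd x 0 n) / n| ≤ B * m / n := by
  unfold av
  rw [← sub_div, abs_div, Nat.abs_cast]
  gcongr
  exact sum_close' m hg x n

lemma XS_iter {x : ℤ → Fin d} (hx : x ∈ XS d) (i : ℕ) : shift^[i] x ∈ XS d := by
  rw [shift_iter]; exact XS_shift hx i

lemma exists_mu (j : Fin d) : ∃ μ : Measure (ℤ → Fin d), IsProbabilityMeasure μ ∧ μ (XS d) = 1 ∧
    MeasurePreserving shift μ μ ∧ ∀ m g, (∃ B, ∀ w, |g w| ≤ B) →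
      Tendsto (fun k => al (sg m g) k j) atTop (nhds (Iw μ m g)) := by
  classical
  have hx : ∀ k, ∃ x ∈ XS d, wd x 0 (W d k j).length = W d k j := by
    intro k
    obtain ⟨a, ha⟩ := xs_contains (Lang_W k j)
    refine ⟨fun n => xs d (n + a), XS_shift xs_mem a, ?_⟩
    rw [wd_shift, zero_add]; exact ha.symm
  choose x hxX hxw using hx
  set n : ℕ → ℕ := fun k => (W d k j).length with hn
  have hn0 : ∀ k, 0 < n k := fun k => W_pos k j
  have hn1 : Tendsto n atTop atTop := by
    rw [tendsto_atTop]
    intro b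
    filter_upwards [eventually_ge_atTop (4^d * b)] with k hk
    have h1 := W_len k j
    have h2 : k < 4^k := Nat.lt_pow_self (by norm_num)
    have h3 : 4^d * b ≤ 4^d * n k := hk.trans (h2.le.trans h1)
    exact Nat.le_of_mul_le_mul_left h3 (by positivity)
  have hle : (hyperfilter ℕ : Filter ℕ) ≤ atTop := Nat.hyperfilter_le_atTop
  obtain ⟨μ, hp, H⟩ := exists_lim x n hn0
  refine ⟨μ, hp, ?_, inv_lim (hn1.mono_left hle) H, ?_⟩
  · have hS : ∀ (a : ℤ) (N : ℕ), ∀ᵐ y ∂μ, Lang d (wd y a N) := by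
      intro a N
      set f : (ℤ → Fin d) → ℝ := fun y => if Lang d (wd y a N) then 1 else 0 with hf
      have hfc : Continuous f := cont_wd (fun w => if Lang d w then 1 else 0) a N
      have h1 := H f hfc
      have h2 : ∀ k, av f (x k) (n k) = 1 := by
        intro k
        have : ∀ i ∈ Finset.range (n k), f (shift^[i] (x k)) = 1 := fun i _ =>
          if_pos (XS_iter (hxX k) i a N)
        unfold av
        rw [Finset.sum_congr rfl this]
        have : (n k : ℝ) ≠ 0 := by exact_mod_cast (hn0 k).ne'
        simp [this]
      simp only [h2] at h1
      have h3 := tendsto_nhds_unique h1 tendsto_const_nhds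
      have hms : MeasurableSet {y : ℤ → Fin d | Lang d (wd y a N)} := (clopen_wd _ _ _).isOpen.measurableSet
      have h4 : μ.real {y : ℤ → Fin d | Lang d (wd y a N)} = 1 := by
        rw [← integral_indicator_one hms, ← h3]; rfl
      rw [ae_iff]
      have h5 : μ {y : ℤ → Fin d | Lang d (wd y a N)} = 1 := by
        rw [measureReal_def] at h4
        rwa [ENNReal.toReal_eq_one_iff] at h4
      exact (prob_compl_eq_zero_iff hms).2 h5
    have : ∀ᵐ y ∂μ, y ∈ XS d := by
      have : ∀ᵐ y ∂μ, ∀ (a : ℤ) (N : ℕ), Lang d (wd y a N) := by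
        rw [ae_all_iff]; intro a; rw [ae_all_iff]; intro N; exact hS a N
      exact this
    rw [← prob_compl_eq_zero_iff XS_closed.measurableSet]
    exact this
  · rintro m g ⟨B, hB⟩
    obtain ⟨a, ha⟩ := (sg_QA m hB).lim j
    have h1 := H _ (cont_wd g 0 m)
    have h2 : Tendsto (fun k => av (fun x => g (wd x 0 m)) (x k) (n k) - al (sg m g) k j) (hyperfilter ℕ) (nhds 0) := by
      have h0 : Tendsto (fun k => B * m / (n k : ℝ)) (hyperfilter ℕ) (nhds 0) :=
        (tendsto_const_nhds.div_atTop (tendsto_natCast_atTop_atTop)).comp (hn1.mono_left hle)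
      refine squeeze_zero_norm (fun k => ?_) h0
      have := av_close m hB (x k) (n k)
      rw [hxw] at this
      exact this
    have h3 := tendsto_nhds_unique h2 (h1.sub (ha.mono_left hle))
    have h4 : a = Iw μ m g := by unfold Iw; linarith
    rwa [← h4]

/-- the measures -/
noncomputable def mu (j : Fin d) : Measure (ℤ → Fin d) := (exists_mu j).choose

instance mu_prob (j : Fin d) : IsProbabilityMeasure (mu j) := (exists_mu j).choose_spec.1
lemma mu_X (j : Fin d) : mu j (XS d) = 1 := (exists_mu j).choose_spec.2.1
lemma mu_inv (j : Fin d) : MeasurePreserving shift (mu j) (mu j) := (exists_mu j).choose_spec.2.2.1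
lemma mu_lim (j : Fin d) (m : ℕ) {g : List (Fin d) → ℝ} (hg : ∃ B, ∀ w, |g w| ≤ B) :
    Tendsto (fun k => al (sg m g) k j) atTop (nhds (Iw (mu j) m g)) := (exists_mu j).choose_spec.2.2.2 m g hg

lemma pos_of {ν : Measure (ℤ → Fin d)} [IsProbabilityMeasure ν] (hν : MeasurePreserving shift ν ν)
    (hX : ν (XS d) = 1) (m : ℕ) {g : List (Fin d) → ℝ} (hg : ∃ B, ∀ w, |g w| ≤ B)
    (h : ∀ j, 0 ≤ Iw (mu j) m g) : 0 ≤ Iw ν m g := by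
  obtain ⟨B, hB⟩ := hg
  have hB0 : 0 ≤ B := (abs_nonneg _).trans (hB [])
  have hae : ∀ᵐ x ∂ν, x ∈ XS d := (prob_compl_eq_zero_iff XS_closed.measurableSet).2 hX
  suffices hs : ∀ ε > 0, 0 ≤ Iw ν m g + ε by
    exact le_of_forall_pos_le_add hs
  intro ε hε
  obtain ⟨N0, hN0⟩ := (sg_QA m hB).low _ (fun j => mu_lim j m ⟨B, hB⟩) h (half_pos hε)
  obtain ⟨N1, hN1⟩ := exists_nat_ge (B * m / (ε/2))
  set N := N0 + N1 + 1 with hN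
  have hNp : (0:ℝ) < N := by positivity
  have hNm : B * m ≤ ε/2 * N := by
    rw [div_le_iff₀ (half_pos hε)] at hN1
    have : (N1:ℝ) ≤ N := by rw [hN]; push_cast; linarith [show (0:ℝ) ≤ N0 by positivity]
    nlinarith
  have h1 : ∀ᵐ x ∂ν, -ε * N ≤ ∑ i ∈ Finset.range N, g (wd (shift^[i] x) 0 m) := by
    filter_upwards [hae] with x hx
    have h1 := hN0 (wd x 0 N) (hx 0 N) (by rw [wd_len]; omega)
    rw [wd_len] at h1
    have h2 := abs_le.1 (sum_close' m hB x N)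
    linarith [h2.1]
  have hc : Continuous fun x : ℤ → Fin d => ∑ i ∈ Finset.range N, g (wd (shift^[i] x) 0 m) :=
    continuous_finsetSum _ fun i _ => (cont_wd g 0 m).comp (cont_shift.iterate i)
  have h2 : ∫ x, (-ε * N) ∂ν ≤ ∫ x, ∑ i ∈ Finset.range N, g (wd (shift^[i] x) 0 m) ∂ν :=
    integral_mono_ae (integrable_const _) (cont_int hc) h1
  rw [Iw_sum hν] at h2
  simp only [integral_const, smul_eq_mul, one_mul, probReal_univ] at h2
  have : (-ε) * N ≤ Iw ν m g * N := by linarith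
  have := le_of_mul_le_mul_right this hNp
  linarith

end SS

namespace SS

variable {d : ℕ} [NeZero d]

lemma Iw_sub {μ : Measure (ℤ → Fin d)} [IsProbabilityMeasure μ] (m : ℕ) (g g' : List (Fin d) → ℝ) :
    Iw μ m (fun w => g w - g' w) = Iw μ m g - Iw μ m g' :=
  integral_sub (cont_int (cont_wd g 0 m)) (cont_int (cont_wd g' 0 m))

lemma Iw_lin {μ : Measure (ℤ → Fin d)} [IsProbabilityMeasure μ] (m : ℕ) (c : Fin d → ℝ)
    (g : Fin d → List (Fin d) → ℝ) :
    Iw μ m (fun w => ∑ i, c i * g i w) = ∑ i, c i * Iw μ m (g i) := by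
  unfold Iw
  rw [integral_finsetSum _ fun i _ => (cont_int (cont_wd (g i) 0 m)).const_mul (c i)]
  exact Finset.sum_congr rfl fun i _ => integral_const_mul _ _

lemma Iw_one {μ : Measure (ℤ → Fin d)} [IsProbabilityMeasure μ] (m : ℕ) : Iw μ m (fun _ => 1) = 1 := by
  simp [Iw]

lemma bd_lin (c : Fin d → ℝ) (g : Fin d → List (Fin d) → ℝ) (hg : ∀ i, ∃ B, ∀ w, |g i w| ≤ B) :
    ∃ B, ∀ w, |∑ i, c i * g i w| ≤ B := by
  choose B hB using hg
  refine ⟨∑ i, |c i| * B i, fun w => (Finset.abs_sum_le_sum_abs _ _).trans ?_⟩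
  refine Finset.sum_le_sum fun i _ => ?_
  rw [abs_mul]
  exact mul_le_mul_of_nonneg_left (hB i w) (abs_nonneg _)

/-- letter frequencies -/
noncomputable def Am (d : ℕ) [NeZero d] : Matrix (Fin d) (Fin d) ℝ := fun j i => Iw (mu j) 1 (ind i)

lemma Am_diag (j : Fin d) : 2/3 ≤ Am d j j :=
  ge_of_tendsto' (mu_lim j 1 ⟨1, ind_bd j⟩) fun k => al_ind k j

lemma Am_nonneg (j i : Fin d) : 0 ≤ Am d j i := by
  refine integral_nonneg fun x => ?_
  show 0 ≤ ind i _
  unfold ind; split_ifs <;> norm_num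

lemma Am_sum (j : Fin d) : ∑ i, Am d j i = 1 := by
  have h := Iw_lin (μ := mu j) 1 (fun _ => 1) (fun i => ind i)
  simp only [one_mul] at h
  unfold Am
  rw [← h]
  unfold Iw
  have : ∀ x : ℤ → Fin d, ∑ i, ind i (wd x 0 1) = 1 := by
    intro x; simp [ind, wd]
  simp [this]

lemma Am_det : (Am d).det ≠ 0 := by
  apply det_ne_zero_of_sum_row_lt_diag
  intro j
  have h1 := Am_sum j
  rw [← Finset.add_sum_erase _ _ (Finset.mem_univ j)] at h1
  have h2 := Am_diag j
  have : ∀ i ∈ Finset.univ.erase j, ‖Am d j i‖ = Am d j i := fun i _ => by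
    rw [Real.norm_eq_abs, abs_of_nonneg (Am_nonneg j i)]
  rw [Finset.sum_congr rfl this, Real.norm_eq_abs, abs_of_nonneg (Am_nonneg j j)]
  linarith

/-- dual functions -/
noncomputable def hh (i : Fin d) (w : List (Fin d)) : ℝ := ∑ l, (Am d)⁻¹ l i * ind l (w.take 1)

lemma hh_bd (i : Fin d) : ∃ B, ∀ w, |hh i w| ≤ B :=
  bd_lin (fun l => (Am d)⁻¹ l i) (fun l w => ind l (w.take 1)) fun l => ⟨1, fun _ => ind_bd l _⟩

lemma wd_take (x : ℤ → Fin d) {m : ℕ} (hm : 1 ≤ m) : (wd x 0 m).take 1 = wd x 0 1 := by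
  obtain ⟨r, rfl⟩ := Nat.exists_eq_add_of_le hm
  rw [wd_add, List.take_append_of_le_length (by simp), List.take_of_length_le (by simp)]

lemma hh_m (μ : Measure (ℤ → Fin d)) {m : ℕ} (hm : 1 ≤ m) (i : Fin d) : Iw μ m (hh i) = Iw μ 1 (hh i) := by
  unfold Iw hh
  simp only [wd_take _ hm, wd_take _ le_rfl]

lemma hh_mu (i j : Fin d) : Iw (mu j) 1 (hh i) = if j = i then 1 else 0 := by
  have h := Iw_lin (μ := mu j) 1 (fun l => (Am d)⁻¹ l i) (fun l w => ind l (w.take 1))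
  have h2 : ∀ l, Iw (mu j) 1 (fun w => ind l (w.take 1)) = Am d j l := by
    intro l; unfold Iw Am Iw; simp only [wd_take _ le_rfl]
  simp only [h2] at h
  have h3 : Iw (mu j) 1 (hh i) = ∑ l, Am d j l * (Am d)⁻¹ l i := by
    refine Eq.trans h (Finset.sum_congr rfl fun l _ => mul_comm _ _)
  rw [h3, ← Matrix.mul_apply, Matrix.mul_nonsing_inv _ (isUnit_iff_ne_zero.2 Am_det), Matrix.one_apply]

section
variable {ν : Measure (ℤ → Fin d)} [IsProbabilityMeasure ν] (hν : MeasurePreserving shift ν ν) (hX : ν (XS d) = 1)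

lemma lam_nonneg (hν : MeasurePreserving shift ν ν) (hX : ν (XS d) = 1) (i : Fin d) : 0 ≤ Iw ν 1 (hh i) := by
  refine pos_of hν hX 1 (hh_bd i) fun j => ?_
  rw [hh_mu]; split_ifs <;> norm_num

lemma decomp (hν : MeasurePreserving shift ν ν) (hX : ν (XS d) = 1) {m : ℕ} (hm : 1 ≤ m)
    {g : List (Fin d) → ℝ} (hg : ∃ B, ∀ w, |g w| ≤ B) :
    Iw ν m g = ∑ i, Iw (mu i) m g * Iw ν 1 (hh i) := by
  set s : List (Fin d) → ℝ := fun w => ∑ i, Iw (mu i) m g * hh i w with hs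
  have hsb : ∃ B, ∀ w, |s w| ≤ B := bd_lin _ _ hh_bd
  have e : ∀ ρ : Measure (ℤ → Fin d), IsProbabilityMeasure ρ → Iw ρ m s = ∑ i, Iw (mu i) m g * Iw ρ 1 (hh i) := by
    intro ρ _
    rw [hs, Iw_lin]
    exact Finset.sum_congr rfl fun i _ => by rw [hh_m _ hm]
  have e2 : ∀ j, Iw (mu j) m s = Iw (mu j) m g := by
    intro j
    rw [e _ inferInstance]; simp [hh_mu]
  obtain ⟨B1, h1⟩ := hg
  obtain ⟨B2, h2⟩ := hsb
  have p1 := pos_of hν hX m (g := fun w => g w - s w) ⟨B1 + B2, fun w => (abs_sub _ _).trans (add_le_add (h1 w) (h2 w))⟩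
    (fun j => by rw [Iw_sub, e2, sub_self])
  have p2 := pos_of hν hX m (g := fun w => s w - g w) ⟨B2 + B1, fun w => (abs_sub _ _).trans (add_le_add (h2 w) (h1 w))⟩
    (fun j => by rw [Iw_sub, e2, sub_self])
  rw [Iw_sub] at p1 p2
  rw [← e ν inferInstance]; linarith

lemma lam_sum (hν : MeasurePreserving shift ν ν) (hX : ν (XS d) = 1) : ∑ i, Iw ν 1 (hh i) = 1 := by
  have := decomp hν hX le_rfl (g := fun _ => 1) ⟨1, fun _ => by simp⟩
  simp only [Iw_one, one_mul] at this
  exact this.symm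

lemma eq_mu (hν : MeasurePreserving shift ν ν) (hX : ν (XS d) = 1) (i : Fin d)
    (h : ∀ j, j ≠ i → Iw ν 1 (hh j) = 0) : ν = mu i := by
  have h1 : Iw ν 1 (hh i) = 1 := by
    rw [← lam_sum hν hX, Finset.sum_eq_single i (fun j _ hj => h j hj) (by simp)]
  refine ext_inv hν (mu_inv i) fun m g hm hg => ?_
  rw [decomp hν hX hm hg, Finset.sum_eq_single i (fun j _ hj => by rw [h j hj, mul_zero]) (by simp), h1, mul_one]

end

lemma mu_erg (i : Fin d) : Ergodic shift (mu i) := by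
  apply Ergodic.of_mem_extremePoints
  refine ⟨⟨mu_inv i, inferInstance⟩, ?_⟩
  rintro ν₁ ⟨h1, h1p⟩ ν₂ ⟨h2, h2p⟩ ⟨a, b, ha, hb, hab, e⟩
  have hat : a ≠ ∞ := ne_top_of_le_ne_top ENNReal.one_ne_top (hab ▸ le_self_add)
  have hbt : b ≠ ∞ := ne_top_of_le_ne_top ENNReal.one_ne_top (hab ▸ le_add_self)
  have h0 : mu i (XS d)ᶜ = 0 := (prob_compl_eq_zero_iff XS_closed.measurableSet).2 (mu_X i)
  rw [← e] at h0
  simp only [Measure.add_apply, Measure.smul_apply, smul_eq_mul, add_eq_zero, mul_eq_zero, ha.ne', hb.ne', false_or] at h0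
  have hX1 := (prob_compl_eq_zero_iff XS_closed.measurableSet).1 h0.1
  have hX2 := (prob_compl_eq_zero_iff XS_closed.measurableSet).1 h0.2
  refine eq_mu h1 hX1 i fun j hj => ?_
  have h3 := hh_mu j i
  rw [if_neg hj.symm] at h3
  have h4 : Iw (mu i) 1 (hh j) = a.toReal * Iw ν₁ 1 (hh j) + b.toReal * Iw ν₂ 1 (hh j) := by
    unfold Iw
    have hc := cont_wd (hh j) 0 1
    rw [← e, integral_add_measure ((cont_int hc).smul_measure hat) ((cont_int hc).smul_measure hbt),
      integral_smul_measure, integral_smul_measure]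
    simp
  rw [h3] at h4
  have p1 := lam_nonneg h1 hX1 j
  have p2 := lam_nonneg h2 hX2 j
  have hap := ENNReal.toReal_pos ha.ne' hat
  have hbp := ENNReal.toReal_pos hb.ne' hbt
  nlinarith [mul_nonneg hap.le p1, mul_nonneg hbp.le p2]

lemma mu_inj : Function.Injective (mu : Fin d → Measure (ℤ → Fin d)) := by
  intro i j h
  by_contra hij
  have h1 := hh_mu i i
  rw [h, hh_mu, if_neg (fun e => hij e.symm)] at h1
  simp at h1

lemma erg_eq {ν : Measure (ℤ → Fin d)} (h : IsErgodicMeasureOn (XS d) ν) : ∃ i, ν = mu i := by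
  obtain ⟨hp, hX, he⟩ := h
  have hν := he.toMeasurePreserving
  set lam : Fin d → ℝ := fun i => Iw ν 1 (hh i) with hlam
  have l0 : ∀ i, 0 ≤ lam i := lam_nonneg hν hX
  have l1 : ∑ i, lam i = 1 := lam_sum hν hX
  obtain ⟨i, hi⟩ : ∃ i, lam i ≠ 0 := by
    by_contra hcon
    push Not at hcon
    simp [hcon] at l1
  let ρ : Measure (ℤ → Fin d) := ∑ i, ENNReal.ofReal (lam i) • mu i
  have hρp : IsProbabilityMeasure ρ := by
    constructor
    simp only [ρ, Measure.finsetSum_apply, Measure.smul_apply, measure_univ, smul_eq_mul, mul_one]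
    rw [← ENNReal.ofReal_sum_of_nonneg fun i _ => l0 i, l1, ENNReal.ofReal_one]
  have hsm : Measurable (shift : (ℤ → Fin d) → ℤ → Fin d) := cont_shift.measurable
  have hρ : MeasurePreserving shift ρ ρ := by
    refine ⟨hsm, ?_⟩
    ext s hs
    rw [Measure.map_apply hsm hs]
    simp only [ρ, Measure.finsetSum_apply, Measure.smul_apply]
    refine Finset.sum_congr rfl fun i _ => ?_
    rw [(mu_inv i).measure_preimage hs.nullMeasurableSet]
  have hνρ : ν = ρ := by
    refine ext_inv hν hρ fun m g hm hg => ?_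
    rw [decomp hν hX hm hg]
    unfold Iw
    simp only [ρ]
    rw [integral_finsetSum_measure fun i _ => (cont_int (cont_wd g 0 m)).smul_measure ENNReal.ofReal_ne_top]
    refine Finset.sum_congr rfl fun i _ => ?_
    rw [integral_smul_measure, ENNReal.toReal_ofReal (l0 i), smul_eq_mul, mul_comm]; rfl
  refine ⟨i, ?_⟩
  refine (he.eq_of_absolutelyContinuous (mu_inv i) ?_).symm
  intro s hs
  rw [hνρ] at hs
  simp only [ρ, Measure.finsetSum_apply, Measure.smul_apply, smul_eq_mul] at hs
  rw [Finset.sum_eq_zero_iff] at hs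
  have := hs i (Finset.mem_univ i)
  rw [mul_eq_zero] at this
  rcases this with h | h
  · rw [ENNReal.ofReal_eq_zero] at h
    exact absurd (le_antisymm h (l0 i)) hi
  · exact h

lemma gen_erg (hd : 1 < d) {ν : Measure (ℤ → Fin d)} (h : GenericMeasureOn (XS d) ν) : Ergodic shift ν := by
  obtain ⟨hp, hX, x, hx, hg⟩ := h
  have hν : MeasurePreserving shift ν ν := inv_lim (l := atTop) (x := fun _ => x) (n := id) tendsto_id hg
  choose N j hN hj using fun k => gen hd hx k
  obtain ⟨i, hi⟩ : ∃ i, ∃ᶠ k in atTop, j k = i := by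
    by_contra hcon
    push Not at hcon
    have : ∀ᶠ k in atTop, ∀ i, j k ≠ i := by
      rw [eventually_all]; intro i; exact hcon i
    obtain ⟨k, hk⟩ := this.exists
    exact hk _ rfl
  suffices ν = mu i by rw [this]; exact mu_erg i
  refine ext_inv hν (mu_inv i) fun m g hm hgb => ?_
  obtain ⟨B, hB⟩ := hgb
  have hq := sg_QA m hB
  have hNt : Tendsto N atTop atTop := by
    refine tendsto_atTop_mono (fun k => ?_) tendsto_id
    exact (Nat.lt_pow_self (by norm_num : 1 < 2)).le.trans (hN k)
  have h1 : Tendsto (fun k => av (fun x => g (wd x 0 m)) x (N k)) atTop (nhds (Iw ν m g)) :=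
    (hg _ (cont_wd g 0 m)).comp hNt
  have h2 := mu_lim i m ⟨B, hB⟩
  set E := 3 * (B * m) + 6 * B + (B * m) * 4^d
  have h3 : Tendsto (fun k => B * m / (N k : ℝ) + E * (1/2:ℝ)^k) atTop (nhds 0) := by
    have a1 : Tendsto (fun k => B * m / (N k : ℝ)) atTop (nhds 0) :=
      (tendsto_const_nhds.div_atTop (tendsto_natCast_atTop_atTop)).comp hNt
    have a2 : Tendsto (fun k => E * (1/2:ℝ)^k) atTop (nhds (E * 0)) :=
      (tendsto_pow_atTop_nhds_zero_of_lt_one (by norm_num) (by norm_num)).const_mul E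
    simpa using a1.add a2
  have h4 : ∀ k, |av (fun x => g (wd x 0 m)) x (N k) - al (sg m g) k (j k)| ≤ B * m / (N k : ℝ) + E * (1/2:ℝ)^k := by
    intro k
    have b1 := av_close m hB x (N k)
    have b2 := hj k _ _ _ hq
    have hNp : (0:ℝ) < N k := by
      have : 0 < N k := lt_of_lt_of_le (by positivity) (hN k)
      exact_mod_cast this
    have b3 : |sg m g (wd x 0 (N k)) / (N k) - al (sg m g) k (j k)| ≤ E * (1/2:ℝ)^k := by
      have : sg m g (wd x 0 (N k)) / (N k) - al (sg m g) k (j k) =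
          (sg m g (wd x 0 (N k)) - al (sg m g) k (j k) * N k) / N k := by field_simp
      rw [this, abs_div, abs_of_pos hNp, div_le_iff₀ hNp]
      have h2k : (0:ℝ) < 2^k := by positivity
      refine le_of_mul_le_mul_left (b2.trans (le_of_eq ?_)) h2k
      rw [one_div, inv_pow]; simp only [E]; field_simp
    calc _ ≤ _ := abs_sub_le _ (sg m g (wd x 0 (N k)) / (N k)) _
      _ ≤ _ := add_le_add b1 b3
  have h5 : Tendsto (fun k => av (fun x => g (wd x 0 m)) x (N k) - al (sg m g) k (j k)) atTop (nhds 0) :=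
    squeeze_zero_norm h4 h3
  have h6 : Tendsto (fun k => al (sg m g) k (j k)) atTop (nhds (Iw ν m g)) := by
    simpa using h1.sub h5
  have h7 := (h6.sub h2)
  by_contra hne
  have h8 : ∀ᶠ k in atTop, al (sg m g) k (j k) - al (sg m g) k i ≠ 0 :=
    h7.eventually_ne (sub_ne_zero.2 hne)
  obtain ⟨k, hk1, hk2⟩ := (hi.and_eventually h8).exists
  rw [hk1, sub_self] at hk2
  exact hk2 rfl

end SS

/-- Sharpness: for every `d > 1` there is a minimal subshift with exactly `d` ergodic
measures, no nonergodic generic measures, `liminf P_X(n)/n = d` and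
`limsup P_X(n)/n = d + 1`. -/
theorem exists_minimal_subshift_sharp (d : ℕ) (hd : 1 < d) :
    ∃ X : Set (ℤ → Fin d), IsMinimalSubshift X ∧
      (∃ μs : Fin d → Measure (ℤ → Fin d), Function.Injective μs ∧
        (∀ i, IsErgodicMeasureOn X (μs i)) ∧
        ∀ ν : Measure (ℤ → Fin d), IsErgodicMeasureOn X ν → ∃ i, ν = μs i) ∧
      (∀ ν : Measure (ℤ → Fin d), GenericMeasureOn X ν → Ergodic shift ν) ∧
      liminf (fun n : ℕ => (complexity X n : ℝ≥0∞) / (n : ℝ≥0∞)) atTop = (d : ℝ≥0∞) ∧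
      limsup (fun n : ℕ => (complexity X n : ℝ≥0∞) / (n : ℝ≥0∞)) atTop = (d : ℝ≥0∞) + 1 := by
  have : NeZero d := ⟨by omega⟩
  refine ⟨SS.XS d, SS.XS_minimal, ⟨SS.mu, SS.mu_inj, fun i => ⟨inferInstance, SS.mu_X i, SS.mu_erg i⟩,
    fun ν h => SS.erg_eq h⟩, fun ν h => SS.gen_erg hd h, ?_, ?_⟩
  · simp only [SS.complexity_eq]
    exact le_antisymm (SS.P_liminf_le hd) (SS.P_liminf_ge hd)
  · simp only [SS.complexity_eq]
    exact le_antisymm (SS.P_limsup_le hd) (SS.P_limsup_ge hd)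
end

section
/- Let (p_n) be a sequence of real numbers with liminf_{n→∞} p_n/n = ∞. Then there exists a subshift (X, σ) with infinitely many nonatomic ergodic measures such that P_X(n) ≤ p_n for all but finitely many n. -/
open MeasureTheory Filter
open scoped ENNReal

noncomputable def sg (α t : ℝ) : Fin 2 := if Int.fract t < α then 1 else 0

lemma sg_floor {α : ℝ} (h0 : 0 < α) (h1 : α < 1) (t : ℝ) :
    ⌊t⌋ - ⌊t - α⌋ = ((sg α t : ℕ) : ℤ) := by
  unfold sg
  have hf := Int.floor_add_fract t
  have hn := Int.fract_nonneg t
  have hl := Int.fract_lt_one t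
  split_ifs with h
  · have : ⌊t - α⌋ = ⌊t⌋ - 1 := by
      rw [Int.floor_eq_iff]; push_cast; constructor <;> linarith
    rw [this]; simp
  · have : ⌊t - α⌋ = ⌊t⌋ := by
      rw [Int.floor_eq_iff]; constructor <;> linarith
    rw [this]; simp

lemma sg_add_int (α t : ℝ) (m : ℤ) : sg α (t + m) = sg α t := by
  simp [sg]

noncomputable def wd (α : ℝ) (n : ℕ) (t : ℝ) : Fin n → Fin 2 := fun i => sg α (t + (i : ℕ) * α)

lemma wd_ncard {α : ℝ} (h0 : 0 < α) (h1 : α < 1) (n : ℕ) :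
    (Set.range (wd α n)).ncard ≤ n + 2 := by
  let S : ℝ → ℤ := fun t => ∑ i ∈ Finset.range (n + 1), ⌊t + i * α - α⌋
  have key : ∀ s t : ℝ, s ≤ t → S s = S t → wd α n s = wd α n t := by
    intro s t hst hS
    have hle : ∀ i ∈ Finset.range (n + 1), ⌊s + i * α - α⌋ ≤ ⌊t + i * α - α⌋ :=
      fun i _ => Int.floor_le_floor (by linarith)
    have heq := (Finset.sum_eq_sum_iff_of_le hle).1 hS
    funext i
    have e1 := heq i (Finset.mem_range.2 (by omega))
    have e2 := heq (i + 1) (Finset.mem_range.2 (by omega))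
    have a1 := sg_floor h0 h1 (s + (i : ℕ) * α)
    have a2 := sg_floor h0 h1 (t + (i : ℕ) * α)
    have r1 : s + ((i : ℕ) + 1 : ℕ) * α - α = s + (i : ℕ) * α := by push_cast; ring
    have r2 : t + ((i : ℕ) + 1 : ℕ) * α - α = t + (i : ℕ) * α := by push_cast; ring
    rw [r1, r2] at e2
    unfold wd
    apply Fin.ext
    omega
  have hfac : Function.FactorsThrough (wd α n) S := by
    intro s t h
    rcases le_total s t with h' | h'
    · exact key s t h' h
    · exact (key t s h' h.symm).symm
  obtain ⟨e, he⟩ := (Function.factorsThrough_iff _).1 hfac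
  have hsub : Set.range (wd α n) ⊆ e '' (Set.Icc (S 0) (S 0 + (n + 1))) := by
    rintro _ ⟨t, rfl⟩
    refine ⟨S (Int.fract t), ⟨?_, ?_⟩, ?_⟩
    · exact Finset.sum_le_sum fun i _ => Int.floor_le_floor (by linarith [Int.fract_nonneg t])
    · have : S 1 = S 0 + (n + 1) := by
        have : ∀ i ∈ Finset.range (n + 1), ⌊(1 : ℝ) + i * α - α⌋ = ⌊(0 : ℝ) + i * α - α⌋ + 1 := by
          intro i _
          rw [← Int.floor_add_one]; congr 1; ring
        simp only [S]
        rw [Finset.sum_congr rfl this, Finset.sum_add_distrib]; simp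
      rw [← this]
      exact Finset.sum_le_sum fun i _ => Int.floor_le_floor (by linarith [Int.fract_lt_one t])
    · have := congrFun he (Int.fract t)
      rw [Function.comp_apply] at this
      rw [← this]
      funext i
      have h2 : t + (i : ℕ) * α = (Int.fract t + (i : ℕ) * α) + (⌊t⌋ : ℤ) := by
        linarith [Int.floor_add_fract t]
      unfold wd
      rw [h2, sg_add_int]
  calc _ ≤ (e '' (Set.Icc (S 0) (S 0 + (n + 1)))).ncard :=
        Set.ncard_le_ncard hsub ((Set.finite_Icc _ _).image _)
    _ ≤ (Set.Icc (S 0) (S 0 + (n + 1))).ncard := Set.ncard_image_le (Set.finite_Icc _ _)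
    _ = n + 2 := by
        rw [← Finset.coe_Icc, Set.ncard_coe_finset, Int.card_Icc]; omega

def sparse (n : ℕ) : Set (Fin n → Fin 2) :=
  insert 0 (Set.range fun i : Fin n => Pi.single i 1)

lemma sparse_ncard (n : ℕ) : (sparse n).ncard ≤ n + 2 := by
  have h := Set.ncard_insert_le (0 : Fin n → Fin 2)
    (Set.range fun i : Fin n => (Pi.single i 1 : Fin n → Fin 2))
  have h2 : (Set.range fun i : Fin n => (Pi.single i 1 : Fin n → Fin 2)).ncard ≤ n := by
    rw [← Set.image_univ]
    refine (Set.ncard_image_le Set.finite_univ).trans ?_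
    simp [Set.ncard_univ]
  unfold sparse; omega

lemma sg_gap {α : ℝ} (h0 : 0 < α) (t : ℝ) {n i j : ℕ} (hn : n * α ≤ 1)
    (hij : i < j) (hj : j < n) (hi1 : sg α (t + i * α) = 1) (hj1 : sg α (t + j * α) = 1) :
    False := by
  have hi : Int.fract (t + i * α) < α := by
    by_contra h; simp [sg, h] at hi1
  have hj' : Int.fract (t + j * α) < α := by
    by_contra h; simp [sg, h] at hj1
  have e1 := Int.floor_add_fract (t + i * α)
  have e2 := Int.floor_add_fract (t + j * α)
  have n1 := Int.fract_nonneg (t + i * α)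
  have n2 := Int.fract_nonneg (t + j * α)
  have c1 : (i : ℝ) + 1 ≤ j := by exact_mod_cast hij
  have c2 : (j : ℝ) + 1 ≤ n := by exact_mod_cast hj
  have c3 : (0 : ℝ) ≤ i := by positivity
  rcases le_or_gt ⌊t + j * α⌋ ⌊t + i * α⌋ with h | h
  · have h' : (⌊t + j * α⌋ : ℝ) ≤ ⌊t + i * α⌋ := by exact_mod_cast h
    nlinarith
  · have h' : (⌊t + i * α⌋ : ℝ) + 1 ≤ ⌊t + j * α⌋ := by exact_mod_cast h
    nlinarith

lemma wd_sparse {α : ℝ} (h0 : 0 < α) {n : ℕ} (hn : n * α ≤ 1) (t : ℝ) :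
    wd α n t ∈ sparse n := by
  have f2 : ∀ a : Fin 2, a ≠ 1 → a = 0 := by decide
  by_cases h : ∃ i, wd α n t i = 1
  · obtain ⟨i, hi⟩ := h
    right
    refine ⟨i, ?_⟩
    funext j
    rcases eq_or_ne j i with rfl | hne
    · simp [hi]
    · simp only [Pi.single_apply, hne, if_false]
      symm
      apply f2
      intro hj
      rcases lt_or_gt_of_ne hne with h | h
      · exact sg_gap h0 t hn (Fin.lt_def.1 h) i.2 hj hi
      · exact sg_gap h0 t hn (Fin.lt_def.1 h) j.2 hi hj
  · left
    push Not at h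
    funext i
    exact f2 _ (h i)

noncomputable def cd (α : ℝ) (θ : UnitAddCircle) : ℤ → Fin 2 := fun n =>
  if ((AddCircle.measurableEquivIco 1 0 (θ + n • (α : UnitAddCircle)) : Set.Ico (0:ℝ) (0 + 1)) : ℝ) < α
  then 1 else 0

lemma cd_coe (α t : ℝ) (n : ℤ) : cd α (t : UnitAddCircle) n = sg α (t + n * α) := by
  have : (t : UnitAddCircle) + n • (α : UnitAddCircle) = ((t + n * α : ℝ) : UnitAddCircle) := by
    rw [AddCircle.coe_add, ← zsmul_eq_mul, AddCircle.coe_zsmul]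
  unfold cd sg
  rw [this]
  have h := AddCircle.coe_equivIco_mk_apply (1 : ℝ) (t + n * α)
  simp only [div_one, mul_one] at h
  have h' : ((AddCircle.measurableEquivIco 1 0 ((t + n * α : ℝ) : UnitAddCircle) :
    Set.Ico (0:ℝ) (0 + 1)) : ℝ) = Int.fract (t + n * α) := h
  rw [h']

lemma cd_measurable (α : ℝ) : Measurable (cd α) := by
  refine measurable_pi_iff.2 fun n => ?_
  refine Measurable.ite ?_ measurable_const measurable_const
  refine measurableSet_lt ?_ measurable_const
  exact measurable_subtype_coe.comp
    ((AddCircle.measurableEquivIco 1 0).measurable.comp (measurable_id.add_const _))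

lemma cd_shift (α : ℝ) (θ : UnitAddCircle) : cd α ((α : UnitAddCircle) + θ) = shift (cd α θ) := by
  funext n
  unfold shift cd
  have : (α : UnitAddCircle) + θ + n • (α : UnitAddCircle) = θ + (n + 1) • (α : UnitAddCircle) := by
    rw [add_smul, one_smul]; abel
  rw [this]

lemma cd_inj {α : ℝ} (h0 : 0 < α) (h1 : α < 1) (hα : Irrational α) :
    Function.Injective (cd α) := by
  have key : ∀ s t : ℝ, 0 ≤ s → s < t → t < 1 → cd α s = cd α t → False := by
    intro s t hs hst ht h
    have hD : ∀ n : ℤ, ⌊t + n * α⌋ - ⌊s + n * α⌋ = ⌊t + (n - 1 : ℤ) * α⌋ - ⌊s + (n - 1 : ℤ) * α⌋ := by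
      intro n
      have e := congrFun h n
      rw [cd_coe, cd_coe] at e
      have a1 := sg_floor h0 h1 (s + n * α)
      have a2 := sg_floor h0 h1 (t + n * α)
      have r1 : s + n * α - α = s + (n - 1 : ℤ) * α := by push_cast; ring
      have r2 : t + n * α - α = t + (n - 1 : ℤ) * α := by push_cast; ring
      rw [r1] at a1
      rw [r2] at a2
      rw [e] at a1
      omega
    have hz : ∀ n : ℤ, ⌊t + n * α⌋ - ⌊s + n * α⌋ = 0 := by
      intro n
      induction n using Int.induction_on with
      | zero =>
        have e1 : ⌊t⌋ = 0 := Int.floor_eq_zero_iff.2 ⟨by linarith, ht⟩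
        have e2 : ⌊s⌋ = 0 := Int.floor_eq_zero_iff.2 ⟨hs, by linarith⟩
        simp [e1, e2]
      | succ i ih =>
        rw [hD]; simpa using ih
      | pred i ih =>
        rw [← hD]; exact ih
    have hd : Dense (AddSubgroup.closure {α, 1} : Set ℝ) :=
      dense_addSubgroupClosure_pair_iff.2 (by simpa using hα)
    obtain ⟨x, hx, hx1⟩ := hd.exists_mem_open isOpen_Ioo (Set.nonempty_Ioo.2 (neg_lt_neg hst))
    obtain ⟨n, m, rfl⟩ := AddSubgroup.mem_closure_pair.1 hx
    simp only [zsmul_eq_mul, mul_one] at hx1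
    obtain ⟨hx1, hx2⟩ := hx1
    have := hz n
    have b1 : -m ≤ ⌊t + n * α⌋ := Int.le_floor.2 (by push_cast; linarith)
    have b2 : ⌊s + n * α⌋ < -m := Int.floor_lt.2 (by push_cast; linarith)
    omega
  have rep : ∀ θ : UnitAddCircle, ∃ s : ℝ, 0 ≤ s ∧ s < 1 ∧ (s : UnitAddCircle) = θ := by
    intro θ
    obtain ⟨x, rfl⟩ := QuotientAddGroup.mk_surjective θ
    refine ⟨Int.fract x, Int.fract_nonneg x, Int.fract_lt_one x, ?_⟩
    have : x = Int.fract x + ⌊x⌋ • (1 : ℝ) := by simp [Int.fract_add_floor]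
    conv_rhs => rw [this]
    simp only [AddCircle.coe_add, AddCircle.coe_zsmul, AddCircle.coe_period, smul_zero, add_zero]
  intro a b hab
  obtain ⟨s, hs0, hs1, rfl⟩ := rep a
  obtain ⟨t, ht0, ht1, rfl⟩ := rep b
  rcases lt_trichotomy s t with h | h | h
  · exact (key s t hs0 h ht1 hab).elim
  · rw [h]
  · exact (key t s ht0 h hs1 hab.symm).elim

noncomputable def ms (α : ℝ) : Measure (ℤ → Fin 2) := (volume : Measure UnitAddCircle).map (cd α)

lemma ms_cyl {α : ℝ} (h0 : 0 < α) (h1 : α < 1) :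
    ms α {x | x 0 = 1} = ENNReal.ofReal α := by
  have hm : MeasurableSet {x : ℤ → Fin 2 | x 0 = 1} :=
    measurableSet_eq_fun (measurable_pi_apply (0 : ℤ)) measurable_const
  rw [ms, Measure.map_apply (cd_measurable α) hm,
    AddCircle.add_projection_respects_measure 1 0 (cd_measurable α hm)]
  have : ((QuotientAddGroup.mk : ℝ → UnitAddCircle) ⁻¹' (cd α ⁻¹' {x | x 0 = 1})) ∩ Set.Ioc 0 (0 + 1)
      = Set.Ioo 0 α ∪ {1} := by
    ext t
    have e : cd α (QuotientAddGroup.mk t) 0 = sg α t := by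
      have := cd_coe α t 0
      simpa using this
    simp only [Set.mem_inter_iff, Set.mem_preimage, Set.mem_setOf_eq, e, Set.mem_Ioc, zero_add,
      Set.mem_union, Set.mem_Ioo, Set.mem_singleton_iff]
    have e2 : sg α t = 1 ↔ Int.fract t < α := by
      unfold sg; split_ifs with h <;> simp [h]
    rw [e2]
    constructor
    · rintro ⟨h, h2, h3⟩
      rcases h3.lt_or_eq with h4 | h4
      · left
        rw [Int.fract_eq_self.2 ⟨h2.le, h4⟩] at h
        exact ⟨h2, h⟩
      · exact Or.inr h4
    · rintro (⟨h2, h3⟩ | rfl)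
      · rw [Int.fract_eq_self.2 ⟨h2.le, h3.trans h1⟩]
        exact ⟨h3, h2, (h3.trans h1).le⟩
      · simp [h0]
  rw [this, measure_union _ (measurableSet_singleton _)]
  · simp
  · rw [Set.disjoint_singleton_right]
    simp [h1.le]

lemma shift_cont : Continuous (shift : (ℤ → Fin 2) → (ℤ → Fin 2)) :=
  continuous_pi fun n => continuous_apply (n + 1)

lemma ms_ergodic {α : ℝ} (hα : Irrational α) : Ergodic shift (ms α) := by
  have h : Ergodic ((α : UnitAddCircle) + ·) := by
    rw [AddCircle.ergodic_add_left, ← AddCircle.denseRange_zsmul_iff,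
      AddCircle.denseRange_zsmul_coe_iff]
    simpa using hα
  exact ((cd_measurable α).measurePreserving volume).ergodic_of_ergodic_semiconj h
    (shift_cont.measurable) (fun θ => cd_shift α θ)

lemma ms_atom {α : ℝ} (h0 : 0 < α) (h1 : α < 1) (hα : Irrational α) (y : ℤ → Fin 2) :
    ms α {y} = 0 := by
  rw [ms, Measure.map_apply (cd_measurable α) (measurableSet_singleton y)]
  rcases (Set.subsingleton_singleton.preimage (cd_inj h0 h1 hα) :
    (cd α ⁻¹' {y}).Subsingleton).eq_empty_or_singleton with h | ⟨θ, h⟩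
  · rw [h]; simp
  · rw [h, ← Metric.closedBall_zero, AddCircle.volume_closedBall]
    simp

def shiftHomeo : (ℤ → Fin 2) ≃ₜ (ℤ → Fin 2) where
  toFun := shift
  invFun := fun x n => x (n - 1)
  left_inv := fun x => by funext n; simp [shift]
  right_inv := fun x => by funext n; simp [shift]
  continuous_toFun := shift_cont
  continuous_invFun := continuous_pi fun n => continuous_apply (n - 1)

lemma complexity_closure (α : ℕ → ℝ) (h0 : ∀ k, 0 < α k) (h1 : ∀ k, α k < 1) (n K : ℕ)
    (hK : ∀ k, K ≤ k → n * α k ≤ 1) :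
    complexity (closure (⋃ k, Set.range (cd (α k)))) n ≤ (K + 1) * (n + 2) := by
  have hsub : {w : Fin n → Fin 2 | ∃ x ∈ closure (⋃ k, Set.range (cd (α k))), ∃ m : ℤ,
      ∀ t : Fin n, x (m + (t : ℕ)) = w t} ⊆
      (⋃ k ∈ Finset.range K, Set.range (wd (α k) n)) ∪ sparse n := by
    rintro w ⟨x, hx, m, hw⟩
    have hopen : IsOpen {y : ℤ → Fin 2 | ∀ t : Fin n, y (m + (t : ℕ)) = w t} := by
      rw [Set.ofPred_forall]
      refine isOpen_iInter_of_finite fun t => ?_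
      have h := (isOpen_discrete ({w t} : Set (Fin 2))).preimage
        (continuous_apply (A := fun _ : ℤ => Fin 2) (m + ((t : ℕ) : ℤ)))
      exact h
    obtain ⟨y, hy, hyU⟩ := mem_closure_iff.1 hx _ hopen hw
    obtain ⟨k, θ, rfl⟩ := Set.mem_iUnion.1 hyU
    obtain ⟨t, rfl⟩ := QuotientAddGroup.mk_surjective θ
    have : w = wd (α k) n (t + m * α k) := by
      funext i
      rw [← hy i]
      refine (cd_coe (α k) t _).trans ?_
      unfold wd
      congr 1
      push_cast
      ring
    rw [this]
    by_cases hk : k < K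
    · left
      simp only [Set.mem_iUnion]
      exact ⟨k, Finset.mem_range.2 hk, Set.mem_range_self _⟩
    · right
      exact wd_sparse (h0 k) (hK k (not_lt.1 hk)) _
  have : complexity (closure (⋃ k, Set.range (cd (α k)))) n =
    {w : Fin n → Fin 2 | ∃ x ∈ closure (⋃ k, Set.range (cd (α k))), ∃ m : ℤ,
      ∀ t : Fin n, x (m + (t : ℕ)) = w t}.ncard := rfl
  rw [this]
  refine (Set.ncard_le_ncard hsub (Set.toFinite _)).trans ?_
  refine (Set.ncard_union_le _ _).trans ?_
  have hb := Finset.set_ncard_biUnion_le (Finset.range K) (fun k => Set.range (wd (α k) n))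
  have hb2 : ∑ k ∈ Finset.range K, (Set.range (wd (α k) n)).ncard ≤ K * (n + 2) := by
    refine (Finset.sum_le_sum fun k _ => wd_ncard (h0 k) (h1 k) n).trans ?_
    simp
  have := sparse_ncard n
  rw [add_mul, one_mul]
  omega

/-- If `p n / n → ∞`, there is a subshift with infinitely many nonatomic ergodic measures
whose complexity satisfies `P_X(n) ≤ p n` for all but finitely many `n`. -/
theorem exists_subshift_infinitely_many_ergodic_measures
    (p : ℕ → ℝ) (hp : Tendsto (fun n : ℕ => p n / (n : ℝ)) atTop atTop) :
    ∃ X : Set (ℤ → Fin 2), IsSubshift X ∧ X.Nonempty ∧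
      {μ : Measure (ℤ → Fin 2) | IsErgodicMeasureOn X μ ∧ ∀ y, μ {y} = 0}.Infinite ∧
      ∀ᶠ n : ℕ in atTop, (complexity X n : ℝ) ≤ p n := by
  have hex : ∀ k : ℕ, ∃ N : ℕ, ∀ M ≥ N, ∀ n ≥ M, 1 ≤ n ∧ 3 * ((k : ℝ) + 2) * n ≤ p n := by
    intro k
    obtain ⟨N, hN⟩ := eventually_atTop.1 (hp.eventually_ge_atTop (3 * ((k : ℝ) + 2)))
    refine ⟨N + 1, fun M hM n hn => ⟨by omega, ?_⟩⟩
    have hn0 : (0 : ℝ) < n := by exact_mod_cast (by omega : 0 < n)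
    exact (le_div_iff₀ hn0).1 (hN n (by omega))
  obtain ⟨φ, hφ, hP⟩ := extraction_forall_of_eventually' hex
  set α : ℕ → ℝ := fun k => √2 / ((2 * φ k + 2 : ℕ) : ℝ) with hα
  have s2 : √2 < 2 := by
    rw [Real.sqrt_lt' (by norm_num)]; norm_num
  have s0 : 0 < √2 := by positivity
  have hpos : ∀ k, (0 : ℝ) < ((2 * φ k + 2 : ℕ) : ℝ) := fun k => by positivity
  have h0 : ∀ k, 0 < α k := fun k => div_pos s0 (hpos k)
  have h1 : ∀ k, α k < 1 := fun k => by
    rw [hα]; simp only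
    rw [div_lt_one (hpos k)]
    push_cast
    have : (0 : ℝ) ≤ φ k := by positivity
    linarith
  have hirr : ∀ k, Irrational (α k) := fun k => irrational_sqrt_two.div_natCast (by omega)
  have hinj : Function.Injective α := by
    intro a b hab
    have hab' : √2 / ((2 * φ a + 2 : ℕ) : ℝ) = √2 / ((2 * φ b + 2 : ℕ) : ℝ) := hab
    rw [div_eq_div_iff (hpos a).ne' (hpos b).ne'] at hab'
    have := mul_left_cancel₀ s0.ne' hab'
    have h3 : 2 * φ b + 2 = 2 * φ a + 2 := by exact_mod_cast this
    exact hφ.injective (by omega)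
  refine ⟨closure (⋃ k, Set.range (cd (α k))), ⟨isClosed_closure, ?_⟩, ?_, ?_, ?_⟩
  · have : shift '' closure (⋃ k, Set.range (cd (α k)))
        = closure (shift '' (⋃ k, Set.range (cd (α k)))) := shiftHomeo.image_closure _
    rw [this, Set.image_iUnion]
    congr 1
    refine Set.iUnion_congr fun k => ?_
    ext x
    constructor
    · rintro ⟨_, ⟨θ, rfl⟩, rfl⟩
      exact ⟨_, cd_shift _ θ⟩
    · rintro ⟨θ, rfl⟩
      refine ⟨_, ⟨-(α k : UnitAddCircle) + θ, rfl⟩, ?_⟩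
      rw [← cd_shift, add_neg_cancel_left]
  · exact ⟨cd (α 0) 0, subset_closure (Set.mem_iUnion.2 ⟨0, Set.mem_range_self _⟩)⟩
  · refine Set.infinite_of_injective_forall_mem (f := fun k => ms (α k)) ?_ ?_
    · intro a b hab
      have hab' : ms (α a) = ms (α b) := hab
      have h := ms_cyl (h0 a) (h1 a)
      rw [hab', ms_cyl (h0 b) (h1 b)] at h
      exact hinj ((ENNReal.ofReal_eq_ofReal_iff (h0 b).le (h0 a).le).1 h).symm
    · intro k
      have hvol : IsProbabilityMeasure (volume : Measure UnitAddCircle) :=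
        ⟨UnitAddCircle.measure_univ⟩
      have hpr : IsProbabilityMeasure (ms (α k)) :=
        Measure.isProbabilityMeasure_map (cd_measurable _).aemeasurable
      refine ⟨⟨hpr, ?_, ms_ergodic (hirr k)⟩, ms_atom (h0 k) (h1 k) (hirr k)⟩
      rw [ms, Measure.map_apply (cd_measurable _) isClosed_closure.measurableSet]
      have : cd (α k) ⁻¹' closure (⋃ k, Set.range (cd (α k))) = Set.univ :=
        Set.eq_univ_of_forall fun θ =>
          subset_closure (Set.mem_iUnion.2 ⟨k, Set.mem_range_self _⟩)
      rw [this]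
      exact measure_univ
  · filter_upwards [eventually_ge_atTop (φ 0 + 1)] with n hn
    have hK : ∃ K, n ≤ φ K := ⟨n, hφ.id_le n⟩
    classical
    obtain ⟨j, hj⟩ : ∃ j, Nat.find hK = j + 1 := by
      refine Nat.exists_eq_succ_of_ne_zero fun h => ?_
      have := Nat.find_spec hK
      rw [h] at this
      omega
    have hjn : φ j < n := not_le.1 (Nat.find_min hK (by omega : j < Nat.find hK))
    have hc := complexity_closure α h0 h1 n (j + 1) (by
      intro k hk
      have hk1 : n ≤ φ k := (hj ▸ Nat.find_spec hK).trans (hφ.monotone hk)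
      have hk2 : (n : ℝ) ≤ φ k := by exact_mod_cast hk1
      rw [hα]; simp only
      rw [← mul_div_assoc, div_le_one (hpos k)]
      push_cast
      have : (0 : ℝ) ≤ n := by positivity
      nlinarith)
    obtain ⟨hn1, hpn⟩ := hP j n hjn.le
    have hc' : (complexity (closure (⋃ k, Set.range (cd (α k)))) n : ℝ)
        ≤ ((j : ℝ) + 1 + 1) * (n + 2) := by exact_mod_cast hc
    have hn1' : (1 : ℝ) ≤ n := by exact_mod_cast hn1
    have hj0 : (0 : ℝ) ≤ j := by positivity
    nlinarith
end

section
/- Let (X, σ) be a subshift and suppose that for infinitely many n there exist arbitrarily long words in the language of X in which a fixed letter i occurs with frequency at least c > 1/2. Then there exists an ergodic shift-invariant probability measure μ on X with μ([i]) ≥ c > 1/2. Consequently, if this holds for each letter i in an alphabet of size d, then X has at least d distinct ergodic measures. -/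
open MeasureTheory Filter
open scoped ENNReal

/-- `w` occurs in the subshift `X`. -/
def InLanguage {A : Type*} (X : Set (ℤ → A)) {r : ℕ} (w : Fin r → A) : Prop :=
  ∃ x ∈ X, ∃ m : ℤ, ∀ t : Fin r, x (m + (t : ℕ)) = w t

section Aux

set_option linter.unusedSectionVars false

variable {A : Type*} [Fintype A] [DecidableEq A] [TopologicalSpace A] [DiscreteTopology A]
    [MeasurableSpace A] [BorelSpace A]

theorem continuous_shift_aux : Continuous (shift : (ℤ → A) → (ℤ → A)) := by
  unfold shift
  fun_prop

theorem shift_iterate_apply_aux {A : Type*} (t : ℕ) (y : ℤ → A) (n : ℤ) :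
    (shift^[t] y) n = y (n + t) := by
  induction t generalizing n with
  | zero => simp
  | succ t ih =>
    rw [Function.iterate_succ_apply']
    change (shift^[t] y) (n + 1) = _
    rw [ih]
    congr 1
    push_cast
    ring

theorem translate_mem_aux {X : Set (ℤ → A)} (hX : IsSubshift X) {x : ℤ → A} (hx : x ∈ X)
    (p : ℤ) : (fun n => x (n + p)) ∈ X := by
  induction p using Int.induction_on with
  | zero => simpa using hx
  | succ p ih =>
    rw [← hX.2]
    refine ⟨_, ih, ?_⟩
    funext n
    simp only [shift]
    congr 1
    ring
  | pred p ih =>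
    rw [← hX.2] at ih
    obtain ⟨z, hz, hzx⟩ := ih
    convert hz using 1
    funext n
    have := congrFun hzx (n - 1)
    simp only [shift, sub_add_cancel] at this
    rw [this]
    congr 1
    ring

/-- empirical measure -/
noncomputable def empAux (n : ℕ) (y : ℤ → A) : Measure (ℤ → A) :=
  (n : ℝ≥0∞)⁻¹ • ∑ t ∈ Finset.range n, Measure.dirac (shift^[t] y)

theorem empAux_apply (n : ℕ) (y : ℤ → A) {s : Set (ℤ → A)} (hs : MeasurableSet s) :
    empAux n y s = (n : ℝ≥0∞)⁻¹ * ∑ t ∈ Finset.range n, s.indicator 1 (shift^[t] y) := by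
  simp [empAux, hs]

theorem empAux_prob (n : ℕ) (hn : n ≠ 0) (y : ℤ → A) : IsProbabilityMeasure (empAux n y) := by
  constructor
  rw [empAux_apply _ _ MeasurableSet.univ]
  simp
  exact ENNReal.inv_mul_cancel (by simpa using hn) (by simp)

theorem empAux_integral (n : ℕ) (y : ℤ → A) (f : (ℤ → A) → ℝ) (hf : Continuous f) :
    ∫ x, f x ∂(empAux n y) = (n : ℝ)⁻¹ * ∑ t ∈ Finset.range n, f (shift^[t] y) := by
  rw [empAux, integral_smul_measure, integral_finsetSum_measure]
  · simp
  · intro i _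
    exact integrable_dirac (by simp)

theorem isClopen_cyl_aux (i : A) : IsClopen {x : ℤ → A | x 0 = i} :=
  (isClopen_discrete {i}).preimage (continuous_apply (0 : ℤ))

theorem exists_inv_aux (X : Set (ℤ → A)) (hX : IsSubshift X) (c : ℝ) (hc : 1 / 2 < c) (i : A)
    (hfreq : ∀ m : ℕ, ∃ n : ℕ, m ≤ n ∧ ∃ w : Fin n → A, InLanguage X w ∧
      c * n ≤ (Finset.univ.filter fun t : Fin n => w t = i).card) :
    ∃ μ : ProbabilityMeasure (ℤ → A), (μ : Measure (ℤ → A)).map shift = μ ∧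
      (μ : Measure (ℤ → A)) X = 1 ∧
      ENNReal.ofReal c ≤ (μ : Measure (ℤ → A)) {x : ℤ → A | x 0 = i} := by
  have key : ∀ m : ℕ, ∃ n : ℕ, ∃ y : ℤ → A, m + 1 ≤ n ∧ (∀ t : ℕ, shift^[t] y ∈ X) ∧
      ENNReal.ofReal c ≤ empAux n y {x : ℤ → A | x 0 = i} := by
    intro m
    obtain ⟨n, hn, w, ⟨x, hx, p, hw⟩, hcard⟩ := hfreq (m + 1)
    refine ⟨n, fun k => x (k + p), hn, ?_, ?_⟩
    · intro t
      have := translate_mem_aux hX hx (t + p)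
      convert this using 1
      funext k
      rw [shift_iterate_apply_aux]
      congr 1
      ring
    · rw [empAux_apply _ _ (isClopen_cyl_aux i).1.measurableSet]
      have h1 : ∑ t ∈ Finset.range n, ({x : ℤ → A | x 0 = i}).indicator (1 : (ℤ → A) → ℝ≥0∞)
          (shift^[t] (fun k => x (k + p)))
          = ((Finset.univ.filter fun t : Fin n => w t = i).card : ℝ≥0∞) := by
        rw [Finset.sum_range, Finset.card_filter, Nat.cast_sum]
        refine Finset.sum_congr rfl fun t _ => ?_
        simp only [Set.indicator_apply, Set.mem_ofPred_eq, shift_iterate_apply_aux]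
        rw [show (0 : ℤ) + ((t : ℕ) : ℤ) + p = p + (t : ℕ) by ring, hw t]
        simp
      rw [h1]
      have hn0 : (n : ℝ≥0∞) ≠ 0 := by
        simp; omega
      rw [mul_comm, ← div_eq_mul_inv, ENNReal.le_div_iff_mul_le (Or.inl hn0) (Or.inl (by simp))]
      rw [← ENNReal.ofReal_natCast n, ← ENNReal.ofReal_mul (by linarith),
        ← ENNReal.ofReal_natCast (Finset.card _)]
      exact ENNReal.ofReal_le_ofReal hcard
  choose n y hn hy hcyl using key
  let ν : ℕ → ProbabilityMeasure (ℤ → A) := fun m =>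
    ⟨empAux (n m) (y m), empAux_prob _ (by have := hn m; omega) _⟩
  obtain ⟨μ, -, φ, hφ, hlim⟩ := isCompact_univ.tendsto_subseq (x := ν) (fun _ => Set.mem_univ _)
  refine ⟨μ, ?_, ?_, ?_⟩
  · have := Measure.isProbabilityMeasure_map (μ := (μ : Measure (ℤ → A)))
      (continuous_shift_aux (A := A)).aemeasurable
    refine ext_of_forall_integral_eq_of_IsFiniteMeasure fun f => ?_
    rw [integral_map continuous_shift_aux.aemeasurable
      f.continuous.aestronglyMeasurable]
    have hl := ProbabilityMeasure.tendsto_iff_forall_integral_tendsto.1 hlim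
    have l1 := hl f
    have l2 := hl (f.compContinuous ⟨shift, continuous_shift_aux⟩)
    have l3 := l2.sub l1
    have l4 : Tendsto (fun k => ∫ x, (f.compContinuous ⟨shift, continuous_shift_aux⟩) x
        ∂((ν ∘ φ) k : Measure (ℤ → A)) - ∫ x, f x ∂((ν ∘ φ) k : Measure (ℤ → A))) atTop
        (nhds 0) := by
      have l5 : Tendsto (fun k : ℕ => (2 * ‖f‖) * (1 / ((k : ℝ) + 1))) atTop (nhds 0) := by
        simpa using tendsto_one_div_add_atTop_nhds_zero_nat.const_mul (2 * ‖f‖)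
      refine squeeze_zero_norm (fun k => ?_) l5
      simp only [Function.comp, ν, ProbabilityMeasure.coe_mk]
      rw [empAux_integral _ _ _ f.continuous, empAux_integral _ _ _ (by fun_prop), ← mul_sub,
        ← Finset.sum_sub_distrib]
      have h2 : ∑ t ∈ Finset.range (n (φ k)), ((f.compContinuous
          ⟨shift, continuous_shift_aux⟩) (shift^[t] (y (φ k))) - f (shift^[t] (y (φ k))))
          = f (shift^[n (φ k)] (y (φ k))) - f (y (φ k)) := by
        have := Finset.sum_range_sub (fun t => f (shift^[t] (y (φ k)))) (n (φ k))
        simp only [Function.iterate_succ_apply'] at this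
        simpa using this
      rw [h2, norm_mul, mul_comm]
      have hk : (k : ℝ) + 1 ≤ n (φ k) := by
        have h3 := hn (φ k)
        have h4 := hφ.id_le k
        simp only [id] at h4
        exact_mod_cast (by omega : k + 1 ≤ n (φ k))
      gcongr
      · calc _ ≤ ‖f (shift^[n (φ k)] (y (φ k)))‖ + ‖f (y (φ k))‖ := norm_sub_le _ _
          _ ≤ _ := by linarith [f.norm_coe_le_norm (shift^[n (φ k)] (y (φ k))),
                        f.norm_coe_le_norm (y (φ k))]
      · rw [norm_inv, one_div, Real.norm_natCast]
        gcongr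
    have := tendsto_nhds_unique l3 l4
    simpa using sub_eq_zero.1 this
  · refine le_antisymm prob_le_one ?_
    have h := ProbabilityMeasure.limsup_measure_closed_le_of_tendsto hlim hX.1
    refine le_trans ?_ h
    have h1 : ∀ k, ((ν ∘ φ) k : Measure (ℤ → A)) X = 1 := by
      intro k
      simp only [Function.comp, ν, ProbabilityMeasure.coe_mk]
      rw [empAux_apply _ _ hX.1.measurableSet]
      rw [Finset.sum_congr rfl fun t _ => Set.indicator_of_mem (hy (φ k) t) _]
      have := hn (φ k)
      simp
      exact ENNReal.inv_mul_cancel (by simp; omega) (by simp)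
    simp only [h1, limsup_const, le_refl]
  · have h := ProbabilityMeasure.limsup_measure_closed_le_of_tendsto hlim (isClopen_cyl_aux i).1
    refine le_trans ?_ h
    refine le_trans (by simp) (limsup_le_limsup
      (u := fun _ : ℕ => ENNReal.ofReal c) (Eventually.of_forall fun k => hcyl (φ k)))

/-- evaluation map -/
noncomputable def evAux (μ : ProbabilityMeasure (ℤ → A)) :
    (BoundedContinuousFunction (ℤ → A) ℝ) → ℝ := fun f => ∫ x, f x ∂(μ : Measure (ℤ → A))

theorem evAux_continuous : Continuous (evAux (A := A)) := by
  refine continuous_pi fun f => ?_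
  rw [continuous_iff_continuousAt]
  intro μ
  exact ProbabilityMeasure.tendsto_iff_forall_integral_tendsto.1 (tendsto_id (x := nhds μ)) f

theorem evAux_injective : Function.Injective (evAux (A := A)) := by
  intro μ ν h
  apply ProbabilityMeasure.toMeasure_injective
  exact ext_of_forall_integral_eq_of_IsFiniteMeasure fun f => congrFun h f

theorem exists_ergodic_aux (X : Set (ℤ → A)) (hX : IsSubshift X) (i : A)
    (μ₀ : ProbabilityMeasure (ℤ → A)) (h0 : (μ₀ : Measure (ℤ → A)).map shift = μ₀)
    (h1 : (μ₀ : Measure (ℤ → A)) X = 1) :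
    ∃ μ : Measure (ℤ → A), IsErgodicMeasureOn X μ ∧
      (μ₀ : Measure (ℤ → A)) {x : ℤ → A | x 0 = i} ≤ μ {x : ℤ → A | x 0 = i} := by
  set C := {x : ℤ → A | x 0 = i} with hC
  let K : Set (ProbabilityMeasure (ℤ → A)) :=
    {μ | (μ : Measure (ℤ → A)).map shift = μ ∧ (μ : Measure (ℤ → A)) X = 1}
  have hKc : IsClosed K := by
    refine IsClosed.inter (s₁ := {μ : ProbabilityMeasure (ℤ → A) |
      (μ : Measure (ℤ → A)).map shift = μ})
      (s₂ := {μ : ProbabilityMeasure (ℤ → A) | (μ : Measure (ℤ → A)) X = 1}) ?_ ?_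
    · have := isClosed_eq (ProbabilityMeasure.continuous_map (continuous_shift_aux (A := A)))
        continuous_id
      convert this using 1
      ext μ
      simp only [Set.mem_ofPred_eq, id]
      rw [← ProbabilityMeasure.toMeasure_injective.eq_iff]
      rfl
    · refine IsSeqClosed.isClosed fun u μ hu hlim => ?_
      refine le_antisymm prob_le_one ?_
      have h := ProbabilityMeasure.limsup_measure_closed_le_of_tendsto hlim hX.1
      have hu' : ∀ k, (u k : Measure (ℤ → A)) X = 1 := hu
      simpa only [hu', limsup_const] using h
  have hev : Continuous fun μ : ProbabilityMeasure (ℤ → A) => (μ : Measure (ℤ → A)) C := by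
    rw [continuous_iff_continuousAt]
    intro μ
    have := ProbabilityMeasure.tendsto_measure_of_isClopen_of_tendsto (tendsto_id (x := nhds μ))
      (isClopen_cyl_aux i)
    have h2 := ENNReal.tendsto_coe.2 this
    simp only [ProbabilityMeasure.ennreal_coeFn_eq_coeFn_toMeasure] at h2
    exact h2
  obtain ⟨μm, hμm, hmax⟩ := hKc.isCompact.exists_isMaxOn ⟨μ₀, h0, h1⟩ hev.continuousOn
  let M : Set (ProbabilityMeasure (ℤ → A)) :=
    K ∩ {μ | (μ : Measure (ℤ → A)) C = (μm : Measure (ℤ → A)) C}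
  have hM : IsCompact M :=
    (hKc.inter (isClosed_eq hev continuous_const)).isCompact
  obtain ⟨e, ⟨μ, hμM, rfl⟩, hext⟩ := (hM.image evAux_continuous).extremePoints_nonempty
    ⟨_, μm, ⟨hμm, rfl⟩, rfl⟩
  refine ⟨μ, ⟨inferInstance, hμM.1.2, ?_⟩, ?_⟩
  · apply Ergodic.of_mem_extremePoints
    rw [mem_extremePoints_iff_left]
    refine ⟨⟨⟨continuous_shift_aux.measurable, hμM.1.1⟩, inferInstance⟩, ?_⟩
    rintro ν₁ ⟨hs1, hp1⟩ ν₂ ⟨hs2, hp2⟩ ⟨a, b, ha, hb, hab, hμ⟩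
    have ha1 : a ≠ ∞ := fun h => by simp [h] at hab
    have hb1 : b ≠ ∞ := fun h => by simp [h] at hab
    have happ : ∀ s, a * ν₁ s + b * ν₂ s = (μ : Measure (ℤ → A)) s := by
      intro s
      rw [← hμ]
      simp
    have hXc : a * ν₁ Xᶜ + b * ν₂ Xᶜ = 0 := by
      rw [happ, prob_compl_eq_zero_iff hX.1.measurableSet]
      exact hμM.1.2
    simp only [add_eq_zero, mul_eq_zero, ha.ne', hb.ne', false_or] at hXc
    rw [prob_compl_eq_zero_iff hX.1.measurableSet,
      prob_compl_eq_zero_iff hX.1.measurableSet] at hXc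
    have hK1 : (⟨ν₁, hp1⟩ : ProbabilityMeasure (ℤ → A)) ∈ K := ⟨hs1.map_eq, hXc.1⟩
    have hK2 : (⟨ν₂, hp2⟩ : ProbabilityMeasure (ℤ → A)) ∈ K := ⟨hs2.map_eq, hXc.2⟩
    have m1 : ν₁ C ≤ (μm : Measure (ℤ → A)) C := hmax hK1
    have m2 : ν₂ C ≤ (μm : Measure (ℤ → A)) C := hmax hK2
    have hCC := happ C
    rw [hμM.2] at hCC
    have hfin : (μm : Measure (ℤ → A)) C ≠ ∞ := measure_ne_top _ _
    have hab' : a.toReal + b.toReal = 1 := by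
      rw [← ENNReal.toReal_add ha1 hb1, hab]; rfl
    have ha' : 0 < a.toReal := ENNReal.toReal_pos ha.ne' ha1
    have hb' : 0 < b.toReal := ENNReal.toReal_pos hb.ne' hb1
    have hCr : a.toReal * (ν₁ C).toReal + b.toReal * (ν₂ C).toReal
        = ((μm : Measure (ℤ → A)) C).toReal := by
      rw [← hCC, ENNReal.toReal_add (ENNReal.mul_ne_top ha1 (measure_ne_top _ _))
        (ENNReal.mul_ne_top hb1 (measure_ne_top _ _)), ENNReal.toReal_mul, ENNReal.toReal_mul]
    have r1 := ENNReal.toReal_mono hfin m1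
    have r2 := ENNReal.toReal_mono hfin m2
    have e1 : ν₁ C = (μm : Measure (ℤ → A)) C := by
      rw [← ENNReal.toReal_eq_toReal_iff' (measure_ne_top _ _) hfin]
      have hb2 : b.toReal = 1 - a.toReal := by linarith
      have := mul_le_mul_of_nonneg_left r2 hb'.le
      refine le_antisymm r1 ?_
      rw [← mul_le_mul_iff_right₀ ha']
      rw [hb2] at hCr this
      nlinarith
    have e2 : ν₂ C = (μm : Measure (ℤ → A)) C := by
      rw [← ENNReal.toReal_eq_toReal_iff' (measure_ne_top _ _) hfin]
      have hb2 : a.toReal = 1 - b.toReal := by linarith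
      have := mul_le_mul_of_nonneg_left r1 ha'.le
      refine le_antisymm r2 ?_
      rw [← mul_le_mul_iff_right₀ hb']
      rw [hb2] at hCr this
      nlinarith
    have := hext ⟨⟨ν₁, hp1⟩, ⟨hK1, e1⟩, rfl⟩ ⟨⟨ν₂, hp2⟩, ⟨hK2, e2⟩, rfl⟩
      ⟨a.toReal, b.toReal, ha', hb', hab', by
        funext f
        simp only [evAux, Pi.add_apply, Pi.smul_apply, ProbabilityMeasure.coe_mk]
        rw [← hμ, integral_add_measure, integral_smul_measure, integral_smul_measure]
        · exact (f.integrable _).smul_measure ha1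
        · exact (f.integrable _).smul_measure hb1⟩
    have h3 := evAux_injective this
    rw [← h3]
    rfl
  · have : (μ₀ : Measure (ℤ → A)) C ≤ (μm : Measure (ℤ → A)) C := hmax (a := μ₀) ⟨h0, h1⟩
    rw [← hμM.2] at this
    exact this

end Aux

/-- If, for each letter `i`, the language of `X` contains arbitrarily long words in which
`i` occurs with frequency at least `c > 1/2`, then for each `i` there is an ergodic
shift-invariant probability measure `μ i` with `μ i ([i]) ≥ c`; these measures are
pairwise distinct, so `X` has at least `|A|` ergodic measures. -/
theorem ergodic_measures_from_letter_frequencies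
    {A : Type*} [Fintype A] [DecidableEq A] [TopologicalSpace A] [DiscreteTopology A]
    [MeasurableSpace A] [BorelSpace A]
    (X : Set (ℤ → A)) (hX : IsSubshift X) (hXne : X.Nonempty)
    (c : ℝ) (hc : 1 / 2 < c)
    (hfreq : ∀ i : A, ∀ m : ℕ, ∃ n : ℕ, m ≤ n ∧ ∃ w : Fin n → A, InLanguage X w ∧
      c * n ≤ (Finset.univ.filter fun t : Fin n => w t = i).card) :
    ∃ μs : A → Measure (ℤ → A), Function.Injective μs ∧
      ∀ i : A, IsErgodicMeasureOn X (μs i) ∧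
        ENNReal.ofReal c ≤ μs i {x : ℤ → A | x 0 = i} := by
  have h : ∀ i : A, ∃ μ : Measure (ℤ → A), IsErgodicMeasureOn X μ ∧
      ENNReal.ofReal c ≤ μ {x : ℤ → A | x 0 = i} := by
    intro i
    obtain ⟨μ₀, h0, h1, h2⟩ := exists_inv_aux X hX c hc i (hfreq i)
    obtain ⟨μ, hμ, hle⟩ := exists_ergodic_aux X hX i μ₀ h0 h1
    exact ⟨μ, hμ, h2.trans hle⟩
  choose μs hμs using h
  refine ⟨μs, fun i j hij => ?_, hμs⟩
  by_contra hne
  have hp := (hμs i).1.1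
  have h1 := (hμs i).2
  have h2 := (hμs j).2
  rw [← hij] at h2
  have hd : Disjoint {x : ℤ → A | x 0 = i} {x : ℤ → A | x 0 = j} := by
    rw [Set.disjoint_left]
    intro x hx hx'
    exact hne (hx.symm.trans hx')
  have h3 := measure_union (μ := μs i) hd (isClopen_cyl_aux j).1.measurableSet
  have h4 := add_le_add h1 h2
  rw [← h3, ← ENNReal.ofReal_add (by linarith) (by linarith)] at h4
  have h5 := h4.trans prob_le_one
  rw [ENNReal.ofReal_le_one] at h5
  linarith
end
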